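/- arXiv:math/0403272 — 4 statements merged into one kernel-verified Lean document; each statement's English description precedes it below -/
import Mathlib

section
/- Let Q = Q_{E6*} + ((√1057 − 1)/88)·R_1. Then Q is a real symmetric positive definite 6×6 matrix and its covering density equals Θ(Q) = (√(1124895337698·√1057 − 33713139497730)/3543122)·κ_6; equivalently, μ(Q)^6 / det Q = (1124895337698·√1057 − 33713139497730)/3543122². -/
/-!
The form splits along a minimal vector of `E₆*`. In the coordinates `toD x / 2 ∈ ℝ⁵` and
`toK x ∈ ℝ`, for `t = (√1057 - 1) / 88`, it reads
`(QE6 + t • R1)[x] = (3 + 5t) (|y|² + ρ s²)` with `ρ = (1 + 3t) / (4 (3 + 5t))`, and `ℤ⁶` becomes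
the lattice `L` of all `(u, k)` with `u ∈ D₅*` and `k ∈ ℤ` in the residue class modulo `4` that
is glued to the class of `u` in `D₅* / D₅ ≅ ℤ/4`. The signed permutations of `ℝ⁵` act on `L`, an
odd number of sign changes being accompanied by `s ↦ -s`.

Upper bound on the inhomogeneous minimum: modulo `L` and these symmetries every point lies in one
Delaunay polytope of `E₆*`, the convex hull of three triangles with a common centroid
(`covered_cell`). Its nine vertices admit a triangulation all of whose simplices have squared
circumradius at most `critRadius ρ = 21ρ² - 7ρ/2 + 13/16`, and a simplex is covered by balls of
the circumradius around its vertices (`covered_of_simplex`).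

Lower bound: the circumcenter `deepHole ρ` of the largest simplices is at squared distance at
least `critRadius ρ` from all of `L` (`deepHole_far`).

The determinant is `(3 + 5t)⁵ (1 + 3t)`, so with `w = √1057`, where `ρ = (35 + 2w) / 924`, the
quotient `μ⁶ / det` is an element of `ℚ(w)` that is evaluated using `w² = 1057`.
-/

open Matrix MeasureTheory

/-- The inhomogeneous minimum `μ(Q) = sup_x inf_{v ∈ ℤᵈ} Q[x - v]` of a quadratic form. -/
noncomputable def inhomMin {d : ℕ} (Q : Matrix (Fin d) (Fin d) ℝ) : ℝ :=
  ⨆ x : Fin d → ℝ, ⨅ v : Fin d → ℤ,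
    (x - fun i => (v i : ℝ)) ⬝ᵥ (Q *ᵥ (x - fun i => (v i : ℝ)))

/-- The homogeneous minimum `λ(Q) = min_{v ∈ ℤᵈ, v ≠ 0} Q[v]` of a quadratic form. -/
noncomputable def homMin {d : ℕ} (Q : Matrix (Fin d) (Fin d) ℝ) : ℝ :=
  ⨅ v : {w : Fin d → ℤ // w ≠ 0},
    (fun i => (v.1 i : ℝ)) ⬝ᵥ (Q *ᵥ fun i => (v.1 i : ℝ))

/-- `κ_d`, the Lebesgue volume of the `d`-dimensional Euclidean unit ball. -/
noncomputable def unitBallVol (d : ℕ) : ℝ :=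
  (volume (Metric.ball (0 : EuclideanSpace ℝ (Fin d)) 1)).toReal

/-- The covering density `Θ(Q) = √(μ(Q)^d / det Q) · κ_d`. -/
noncomputable def covDensity {d : ℕ} (Q : Matrix (Fin d) (Fin d) ℝ) : ℝ :=
  Real.sqrt (inhomMin Q ^ d / Q.det) * unitBallVol d

/-- The packing-covering constant `γ(Q) = 2·√(μ(Q)/λ(Q))`. -/
noncomputable def packCovConst {d : ℕ} (Q : Matrix (Fin d) (Fin d) ℝ) : ℝ :=
  2 * Real.sqrt (inhomMin Q / homMin Q)

/-- The Gram matrix `Q_{E6*}` of (a rescaling of) the lattice `E₆*`. -/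
def QE6 : Matrix (Fin 6) (Fin 6) ℝ :=
  !![4, 1, 2, 2, -1, 1;
     1, 4, 2, 2, 2, 1;
     2, 2, 4, 1, 1, 2;
     2, 2, 1, 4, 1, 2;
     -1, 2, 1, 1, 4, 2;
     1, 1, 2, 2, 2, 4]

/-- The extreme ray `R₁` of the secondary cone. -/
def R1 : Matrix (Fin 6) (Fin 6) ℝ :=
  !![12, 3, 6, 6, -3, 3;
     3, 7, 4, 4, 3, 2;
     6, 4, 8, 3, 1, 4;
     6, 4, 3, 8, 1, 4;
     -3, 3, 1, 1, 7, 3;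
     3, 2, 4, 4, 3, 7]

/-! ### The glued lattice and its symmetries -/

/-- Membership in `L`: the pair `(n, k)` encodes the point `(n / 2, k)` of `ℝ⁵ × ℝ`, where
`n / 2 ∈ D₅*` and the residue of `k` modulo `4` is the glue class of `n / 2` in `D₅* / D₅`. -/
abbrev InGlue (n : Fin 5 → ℤ) (k : ℤ) : Prop :=
  (∀ i, 2 ∣ n i - k) ∧ 4 ∣ (∑ i, n i) + k

/-- The form `|y|² + ρ s²` on `ℝ⁵ × ℝ`. -/
def splitForm (ρ : ℝ) (y : Fin 5 → ℝ) (s : ℝ) : ℝ := (∑ i, y i ^ 2) + ρ * s ^ 2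

/-- The point `(y, s)` has squared `splitForm ρ`-distance at most `r` to some point of `L`. -/
def Covered (ρ r : ℝ) (y : Fin 5 → ℝ) (s : ℝ) : Prop :=
  ∃ (n : Fin 5 → ℤ) (k : ℤ), InGlue n k ∧
    splitForm ρ (fun i => y i - n i / 2) (s - k) ≤ r

theorem Covered.shift {ρ r : ℝ} {y : Fin 5 → ℝ} {s : ℝ} {m : Fin 5 → ℤ} {j : ℤ}
    (hm : InGlue m j) (h : Covered ρ r (fun i => y i - m i / 2) (s - j)) : Covered ρ r y s := by
  obtain ⟨n, k, ⟨h1, h2⟩, h3⟩ := h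
  refine ⟨fun i => n i + m i, k + j, ⟨fun i => ?_, ?_⟩, ?_⟩
  · have := h1 i; have := hm.1 i; lia
  · have := hm.2
    rw [Finset.sum_add_distrib]; lia
  · convert h3 using 2
    · ext i; push_cast; ring
    · push_cast; ring

theorem Covered.of_neg {ρ r : ℝ} {y : Fin 5 → ℝ} {s : ℝ}
    (h : Covered ρ r (fun i => -y i) (-s)) : Covered ρ r y s := by
  obtain ⟨n, k, ⟨h1, h2⟩, h3⟩ := h
  refine ⟨fun i => -n i, -k, ⟨fun i => ?_, ?_⟩, ?_⟩
  · have := h1 i; lia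
  · rw [Finset.sum_neg_distrib]; lia
  · convert h3 using 1
    unfold splitForm
    congr 1
    · refine Finset.sum_congr rfl fun i _ => ?_
      push_cast; ring
    · push_cast; ring

theorem Covered.of_perm {ρ r : ℝ} {y : Fin 5 → ℝ} {s : ℝ} (σ : Equiv.Perm (Fin 5))
    (h : Covered ρ r (fun i => y (σ i)) s) : Covered ρ r y s := by
  obtain ⟨n, k, ⟨h1, h2⟩, h3⟩ := h
  refine ⟨fun i => n (σ.symm i), k, ⟨fun i => h1 _, ?_⟩, ?_⟩
  · rwa [Equiv.sum_comp σ.symm n]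
  · refine le_of_eq_of_le ?_ h3
    unfold splitForm
    congr 1
    rw [← Equiv.sum_comp σ]
    simp

/-- A single sign change in `D₅*` exchanges the two spinor classes, so it is a symmetry of `L`
when combined with `s ↦ -s`. -/
theorem Covered.of_flip {ρ r : ℝ} {y : Fin 5 → ℝ} {s : ℝ} (a : Fin 5)
    (h : Covered ρ r (Function.update y a (-y a)) (-s)) : Covered ρ r y s := by
  obtain ⟨n, k, ⟨h1, h2⟩, h3⟩ := h
  refine ⟨Function.update n a (-n a), -k, ⟨fun i => ?_, ?_⟩, ?_⟩
  · have := h1 i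
    rcases eq_or_ne i a with rfl | hi
    · simp only [Function.update_self]; lia
    · simp only [Function.update_of_ne hi]; lia
  · have := h1 a
    have e1 := Finset.sum_update_of_mem (Finset.mem_univ a) n (-n a)
    have e2 := Finset.add_sum_erase Finset.univ n (Finset.mem_univ a)
    rw [← Finset.erase_eq] at e1
    lia
  · refine le_of_eq_of_le ?_ h3
    unfold splitForm
    congr 1
    · refine Finset.sum_congr rfl fun i _ => ?_
      rcases eq_or_ne i a with rfl | hi
      · simp only [Function.update_self]; push_cast; ring
      · simp only [Function.update_of_ne hi]
    · push_cast; ring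

/-! ### Simplices of small circumradius -/

/-- A simplex whose vertices all lie within squared distance `r` of one point `(c, t)` is covered
by the balls of squared radius `r` about its vertices: the average of the squared distances from
`x = ∑ λᵢ vᵢ` to the `vᵢ`, with weights `λᵢ`, is the same average for `(c, t)` minus the squared
distance from `x` to `(c, t)`. -/
theorem covered_of_simplex {ρ r : ℝ} (hρ : 0 ≤ ρ) {y : Fin 5 → ℝ} {s : ℝ}
    (V : Fin 7 → Fin 5 → ℤ) (K : Fin 7 → ℤ) (hV : ∀ i, InGlue (V i) (K i))
    (lam : Fin 7 → ℝ) (h0 : ∀ i, 0 ≤ lam i) (h1 : ∑ i, lam i = 1)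
    (hy : ∀ j, ∑ i, lam i * (V i j / 2) = y j) (hs : ∑ i, lam i * (K i : ℝ) = s)
    (c : Fin 5 → ℝ) (t : ℝ)
    (hc : ∀ i, splitForm ρ (fun j => c j - V i j / 2) (t - K i) ≤ r) :
    Covered ρ r y s := by
  obtain ⟨i₀, hi₀⟩ := Finite.exists_min
    (fun i => splitForm ρ (fun j => y j - V i j / 2) (s - K i))
  refine ⟨V i₀, K i₀, hV i₀, ?_⟩
  set d := fun i => splitForm ρ (fun j => y j - V i j / 2) (s - K i) with hd
  have key : ∑ i, lam i * d i =
      ∑ i, lam i * splitForm ρ (fun j => c j - V i j / 2) (t - K i)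
        - splitForm ρ (fun j => y j - c j) (s - t) := by
    have expand : ∀ i, lam i * d i =
        lam i * splitForm ρ (fun j => c j - V i j / 2) (t - K i)
        + lam i * (splitForm ρ y s - splitForm ρ c t)
        - 2 * ∑ j, (y j - c j) * (lam i * (V i j / 2)) - 2 * ρ * (s - t) * (lam i * K i) := by
      intro i
      simp only [hd, splitForm, Fin.sum_univ_five]
      ring
    simp only [expand, Finset.sum_sub_distrib, Finset.sum_add_distrib, ← Finset.sum_mul,
      ← Finset.mul_sum, h1, hs]
    rw [Finset.sum_comm]
    simp only [← Finset.mul_sum, hy]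
    simp only [splitForm, Fin.sum_univ_five]
    ring
  have hlow : d i₀ ≤ ∑ i, lam i * d i := by
    calc d i₀ = ∑ i, lam i * d i₀ := by rw [← Finset.sum_mul, h1, one_mul]
      _ ≤ _ := Finset.sum_le_sum fun i _ => mul_le_mul_of_nonneg_left (hi₀ i) (h0 i)
  have hup : ∑ i, lam i * splitForm ρ (fun j => c j - V i j / 2) (t - K i) ≤ r := by
    calc _ ≤ ∑ i, lam i * r :=
          Finset.sum_le_sum fun i _ => mul_le_mul_of_nonneg_left (hc i) (h0 i)
      _ = r := by rw [← Finset.sum_mul, h1, one_mul]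
  have hpos : 0 ≤ splitForm ρ (fun j => y j - c j) (s - t) := by
    unfold splitForm; positivity
  change d i₀ ≤ r
  linarith

/-- The squared circumradius, with respect to `|y|² + ρ s²`, of the largest Delaunay simplices. -/
noncomputable def critRadius (ρ : ℝ) : ℝ := 21 * ρ ^ 2 - 7 / 2 * ρ + 13 / 16

theorem critRadius_ge {ρ : ℝ} (h1 : 0.108 ≤ ρ) : 0.679 ≤ critRadius ρ := by
  unfold critRadius; nlinarith

set_option maxHeartbeats 4000000 in
/-- The Delaunay polytope of `E₆*` with vertices `p = (0, 0)`, `q = (0, 4)`, `cᵢ = (eᵢ, 2)` for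
`i < 3`, `a, a' = ((1, 1, 1, ±1, ±1) / 2, 3)` with equal and `b, b' = ((1, 1, 1, ±1, ∓1) / 2, 1)`
with opposite last signs, cut down by the inequalities of a `D₅` alcove. The triples
`{p, a, a'}`, `{q, b, b'}`, `{c₀, c₁, c₂}` have a common centroid, so a vertex can be dropped
from each of the first two. Which one is dropped is decided by the signs of the weights. -/
theorem covered_cell {ρ : ℝ} (hρ1 : 0.108 ≤ ρ) (hρ2 : ρ ≤ 0.109) {y : Fin 5 → ℝ} {s : ℝ}
    (h01 : y 1 ≤ y 0) (h12 : y 2 ≤ y 1) (h23 : y 3 ≤ y 2) (h34 : y 4 ≤ y 3) (h34' : -y 4 ≤ y 3)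
    (hsum : y 0 + y 1 ≤ 1)
    (hs1 : 2 * (y 0 + y 1 - y 2 + y 3 + y 4) ≤ s)
    (hs2 : s ≤ 4 - 2 * (y 0 + y 1 - y 2 + y 3 - y 4)) :
    Covered ρ (critRadius ρ) y s := by
  have hr := critRadius_ge hρ1
  obtain ⟨P, hP⟩ : ∃ P, P = (1 - (y 0 + y 1 + y 2) - (s - 2) / 2) / 2 := ⟨_, rfl⟩
  obtain ⟨R, hR⟩ : ∃ R, R = (1 - (y 0 + y 1 + y 2) + (s - 2) / 2) / 2 := ⟨_, rfl⟩
  rcases le_total (2 * P + (y 3 + y 4)) 0 with hp | hp <;>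
  rcases le_total (2 * R + (y 3 - y 4)) 0 with hq | hq
  · -- The weights of `p` and `q` vanish.
    obtain ⟨e, he⟩ : ∃ e, e = (1 + 2 * P + 2 * R - (y 0 + y 1 - 2 * y 2)) / 3 := ⟨_, rfl⟩
    refine covered_of_simplex (by linarith)
      ![![2, 0, 0, 0, 0], ![0, 2, 0, 0, 0], ![0, 0, 2, 0, 0], ![1, 1, 1, 1, 1],
        ![1, 1, 1, -1, -1], ![1, 1, 1, 1, -1], ![1, 1, 1, -1, 1]]
      ![2, 2, 2, 3, 3, 1, 1] (by decide)
      ![y 0 - y 2 + e, y 1 - y 2 + e, e, -P + (y 3 + y 4) / 2, -P - (y 3 + y 4) / 2,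
        -R + (y 3 - y 4) / 2, -R - (y 3 - y 4) / 2]
      ?_ ?_ ?_ ?_ ![9 / 25, 9 / 25, 9 / 25, 0, 0] 2 ?_
    · intro i; fin_cases i <;> simp <;> linarith
    · simp [Fin.sum_univ_succ]; linarith
    · intro j; fin_cases j <;> simp [Fin.sum_univ_succ] <;> linarith
    · simp [Fin.sum_univ_succ]; linarith
    · intro i; fin_cases i <;> simp [splitForm, Fin.sum_univ_succ] <;> norm_num <;> linarith
  · -- The weights of `p` and `b'` vanish.
    obtain ⟨e, he⟩ : ∃ e, e =
      (1 + 2 * P - (R + 3 * (y 3 - y 4) / 2) - (y 0 + y 1 - 2 * y 2)) / 3 := ⟨_, rfl⟩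
    refine covered_of_simplex (by linarith)
      ![![2, 0, 0, 0, 0], ![0, 2, 0, 0, 0], ![0, 0, 2, 0, 0], ![1, 1, 1, 1, 1],
        ![1, 1, 1, -1, -1], ![0, 0, 0, 0, 0], ![1, 1, 1, 1, -1]]
      ![2, 2, 2, 3, 3, 4, 1] (by decide)
      ![y 0 - y 2 + e, y 1 - y 2 + e, e, -P + (y 3 + y 4) / 2, -P - (y 3 + y 4) / 2,
        R + (y 3 - y 4) / 2, y 3 - y 4]
      ?_ ?_ ?_ ?_ ![8 / 25, 8 / 25, 8 / 25, 1 / 25, -1 / 25] (217 / 100) ?_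
    · intro i; fin_cases i <;> simp <;> linarith
    · simp [Fin.sum_univ_succ]; linarith
    · intro j; fin_cases j <;> simp [Fin.sum_univ_succ] <;> linarith
    · simp [Fin.sum_univ_succ]; linarith
    · intro i; fin_cases i <;> simp [splitForm, Fin.sum_univ_succ] <;> norm_num <;> linarith
  · -- The weights of `a'` and `q` vanish.
    obtain ⟨e, he⟩ : ∃ e, e =
      (1 - (P + 3 * (y 3 + y 4) / 2) + 2 * R - (y 0 + y 1 - 2 * y 2)) / 3 := ⟨_, rfl⟩
    refine covered_of_simplex (by linarith)
      ![![2, 0, 0, 0, 0], ![0, 2, 0, 0, 0], ![0, 0, 2, 0, 0], ![0, 0, 0, 0, 0],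
        ![1, 1, 1, 1, 1], ![1, 1, 1, 1, -1], ![1, 1, 1, -1, 1]]
      ![2, 2, 2, 0, 3, 1, 1] (by decide)
      ![y 0 - y 2 + e, y 1 - y 2 + e, e, P + (y 3 + y 4) / 2, y 3 + y 4,
        -R + (y 3 - y 4) / 2, -R - (y 3 - y 4) / 2]
      ?_ ?_ ?_ ?_ ![8 / 25, 8 / 25, 8 / 25, 1 / 25, 1 / 25] (183 / 100) ?_
    · intro i; fin_cases i <;> simp <;> linarith
    · simp [Fin.sum_univ_succ]; linarith
    · intro j; fin_cases j <;> simp [Fin.sum_univ_succ] <;> linarith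
    · simp [Fin.sum_univ_succ]; linarith
    · intro i; fin_cases i <;> simp [splitForm, Fin.sum_univ_succ] <;> norm_num <;> linarith
  · -- The weights of `a'` and `b'` vanish. This is the simplex of largest circumradius, so its
    -- exact circumcenter is needed.
    obtain ⟨e, he⟩ : ∃ e, e =
      (1 - (P + 3 * (y 3 + y 4) / 2) - (R + 3 * (y 3 - y 4) / 2)
        - (y 0 + y 1 - 2 * y 2)) / 3 := ⟨_, rfl⟩
    refine covered_of_simplex (by linarith)
      ![![2, 0, 0, 0, 0], ![0, 2, 0, 0, 0], ![0, 0, 2, 0, 0], ![0, 0, 0, 0, 0],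
        ![1, 1, 1, 1, 1], ![0, 0, 0, 0, 0], ![1, 1, 1, 1, -1]]
      ![2, 2, 2, 0, 3, 4, 1] (by decide)
      ![y 0 - y 2 + e, y 1 - y 2 + e, e, P + (y 3 + y 4) / 2, y 3 + y 4,
        R + (y 3 - y 4) / 2, y 3 - y 4]
      ?_ ?_ ?_ ?_
      ![1 / 2 - 2 * ρ, 1 / 2 - 2 * ρ, 1 / 2 - 2 * ρ, 3 * ρ - 1 / 4, 0] 2 ?_
    · intro i; fin_cases i <;> simp <;> linarith
    · simp [Fin.sum_univ_succ]; linarith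
    · intro j; fin_cases j <;> simp [Fin.sum_univ_succ] <;> linarith
    · simp [Fin.sum_univ_succ]; linarith
    · intro i
      apply le_of_eq
      fin_cases i <;> simp [splitForm, critRadius, Fin.sum_univ_succ] <;> ring

/-! ### Reduction to one cell -/

/-- The cell around the edge over `(1/2, …, 1/2)`, a mirror image of the one in
`covered_cell`. -/
theorem covered_cell_spinor {ρ : ℝ} (hρ1 : 0.108 ≤ ρ) (hρ2 : ρ ≤ 0.109) {y : Fin 5 → ℝ} {s : ℝ}
    (h01 : y 1 ≤ y 0) (h12 : y 2 ≤ y 1) (h23 : y 3 ≤ y 2) (h34 : y 4 ≤ y 3) (h34' : -y 4 ≤ y 3)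
    (h0 : y 0 ≤ 1 / 2)
    (hs1 : 2 * (y 0 + y 2 - y 1 - y 3 - y 4) ≤ s)
    (hs2 : s ≤ 2 * (y 0 + y 1 - y 2 + y 3 + y 4)) :
    Covered ρ (critRadius ρ) y s := by
  apply Covered.of_perm Fin.revPerm
  apply Covered.of_neg
  apply Covered.shift (m := fun _ => -1) (j := -3) (by decide)
  apply covered_cell hρ1 hρ2 <;> simp [Fin.rev_eq] <;> linarith

/-- For `1/2 ≥ y₀ ≥ … ≥ y₄ ≥ 0` the circle of `s` modulo `4` is divided into four arcs, one for
each class of `D₅* / D₅`, lying in images of the cell of `covered_cell`. -/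
theorem covered_sorted {ρ : ℝ} (hρ1 : 0.108 ≤ ρ) (hρ2 : ρ ≤ 0.109) {y : Fin 5 → ℝ} {s : ℝ}
    (h01 : y 1 ≤ y 0) (h12 : y 2 ≤ y 1) (h23 : y 3 ≤ y 2) (h34 : y 4 ≤ y 3) (h4 : 0 ≤ y 4)
    (h0 : y 0 ≤ 1 / 2) : Covered ρ (critRadius ρ) y s := by
  -- Translation by `(0, 4)` moves `s` into a fundamental interval.
  wlog hs : -(2 * (y 0 + y 1 - y 2 + y 3 - y 4)) ≤ s ∧
      s ≤ 4 - 2 * (y 0 + y 1 - y 2 + y 3 - y 4) generalizing s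
  · set b := 2 * (y 0 + y 1 - y 2 + y 3 - y 4)
    have hf1 := Int.floor_le ((s + b) / 4)
    have hf2 := Int.lt_floor_add_one ((s + b) / 4)
    apply Covered.shift (m := fun _ => 0) (j := 4 * ⌊(s + b) / 4⌋)
      ⟨fun i => by lia, by simp⟩
    simp only [Int.cast_zero, zero_div, sub_zero]
    apply this
    push_cast
    constructor <;> linarith
  obtain ⟨hs1, hs2⟩ := hs
  by_cases c1 : 2 * (y 0 + y 1 - y 2 + y 3 + y 4) ≤ s
  · exact covered_cell hρ1 hρ2 h01 h12 h23 h34 (by linarith) (by linarith) c1 hs2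
  by_cases c2 : 2 * (y 0 + y 2 - y 1 - y 3 - y 4) ≤ s
  · exact covered_cell_spinor hρ1 hρ2 h01 h12 h23 h34 (by linarith) h0 c2 (by linarith)
  by_cases c3 : -(2 * (y 0 + y 2 - y 1 - y 3 + y 4)) ≤ s
  · -- The cell around the edge over `e₀`.
    apply Covered.of_flip 0
    apply Covered.shift (m := ![-2, 0, 0, 0, 0]) (j := -2) (by decide)
    apply covered_cell hρ1 hρ2 <;> simp [Function.update] <;> linarith
  · -- The cell around the edge over `(1/2, 1/2, 1/2, 1/2, -1/2)`.
    apply Covered.of_flip 4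
    apply covered_cell_spinor hρ1 hρ2 <;> simp [Function.update] <;> linarith

theorem covered_nonneg {ρ : ℝ} (hρ1 : 0.108 ≤ ρ) (hρ2 : ρ ≤ 0.109) {y : Fin 5 → ℝ} {s : ℝ}
    (h0 : ∀ i, 0 ≤ y i) (h1 : ∀ i, y i ≤ 1 / 2) : Covered ρ (critRadius ρ) y s := by
  have hm := Tuple.monotone_sort (fun i => -y i)
  apply Covered.of_perm (Tuple.sort fun i => -y i)
  have hle : ∀ i j : Fin 5, i ≤ j →
      y (Tuple.sort (fun i => -y i) j) ≤ y (Tuple.sort (fun i => -y i) i) := by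
    intro i j hij
    have := hm hij
    simp only [Function.comp] at this
    linarith
  exact covered_sorted hρ1 hρ2 (hle 0 1 (by decide)) (hle 1 2 (by decide)) (hle 2 3 (by decide))
    (hle 3 4 (by decide)) (h0 _) (h1 _)

theorem covered_all {ρ : ℝ} (hρ1 : 0.108 ≤ ρ) (hρ2 : ρ ≤ 0.109) (y : Fin 5 → ℝ) (s : ℝ) :
    Covered ρ (critRadius ρ) y s := by
  have signs : ∀ T : Finset (Fin 5), ∀ (y : Fin 5 → ℝ) (s : ℝ), (∀ i, |y i| ≤ 1 / 2) →
      (∀ i ∉ T, 0 ≤ y i) → Covered ρ (critRadius ρ) y s := by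
    intro T
    induction T using Finset.induction_on with
    | empty =>
      intro y s h1 h0
      exact covered_nonneg hρ1 hρ2 (fun i => h0 i (by simp)) fun i => (abs_le.mp (h1 i)).2
    | insert a T _ ih =>
      intro y s h1 h0
      by_cases ha : 0 ≤ y a
      · refine ih y s h1 fun i hi => ?_
        rcases eq_or_ne i a with rfl | hia
        · exact ha
        · exact h0 i (by simp [hia, hi])
      · apply Covered.of_flip a
        refine ih _ _ (fun i => ?_) fun i hi => ?_
        · rcases eq_or_ne i a with rfl | hia
          · simpa using h1 i
          · simpa [Function.update_of_ne hia] using h1 i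
        · rcases eq_or_ne i a with rfl | hia
          · simp only [Function.update_self]; linarith
          · simpa [Function.update_of_ne hia] using h0 i (by simp [hia, hi])
  apply Covered.shift (m := fun i => 2 * round (y i)) (j := -∑ i, 2 * round (y i))
  · refine ⟨fun i => ?_, by simp⟩
    rw [← Finset.mul_sum]; lia
  · refine signs Finset.univ _ _ (fun i => ?_) (by simp)
    have := abs_sub_round (y i)
    simpa using this

/-! ### A deep hole -/

theorem int_sq_sub {u : ℝ} (hu0 : 0 ≤ u) (hu : u ≤ 1 / 2) (n : ℤ) : u ^ 2 ≤ (u - n) ^ 2 := by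
  rcases le_or_gt n 0 with h | h
  · have : (n : ℝ) ≤ 0 := by exact_mod_cast h
    nlinarith
  · have : (1 : ℝ) ≤ n := by exact_mod_cast h
    nlinarith

theorem int_sq_sub_of_ne {u : ℝ} (hu0 : 0 ≤ u) (hu : u ≤ 1 / 2) {n : ℤ} (hn : n ≠ 0) :
    u ^ 2 + (1 - 2 * u) ≤ (u - n) ^ 2 := by
  rcases lt_or_gt_of_ne hn with h | h
  · have : (n : ℝ) ≤ -1 := by exact_mod_cast (by lia : n ≤ -1)
    nlinarith
  · have : (1 : ℝ) ≤ n := by exact_mod_cast h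
    nlinarith

theorem half_sq_sub {u : ℝ} (hu0 : 0 ≤ u) (hu : u ≤ 1 / 2) {n : ℤ} (hn : ¬ 2 ∣ n) :
    (1 / 2 - u) ^ 2 ≤ (u - n / 2) ^ 2 := by
  rcases le_or_gt n 0 with h | h
  · have : (n : ℝ) ≤ -1 := by exact_mod_cast (by lia : n ≤ -1)
    nlinarith
  · have : (1 : ℝ) ≤ n := by exact_mod_cast h
    nlinarith

/-- The circumcenter of the largest simplex in `covered_cell` is `(deepHole ρ, 2)`. -/
noncomputable def deepHole (ρ : ℝ) : Fin 5 → ℝ :=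
  ![1 / 2 - 2 * ρ, 1 / 2 - 2 * ρ, 1 / 2 - 2 * ρ, 3 * ρ - 1 / 4, 0]

/-- No lattice point is closer to the deep hole than the vertices of its simplex. The residue of
`k` modulo `4` determines the glue class; in each class the distance is minimised
coordinatewise, except that for `k ≡ 2` a vector of odd coordinate sum must be nonzero. -/
theorem deepHole_far {ρ : ℝ} (hρ1 : 0.108 ≤ ρ) (hρ2 : ρ ≤ 0.109) {n : Fin 5 → ℤ} {k : ℤ}
    (h : InGlue n k) :
    critRadius ρ ≤ splitForm ρ (fun i => deepHole ρ i - n i / 2) (2 - k) := by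
  obtain ⟨hpar, hsum⟩ := h
  have hb : ∀ i, 0 ≤ deepHole ρ i ∧ deepHole ρ i ≤ 1 / 2 - 2 * ρ := by
    intro i
    fin_cases i <;> constructor <;> simp [deepHole] <;> linarith
  have hh : ∀ i, 0 ≤ deepHole ρ i ∧ deepHole ρ i ≤ 1 / 2 :=
    fun i => ⟨(hb i).1, by linarith [(hb i).2]⟩
  have hnorm : ∑ i, deepHole ρ i ^ 2 = critRadius ρ - 4 * ρ := by
    simp [deepHole, critRadius, Fin.sum_univ_succ]; ring
  unfold splitForm
  by_cases hk : 2 ∣ k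
  · have hn : ∀ i, ∃ m : ℤ, n i = 2 * m := fun i => by
      have := hpar i
      exact ⟨n i / 2, by lia⟩
    choose m hm using hn
    have hm' : ∀ i, deepHole ρ i - (n i : ℝ) / 2 = deepHole ρ i - m i := fun i => by
      rw [hm]; push_cast; ring
    simp only [hm']
    by_cases hk4 : 4 ∣ k
    · have h1 : ∑ i, deepHole ρ i ^ 2 ≤ ∑ i, (deepHole ρ i - m i) ^ 2 :=
        Finset.sum_le_sum fun i _ => int_sq_sub (hh i).1 (hh i).2 _
      have h2 : (4 : ℝ) ≤ (2 - k) ^ 2 := by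
        rcases le_or_gt k 0 with h | h
        · have : (k : ℝ) ≤ 0 := by exact_mod_cast h
          nlinarith
        · have : (4 : ℝ) ≤ k := by exact_mod_cast (by lia : 4 ≤ k)
          nlinarith
      nlinarith
    · have hne : ∃ a, m a ≠ 0 := by
        by_contra! hall
        simp only [hm, hall] at hsum
        simp at hsum
        exact hk4 hsum
      obtain ⟨a, ha⟩ := hne
      have h1 : ∑ i ∈ Finset.univ.erase a, deepHole ρ i ^ 2 ≤
          ∑ i ∈ Finset.univ.erase a, (deepHole ρ i - m i) ^ 2 :=
        Finset.sum_le_sum fun i _ => int_sq_sub (hh i).1 (hh i).2 _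
      have h2 := int_sq_sub_of_ne (hh a).1 (hh a).2 ha
      have e1 := Finset.add_sum_erase Finset.univ (fun i => deepHole ρ i ^ 2) (Finset.mem_univ a)
      have e2 := Finset.add_sum_erase Finset.univ (fun i => (deepHole ρ i - m i) ^ 2)
        (Finset.mem_univ a)
      have h3 : 0 ≤ ρ * (2 - (k : ℝ)) ^ 2 := by
        have : 0 ≤ ρ := by linarith
        positivity
      have := (hb a).2
      linarith
  · have hn : ∀ i, ¬ 2 ∣ n i := fun i => by have := hpar i; lia
    have h1 : ∑ i, (1 / 2 - deepHole ρ i) ^ 2 ≤ ∑ i, (deepHole ρ i - n i / 2) ^ 2 :=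
      Finset.sum_le_sum fun i _ => half_sq_sub (hh i).1 (hh i).2 (hn i)
    have h2 : (1 : ℝ) ≤ (2 - k) ^ 2 := by
      rcases le_or_gt k 1 with h | h
      · have : (k : ℝ) ≤ 1 := by exact_mod_cast h
        nlinarith
      · have : (3 : ℝ) ≤ k := by exact_mod_cast (by lia : 3 ≤ k)
        nlinarith
    have h3 : ∑ i, (1 / 2 - deepHole ρ i) ^ 2 = critRadius ρ - ρ := by
      simp [deepHole, critRadius, Fin.sum_univ_succ]; ring
    nlinarith

/-! ### Splitting the quadratic form -/

/-- The coordinates of `x` along `D₅*`, doubled. On `ℤ⁶` they are integers. -/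
def toD {R : Type*} [CommRing R] (x : Fin 6 → R) : Fin 5 → R :=
  ![x 1 + 2 * x 2 + x 4 + x 5, x 1 + 2 * x 3 + x 4 + x 5, x 1 + x 4 - x 5, x 1 + x 4 + x 5,
    -x 1 + x 4 + x 5]

/-- The coordinate of `x` along the minimal vector `(1, 0, 0, 0, 0, 0)`, which itself has
coordinate `4`. -/
def toK {R : Type*} [CommRing R] (x : Fin 6 → R) : R :=
  4 * x 0 + x 1 + 2 * x 2 + 2 * x 3 - x 4 + x 5

theorem form_eq {t ρ : ℝ} (hρ : (3 + 5 * t) * ρ = (1 + 3 * t) / 4) (x : Fin 6 → ℝ) :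
    x ⬝ᵥ ((QE6 + t • R1) *ᵥ x) =
      (3 + 5 * t) * splitForm ρ (fun i => toD x i / 2) (toK x) := by
  have : (3 + 5 * t) * splitForm ρ (fun i => toD x i / 2) (toK x) =
      (3 + 5 * t) * (∑ i, (toD x i / 2) ^ 2) + (1 + 3 * t) / 4 * toK x ^ 2 := by
    unfold splitForm; rw [← hρ]; ring
  rw [this]
  simp [QE6, R1, toD, toK, Matrix.mulVec, dotProduct, Fin.sum_univ_succ]
  ring

theorem inGlue_of_int (v : Fin 6 → ℤ) : InGlue (toD v) (toK v) := by
  constructor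
  · intro i
    fin_cases i <;> simp [toD, toK] <;> lia
  · simp [toD, toK, Fin.sum_univ_succ]; lia

theorem exists_int_of_inGlue {n : Fin 5 → ℤ} {k : ℤ} (h : InGlue n k) :
    ∃ v : Fin 6 → ℤ, toD v = n ∧ toK v = k := by
  obtain ⟨h1, h2⟩ := h
  simp only [Fin.sum_univ_five] at h2
  have a0 := h1 0
  have a1 := h1 1
  have a2 := h1 2
  have a3 := h1 3
  have a4 := h1 4
  refine ⟨![(k - n 0 - n 1 + n 2 + n 3 + n 4) / 4, (n 3 - n 4) / 2, (n 0 - n 3) / 2,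
    (n 1 - n 3) / 2, (n 2 + n 4) / 2, (n 3 - n 2) / 2], ?_, ?_⟩
  · ext i
    fin_cases i <;> simp [toD] <;> lia
  · simp [toK]; lia

theorem coords_sub (x : Fin 6 → ℝ) (v : Fin 6 → ℤ) :
    (fun i => toD (x - fun i => (v i : ℝ)) i / 2) = (fun i => toD x i / 2 - (toD v i : ℤ) / 2) ∧
    toK (x - fun i => (v i : ℝ)) = toK x - (toK v : ℤ) := by
  constructor
  · ext i
    fin_cases i <;> simp [toD] <;> ring
  · simp [toK]; ring

theorem exists_coords (y : Fin 5 → ℝ) (s : ℝ) :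
    ∃ x : Fin 6 → ℝ, (fun i => toD x i / 2) = y ∧ toK x = s := by
  refine ⟨![(s + 2 * (-y 0 - y 1 + y 2 + y 3 + y 4)) / 4, y 3 - y 4, y 0 - y 3,
    y 1 - y 3, y 2 + y 4, y 3 - y 2], ?_, ?_⟩
  · ext i
    fin_cases i <;> simp [toD] <;> ring
  · simp [toK]; ring

theorem inhomMin_eq {t ρ : ℝ} (ht : 0 ≤ t) (hρ : (3 + 5 * t) * ρ = (1 + 3 * t) / 4)
    (hρ1 : 0.108 ≤ ρ) (hρ2 : ρ ≤ 0.109) :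
    inhomMin (QE6 + t • R1) = (3 + 5 * t) * critRadius ρ := by
  have hA : 0 ≤ 3 + 5 * t := by linarith
  have hρ0 : 0 ≤ ρ := by linarith
  unfold inhomMin
  simp only [form_eq hρ, (coords_sub _ _).1, (coords_sub _ _).2]
  have hbdd : ∀ x : Fin 6 → ℝ, BddBelow (Set.range fun v : Fin 6 → ℤ =>
      (3 + 5 * t) * splitForm ρ (fun i => toD x i / 2 - (toD v i : ℤ) / 2)
        (toK x - (toK v : ℤ))) := by
    intro x
    refine ⟨0, ?_⟩
    rintro _ ⟨v, rfl⟩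
    simp only [splitForm]
    positivity
  have hub : ∀ x : Fin 6 → ℝ, ⨅ v : Fin 6 → ℤ,
      (3 + 5 * t) * splitForm ρ (fun i => toD x i / 2 - (toD v i : ℤ) / 2)
        (toK x - (toK v : ℤ)) ≤ (3 + 5 * t) * critRadius ρ := by
    intro x
    obtain ⟨n, k, hnk, hle⟩ := covered_all hρ1 hρ2 (fun i => toD x i / 2) (toK x)
    obtain ⟨v, rfl, rfl⟩ := exists_int_of_inGlue hnk
    exact (ciInf_le (hbdd x) v).trans (mul_le_mul_of_nonneg_left hle hA)
  apply le_antisymm (ciSup_le hub)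
  obtain ⟨x, hx, hx'⟩ := exists_coords (deepHole ρ) 2
  refine le_ciSup_of_le ⟨_, by rintro _ ⟨x, rfl⟩; exact hub x⟩ x (le_ciInf fun v => ?_)
  refine mul_le_mul_of_nonneg_left ?_ hA
  have := deepHole_far hρ1 hρ2 (inGlue_of_int v)
  have hx0 : ∀ i, toD x i / 2 = deepHole ρ i := fun i => congrFun hx i
  simp only [hx0, hx']
  exact this

theorem posDef_form {t : ℝ} (ht : 0 ≤ t) : (QE6 + t • R1).PosDef := by
  have hA : 0 < 3 + 5 * t := by linarith
  have hρ : (3 + 5 * t) * ((1 + 3 * t) / 4 / (3 + 5 * t)) = (1 + 3 * t) / 4 := by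
    field_simp
  refine Matrix.PosDef.of_dotProduct_mulVec_pos ?_ fun x hx => ?_
  · ext i j
    fin_cases i <;> fin_cases j <;> simp [QE6, R1]
  · rw [star_trivial, form_eq hρ]
    set ρ := (1 + 3 * t) / 4 / (3 + 5 * t) with hdef
    have hρ0 : 0 < ρ := by positivity
    refine mul_pos hA (lt_of_le_of_ne (by unfold splitForm; positivity) fun h0 => hx ?_)
    have e1 : ∑ i, (toD x i / 2) ^ 2 = 0 := by
      have h1 : 0 ≤ ∑ i, (toD x i / 2) ^ 2 := by positivity
      have h2 : 0 ≤ ρ * toK x ^ 2 := by positivity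
      unfold splitForm at h0
      linarith
    have e2 : toK x = 0 := by
      unfold splitForm at h0
      rw [e1] at h0
      have : toK x ^ 2 = 0 := by
        have : ρ * toK x ^ 2 = 0 := by linarith
        exact (mul_eq_zero.mp this).resolve_left hρ0.ne'
      exact pow_eq_zero_iff (two_ne_zero) |>.mp this
    have e3 : ∀ i, toD x i = 0 := by
      intro i
      have := (Finset.sum_eq_zero_iff_of_nonneg (fun i _ => sq_nonneg _)).mp e1 i
        (Finset.mem_univ i)
      simpa using this
    have a0 := e3 0
    have a1 := e3 1
    have a2 := e3 2
    have a3 := e3 3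
    have a4 := e3 4
    simp [toD] at a0 a1 a2 a3 a4
    unfold toK at e2
    ext i
    fin_cases i <;> simp <;> linarith

/-- The matrix of the coordinate map `x ↦ (toK x, toD x)`. -/
def coordMatrix : Matrix (Fin 6) (Fin 6) ℝ :=
  !![4, 1, 2, 2, -1, 1;
     0, 1, 2, 0, 1, 1;
     0, 1, 0, 2, 1, 1;
     0, 1, 0, 0, 1, -1;
     0, 1, 0, 0, 1, 1;
     0, -1, 0, 0, 1, 1]

theorem det_form (t : ℝ) : (QE6 + t • R1).det = (3 + 5 * t) ^ 5 * (1 + 3 * t) := by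
  have hfac : QE6 + t • R1 = coordMatrixᵀ *
      Matrix.diagonal ![(1 + 3 * t) / 4, (3 + 5 * t) / 4, (3 + 5 * t) / 4, (3 + 5 * t) / 4,
        (3 + 5 * t) / 4, (3 + 5 * t) / 4] * coordMatrix := by
    ext i j
    fin_cases i <;> fin_cases j <;>
      simp [QE6, R1, coordMatrix, Matrix.mul_apply, Fin.sum_univ_succ] <;>
      ring
  have hdet : coordMatrix.det ^ 2 = 64 ^ 2 := by
    have : coordMatrix.det = 64 ∨ coordMatrix.det = -64 := by
      simp [coordMatrix, Matrix.det_succ_row_zero, Fin.sum_univ_succ, Fin.succAbove]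
      norm_num
    rcases this with h | h <;> rw [h] <;> norm_num
  rw [hfac, Matrix.det_mul, Matrix.det_mul, Matrix.det_transpose, Matrix.det_diagonal,
    Fin.prod_univ_six]
  simp only [Matrix.cons_val]
  linear_combination ((1 + 3 * t) / 4 * ((3 + 5 * t) / 4) ^ 5) * hdet

/-- The quadratic form `Q₆^{c2} = Q_{E6*} + ((√1057 − 1)/88)·R₁` is symmetric positive
definite and its covering density equals
`Θ = (√(1124895337698·√1057 − 33713139497730)/3543122)·κ₆`; equivalently,
`μ(Q)⁶ / det Q = (1124895337698·√1057 − 33713139497730)/3543122²`. -/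
theorem covDensity_Q6c2 :
    (QE6 + ((Real.sqrt 1057 - 1) / 88) • R1).IsSymm ∧
    (QE6 + ((Real.sqrt 1057 - 1) / 88) • R1).PosDef ∧
    covDensity (QE6 + ((Real.sqrt 1057 - 1) / 88) • R1) =
      Real.sqrt (1124895337698 * Real.sqrt 1057 - 33713139497730) / 3543122 *
        unitBallVol 6 ∧
    inhomMin (QE6 + ((Real.sqrt 1057 - 1) / 88) • R1) ^ 6 /
        (QE6 + ((Real.sqrt 1057 - 1) / 88) • R1).det =
      (1124895337698 * Real.sqrt 1057 - 33713139497730) / 3543122 ^ 2 := by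
  set w := Real.sqrt 1057 with hw
  have hw2 : w ^ 2 = 1057 := Real.sq_sqrt (by norm_num)
  have hw0 : 0 ≤ w := Real.sqrt_nonneg _
  have hw1 : 32.5 < w := by nlinarith
  have hw3 : w < 32.52 := by nlinarith
  set t := (w - 1) / 88 with htdef
  have ht : 0 ≤ t := by rw [htdef]; linarith
  obtain ⟨ρ, hρdef⟩ : ∃ ρ, ρ = (35 + 2 * w) / 924 := ⟨_, rfl⟩
  have hρ : (3 + 5 * t) * ρ = (1 + 3 * t) / 4 := by
    rw [htdef, hρdef]; linear_combination (5 / 40656) * hw2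
  have hμ := inhomMin_eq ht hρ (by rw [hρdef]; linarith) (by rw [hρdef]; linarith)
  have hquot : inhomMin (QE6 + t • R1) ^ 6 / (QE6 + t • R1).det =
      (1124895337698 * w - 33713139497730) / 3543122 ^ 2 := by
    rw [hμ, det_form]
    have hA : 0 < 3 + 5 * t := by linarith
    rw [div_eq_iff (by positivity)]
    have hB : 1 + 3 * t = (3 + 5 * t) * (4 * ρ) := by linarith
    rw [hB]
    -- Powers of `critRadius ρ` are reduced modulo `w² = 1057`.
    have hr : critRadius ρ = 197/242 + -1/242 * w := by
      rw [critRadius, hρdef]; linear_combination (1/10164) * hw2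
    have hr2 : critRadius ρ ^ 2 = 19933/29282 + -197/29282 * w := by
      rw [hr]; linear_combination (1/58564) * hw2
    have hr6 : critRadius ρ ^ 6 =
        (1124895337698 * w - 33713139497730) / 3543122 ^ 2 * (4 * ρ) := by
      rw [show critRadius ρ ^ 6 = (critRadius ρ ^ 2) ^ 3 by ring, hr2, hρdef]
      linear_combination (-120105774287/175751989096376 + -7645373/25107427013768 * w) * hw2
    rw [mul_pow, hr6]; ring
  have hPD := posDef_form ht
  refine ⟨by simpa [Matrix.IsHermitian, Matrix.IsSymm] using hPD.1, hPD, ?_, hquot⟩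
  unfold covDensity
  rw [hquot, Real.sqrt_div' _ (by norm_num), Real.sqrt_sq (by norm_num)]
end

section
/- Let Q = Q_{E6*} + x·R_2 + y·R_3 + z·R_4, with the exact rational values x = 0.15266328480099, y = 0.32884740614948, z = 0.13827491241153. Then Q is a real symmetric positive definite 6×6 matrix whose covering density satisfies Θ(Q) < 2.464801. -/
/-!
The lattice of `Q₆^{c1}` has a Delaunay triangulation into unimodular simplices, which fall into
eight orbits under lattice translations and integral isometries of the form. Every point lies in one
of these simplices, and a point of a simplex is within the circumradius of one of its vertices
(`exists_vert_near`, by averaging squared distances with barycentric weights). Hence the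
inhomogeneous minimum is at most the largest squared circumradius, which lies just below `3.6399223`;
with the exact determinant and `κ₆ = π³ / 6` this gives the bound on the covering density.

That the simplices cover space follows from local data. Among all pairs consisting of a
representative simplex `k` and a point `y = h x + t` in the orbit of `x` under the integral affine
isometries, choose one that minimizes the power of `y` with respect to the circumscribed sphere of
`k` (`exists_min_power`). The powers for two adjacent simplices agree on the common facet, and their
difference is an affine function. So it is a multiple of the barycentric coordinate that vanishes on
this facet, and the factor is positive by the local Delaunay condition (`power_nbr`, `gap_pos`).
Minimality therefore makes all barycentric coordinates of `y` nonnegative, that is, `y` lies in the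
simplex `k`; the inverse isometry carries the vertex close to `y` to a lattice point close to `x`
(`exists_near`). Up to isometry only the 56 facets of the eight representatives have to be examined,
and after scaling the form by `10¹⁴` this is integer arithmetic.
-/

open Matrix MeasureTheory

/-- The extreme ray `R₂` of the secondary cone. -/
def R2 : Matrix (Fin 6) (Fin 6) ℝ :=
  !![0, 0, 0, 0, 0, 0;
     0, 5, 2, 2, 3, 1;
     0, 2, 4, 0, 2, 2;
     0, 2, 0, 4, 2, 2;
     0, 3, 2, 2, 5, 3;
     0, 1, 2, 2, 3, 5]

/-- The extreme ray `R₃` of the secondary cone. -/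
def R3 : Matrix (Fin 6) (Fin 6) ℝ :=
  !![6, 4, 4, 4, 0, 2;
     4, 11, 6, 6, 5, 3;
     4, 6, 8, 3, 3, 4;
     4, 6, 3, 8, 3, 4;
     0, 5, 3, 3, 7, 4;
     2, 3, 4, 4, 4, 7]

/-- The extreme ray `R₄` of the secondary cone. -/
def R4 : Matrix (Fin 6) (Fin 6) ℝ :=
  !![3, 2, 2, 2, 0, 1;
     2, 3, 2, 2, 1, 1;
     2, 2, 4, 1, 1, 2;
     2, 2, 1, 4, 1, 2;
     0, 1, 1, 1, 3, 2;
     1, 1, 2, 2, 2, 4]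

namespace CoveringQ6

/-! ### The form as an integer matrix -/

/-- The Gram matrix of `Q₆^{c1}` multiplied by `10¹⁴`, which makes it integral. -/
def gramInt : Matrix (Fin 6) (Fin 6) ℤ :=
  !![638790917413147, 259193944942098, 359193944942098, 359193944942098, -100000000000000, 179596972471049;
     259193944942098, 879546262888382, 455496083132192, 455496083132192, 424050179756190, 227748041566096;
     359193944942098, 455496083132192, 779453203804592, 212481713085997, 243014370046195, 389726601902296;
     359193944942098, 455496083132192, 212481713085997, 779453203804592, 243014370046195, 389726601902296;
     -100000000000000, 424050179756190, 243014370046195, 243014370046195, 748007300428590, 404992930382395;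
     179596972471049, 227748041566096, 389726601902296, 389726601902296, 404992930382395, 761834791669743]

/-- Entrywise cast of an integer vector. -/
def toVec (v : Fin 6 → ℤ) : Fin 6 → ℝ := fun i => (v i : ℝ)

/-- Entrywise cast of an integer matrix. -/
def toMat (h : Matrix (Fin 6) (Fin 6) ℤ) : Matrix (Fin 6) (Fin 6) ℝ := h.map (Int.cast : ℤ → ℝ)

/-- The scaled form `10¹⁴ · Q₆^{c1}` on integer vectors. -/
def formInt (v : Fin 6 → ℤ) : ℤ := v ⬝ᵥ (gramInt *ᵥ v)

/-- The scaled form `10¹⁴ · Q₆^{c1}` on real vectors. -/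
noncomputable def form (y : Fin 6 → ℝ) : ℝ := y ⬝ᵥ (toMat gramInt *ᵥ y)

/-! ### The simplices and their neighbours -/

/-- The vertices of eight Delaunay simplices of `Q₆^{c1}`, one for each orbit under lattice
translations and integral isometries. Vertex `0` is always the origin. -/
def vert : Fin 8 → Fin 7 → Fin 6 → ℤ :=
  ![![![0, 0, 0, 0, 0, 0],
      ![-1, 0, 0, 1, 0, 0],
      ![-1, 0, 1, 1, 0, -1],
      ![-1, 1, 0, 0, 0, 0],
      ![0, 0, 0, 0, 1, -1],
      ![0, 0, 0, 1, 1, -1],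
      ![0, 1, -1, 0, 0, 0]],
    ![![0, 0, 0, 0, 0, 0],
      ![0, 0, 0, 0, 1, -1],
      ![0, 0, 1, 0, 0, -1],
      ![0, 1, 0, -1, 0, 0],
      ![1, 0, 0, -1, 1, -1],
      ![1, 0, 0, 0, 1, -1],
      ![1, 1, -1, -1, 0, 0]],
    ![![0, 0, 0, 0, 0, 0],
      ![-1, 0, 0, 0, 0, 1],
      ![-1, 0, 1, 0, 0, 0],
      ![0, 0, 0, -1, 0, 1],
      ![0, 0, 0, -1, 1, 0],
      ![0, 0, 0, 0, 1, 0],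
      ![0, 1, -1, -1, 0, 1]],
    ![![0, 0, 0, 0, 0, 0],
      ![-1, 0, 0, 1, 0, 0],
      ![-1, 0, 1, 1, 0, -1],
      ![-1, 1, 0, 0, 0, 0],
      ![0, 0, 0, 1, 1, -1],
      ![0, 1, -1, 0, 0, 0],
      ![0, 1, 0, 0, 0, 0]],
    ![![0, 0, 0, 0, 0, 0],
      ![0, 0, 0, 0, 1, -1],
      ![0, 0, 1, 0, 0, -1],
      ![0, 1, 0, -1, 0, 0],
      ![0, 1, 0, 0, 0, -1],
      ![1, 0, 0, 0, 1, -1],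
      ![1, 1, -1, -1, 0, 0]],
    ![![0, 0, 0, 0, 0, 0],
      ![0, 0, 0, 0, 0, 1],
      ![0, 0, 0, 0, 1, 0],
      ![0, 0, 1, 0, 0, 0],
      ![1, 0, 0, -1, 1, 0],
      ![1, 0, 0, 0, 1, 0],
      ![1, 1, -1, -1, 0, 1]],
    ![![0, 0, 0, 0, 0, 0],
      ![-1, 0, 0, 0, 0, 1],
      ![0, -1, 0, 0, 1, 0],
      ![0, 0, 0, -1, 0, 1],
      ![0, 0, 0, -1, 1, 0],
      ![0, 0, 0, 0, 1, 0],
      ![0, 1, -1, -1, 0, 1]],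
    ![![0, 0, 0, 0, 0, 0],
      ![-1, 0, 0, 0, 0, 0],
      ![-1, 0, 1, 0, 0, -1],
      ![0, 0, 0, -1, 0, 0],
      ![0, 0, 0, 0, 1, -1],
      ![0, 1, -1, -1, 0, 0],
      ![0, 1, 0, -1, 0, 0]]]

/-- The linear parts of the barycentric coordinates of the simplices `vert`. They are integral
because the simplices are unimodular. -/
def grad : Fin 8 → Fin 7 → Fin 6 → ℤ :=
  ![![![1, 0, 1, 0, 0, 1],
      ![-1, -1, -1, 0, 0, 0],
      ![0, 0, 0, 0, -1, -1],
      ![0, 1, 1, 0, 1, 1],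
      ![-1, -1, -1, -1, 0, -1],
      ![1, 1, 1, 1, 1, 1],
      ![0, 0, -1, 0, -1, -1]],
    ![![0, -1, 0, 0, 0, 1],
      ![-1, 0, -1, 0, 0, -1],
      ![0, 0, 0, 0, -1, -1],
      ![0, 1, 1, 0, 1, 1],
      ![0, -1, 0, -1, 0, 0],
      ![1, 1, 1, 1, 1, 1],
      ![0, 0, -1, 0, -1, -1]],
    ![![0, -1, -1, 0, -1, -1],
      ![-1, -1, -1, 0, 0, 0],
      ![0, 1, 1, 0, 0, 0],
      ![1, 0, 1, 0, 0, 1],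
      ![-1, -1, -1, -1, 0, -1],
      ![1, 1, 1, 1, 1, 1],
      ![0, 1, 0, 0, 0, 0]],
    ![![0, -1, 0, -1, 0, 0],
      ![0, 0, 0, 1, 0, 1],
      ![0, 0, 0, 0, -1, -1],
      ![-1, 0, 0, -1, 1, 0],
      ![0, 0, 0, 0, 1, 0],
      ![0, 0, -1, 0, -1, -1],
      ![1, 1, 1, 1, 0, 1]],
    ![![0, 0, 0, 1, 0, 1],
      ![-1, -1, -1, -1, 0, -1],
      ![0, -1, 0, -1, -1, -1],
      ![0, 1, 1, 0, 1, 1],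
      ![0, 1, 0, 1, 0, 0],
      ![1, 1, 1, 1, 1, 1],
      ![0, -1, -1, -1, -1, -1]],
    ![![0, -1, -1, 0, -1, -1],
      ![0, -1, 0, 0, 0, 1],
      ![-1, 1, 0, 0, 1, 0],
      ![0, 1, 1, 0, 0, 0],
      ![0, -1, 0, -1, 0, 0],
      ![1, 0, 0, 1, 0, 0],
      ![0, 1, 0, 0, 0, 0]],
    ![![0, 0, 0, 0, -1, -1],
      ![-1, 0, 0, 0, 0, 0],
      ![0, -1, -1, 0, 0, 0],
      ![1, 0, 1, 0, 0, 1],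
      ![-1, 0, 0, -1, 0, -1],
      ![1, 1, 1, 1, 1, 1],
      ![0, 0, -1, 0, 0, 0]],
    ![![1, 0, 0, 1, -1, 0],
      ![-1, 0, 0, 0, 1, 1],
      ![0, 0, 0, 0, -1, -1],
      ![0, -1, 0, -1, 0, 0],
      ![0, 0, 0, 0, 1, 0],
      ![0, 0, -1, 0, -1, -1],
      ![0, 1, 1, 0, 1, 1]]]

/-- The circumcentres of the simplices `vert`, multiplied by `10⁹` and rounded. -/
def center : Fin 8 → Fin 6 → ℤ :=
  ![![-337579938, 278388181, 0, 395005965, 343691533, -395005965],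
    ![379266983, 301141726, 0, -370617629, 343691533, -629382371],
    ![-314826393, 59910657, 0, -370617629, 343691533, 370617629],
    ![-328432174, 347189940, 0, 395005965, 261302502, -312616934],
    ![286095397, 380307523, 0, -285690838, 258764743, -629382371],
    ![384897761, 247075498, 0, -312616934, 343691533, 312616934],
    ![-221654807, -19255139, -84926791, -370617629, 428618324, 370617629],
    ![-291726174, 330067172, 0, -428618324, 84926791, -312616934]]

/-- Integral isometries of `Q₆^{c1}` that occur in the description of adjacent simplices. -/
def isom : Fin 14 → Fin 6 → Fin 6 → ℤ :=
  ![![![1, 0, 0, 0, 0, 0],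
      ![0, 1, 0, 0, 0, 0],
      ![0, 0, 1, 0, 0, 0],
      ![0, 0, 0, 1, 0, 0],
      ![0, 0, 0, 0, 1, 0],
      ![0, 0, 0, 0, 0, 1]],
    ![![-1, 0, 0, -1, 1, 0],
      ![0, -1, 0, -1, -1, 0],
      ![0, 0, -1, 1, 0, 0],
      ![0, 0, 0, 1, 0, 0],
      ![0, 0, 0, 0, 1, 0],
      ![0, 0, 0, -1, -1, -1]],
    ![![-1, 0, 0, -1, 0, -1],
      ![0, -1, 0, 0, -1, 0],
      ![0, 0, -1, 0, 0, 0],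
      ![0, 0, 0, 0, 1, 1],
      ![0, 0, 0, -1, 0, -1],
      ![0, 0, 0, 1, 0, 0]],
    ![![-1, 0, 0, 0, 0, 0],
      ![0, -1, 0, -1, -1, -1],
      ![0, 0, -1, 0, 0, 0],
      ![0, 0, 0, 0, 1, 1],
      ![0, 0, 0, 1, 0, 1],
      ![0, 0, 0, 0, 0, -1]],
    ![![-1, 0, 0, 0, 1, 1],
      ![0, -1, 0, -1, -1, 0],
      ![0, 0, -1, 0, 0, -1],
      ![0, 0, 0, 0, 0, -1],
      ![0, 0, 0, 1, 1, 1],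
      ![0, 0, 0, 0, -1, 0]],
    ![![-1, 0, 0, 0, 0, 0],
      ![0, -1, 0, 0, 0, 1],
      ![0, 0, 0, -1, 0, -1],
      ![0, 0, -1, 0, 0, -1],
      ![0, 0, 0, 0, -1, -1],
      ![0, 0, 0, 0, 0, 1]],
    ![![-1, 0, 0, 0, 1, 0],
      ![0, -1, 0, 0, -1, 0],
      ![0, 0, 0, -1, 0, 0],
      ![0, 0, -1, 0, 0, 0],
      ![0, 0, 0, 0, 1, 0],
      ![0, 0, 0, 0, -1, -1]],
    ![![1, 0, 0, 0, -1, -1],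
      ![0, 1, 0, 0, 0, 0],
      ![0, 0, 1, 0, 1, 1],
      ![0, 0, 0, 1, 1, 1],
      ![0, 0, 0, 0, 0, -1],
      ![0, 0, 0, 0, -1, 0]],
    ![![1, 0, 0, 0, 0, 0],
      ![0, 1, 1, 0, 1, 1],
      ![0, 0, 0, 0, -1, -1],
      ![0, 0, 0, 1, 0, 0],
      ![0, 0, -1, 0, 0, -1],
      ![0, 0, 0, 0, 0, 1]],
    ![![1, 0, 0, 1, 0, 1],
      ![0, 1, 1, 1, 1, 1],
      ![0, 0, 0, -1, 0, -1],
      ![0, 0, 0, -1, -1, -1],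
      ![0, 0, -1, 0, 0, 0],
      ![0, 0, 0, 1, 0, 0]],
    ![![1, 0, 1, 0, 0, 0],
      ![0, 1, 0, 1, 1, 0],
      ![0, 0, 0, 0, -1, 0],
      ![0, 0, 0, 0, 0, 1],
      ![0, 0, 1, -1, 0, 0],
      ![0, 0, -1, 0, 0, -1]],
    ![![1, 0, 1, 1, 0, 1],
      ![0, 1, 0, 1, 1, 1],
      ![0, 0, 0, -1, 0, -1],
      ![0, 0, 0, -1, -1, -1],
      ![0, 0, 1, 0, 0, 0],
      ![0, 0, -1, 1, 0, 0]],
    ![![1, 0, 1, 0, -1, 0],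
      ![0, 1, 1, 0, 1, 0],
      ![0, 0, -1, 0, 0, 0],
      ![0, 0, -1, 1, 0, 0],
      ![0, 0, 0, 0, -1, 0],
      ![0, 0, 1, 0, 1, 1]],
    ![![1, 0, 1, 1, 0, 1],
      ![0, 1, 1, 0, 0, 0],
      ![0, 0, -1, 0, 0, 0],
      ![0, 0, -1, 0, 0, -1],
      ![0, 0, 0, 1, 1, 1],
      ![0, 0, 1, -1, 0, 0]]]

/-- If `nbr k i = (k', g, s)`, then the affine isometry `v ↦ isom g v + s` carries the simplex
adjacent to the simplex `k` along the facet opposite to its vertex `i` to the simplex `k'`. -/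
def nbr : Fin 8 → Fin 7 → Fin 8 × Fin 14 × (Fin 6 → ℤ) :=
  ![![(1, 0, ![1, 0, 0, -1, 0, 0]),
      (3, 13, ![0, 0, 0, 0, 0, 0]),
      (0, 7, ![0, 0, 0, 0, 0, 0]),
      (2, 0, ![0, 0, 0, -1, 0, 1]),
      (3, 0, ![0, 0, 0, 0, 0, 0]),
      (0, 5, ![-1, 1, 0, 0, 0, 0]),
      (0, 8, ![0, 0, 0, 0, 0, 0])],
    ![(4, 13, ![1, 0, 0, -1, 1, -1]),
      (0, 0, ![-1, 0, 0, 1, 0, 0]),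
      (1, 7, ![0, 0, 0, 0, 0, 0]),
      (5, 0, ![0, 0, 0, 0, 0, 1]),
      (4, 0, ![0, 0, 0, 0, 0, 0]),
      (2, 5, ![0, 1, -1, -1, 0, 1]),
      (1, 8, ![0, 0, 0, 0, 0, 0])],
    ![(0, 0, ![0, 0, 0, 1, 0, -1]),
      (4, 2, ![0, 1, 0, -1, 0, 0]),
      (6, 0, ![0, 0, 0, 0, 0, 0]),
      (5, 5, ![0, 0, 0, 0, 1, 0]),
      (4, 3, ![0, 1, 0, -1, 0, 0]),
      (1, 5, ![0, 0, 0, 0, 1, -1]),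
      (6, 13, ![0, 0, 0, 0, 0, 0])],
    ![(5, 10, ![1, -1, 0, 0, 1, 0]),
      (3, 13, ![0, 0, 0, 0, 0, 0]),
      (3, 7, ![0, 0, 0, 0, 0, 0]),
      (7, 0, ![0, 0, 0, -1, 0, 0]),
      (3, 12, ![0, 0, 0, 0, 0, 0]),
      (3, 8, ![0, 0, 0, 0, 0, 0]),
      (0, 0, ![0, 0, 0, 0, 0, 0])],
    ![(4, 13, ![1, 0, 0, -1, 1, -1]),
      (2, 3, ![0, 0, 0, 0, 1, 0]),
      (4, 1, ![0, 1, 0, 0, 0, -1]),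
      (7, 3, ![0, 0, 0, 0, 1, -1]),
      (1, 0, ![0, 0, 0, 0, 0, 0]),
      (6, 5, ![0, 1, -1, -1, 0, 1]),
      (4, 6, ![0, 1, 0, 0, 0, -1])],
    ![(1, 0, ![0, 0, 0, 0, 0, -1]),
      (7, 2, ![0, 1, 0, -1, 0, 0]),
      (5, 5, ![1, 0, 0, 0, 1, 0]),
      (3, 9, ![-1, 0, 0, 1, 0, 0]),
      (7, 3, ![0, 1, 0, -1, 0, 0]),
      (2, 5, ![0, 0, 0, 0, 1, 0]),
      (3, 11, ![-1, 0, 0, 1, 0, 0])],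
    ![(6, 7, ![1, 0, -1, -1, 1, 1]),
      (6, 4, ![-1, 0, 0, 0, 0, 1]),
      (2, 0, ![0, 0, 0, 0, 0, 0]),
      (7, 9, ![0, 0, 0, 0, 0, 0]),
      (6, 1, ![-1, 0, 0, 0, 0, 1]),
      (4, 5, ![0, 0, 0, 0, 1, -1]),
      (6, 13, ![0, 0, 0, 0, 0, 0])],
    ![(3, 0, ![0, 0, 0, 1, 0, 0]),
      (6, 10, ![0, 0, 0, 0, 0, 0]),
      (7, 7, ![0, 0, 0, 0, 0, 0]),
      (5, 3, ![0, 0, 0, 0, 1, 0]),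
      (7, 12, ![0, 0, 0, 0, 0, 0]),
      (7, 8, ![0, 0, 0, 0, 0, 0]),
      (4, 3, ![0, 0, 0, 0, 1, -1])]]

/-- The linear functional that interpolates the form at the vertices of the simplex `k`. -/
def interp (k : Fin 8) : Fin 6 → ℤ := fun j => ∑ i, formInt (vert k i) * grad k i j

/-- The power of an integral point with respect to the circumscribed sphere of the simplex `k`. -/
def powerInt (k : Fin 8) (v : Fin 6 → ℤ) : ℤ := formInt v - interp k ⬝ᵥ v

/-- The power `form (y - a) - R²` of a point with respect to the circumscribed sphere of the simplex
`k`, where `a` is the circumcentre and `R²` the squared circumradius. As the origin is a vertex,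
there is no constant term. -/
noncomputable def power (k : Fin 8) (y : Fin 6 → ℝ) : ℝ := form y - toVec (interp k) ⬝ᵥ y

/-- The barycentric coordinates with respect to the simplex `k`. -/
noncomputable def bary (k : Fin 8) (i : Fin 7) (y : Fin 6 → ℝ) : ℝ :=
  toVec (grad k i) ⬝ᵥ y + if i = 0 then 1 else 0

/-- The power of the vertex `i` of the simplex `k` with respect to the circumscribed sphere of the
adjacent simplex along the opposite facet. -/
def gap (k : Fin 8) (i : Fin 7) : ℤ :=
  powerInt (nbr k i).1 (Matrix.of (isom (nbr k i).2.1) *ᵥ vert k i + (nbr k i).2.2)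

theorem isom_isometry : ∀ g : Fin 14,
    (Matrix.of (isom g))ᵀ * gramInt * Matrix.of (isom g) = gramInt := by
  decide +kernel

/-- The local Delaunay condition: each vertex lies outside the circumscribed sphere of the simplex
adjacent along the opposite facet. -/
theorem gap_pos : ∀ k i, 0 < gap k i := by
  decide +kernel

/-- Comparison of the linear coefficients in `power_nbr`. -/
theorem nbr_linear : ∀ k i j, gap k i * grad k i j - interp k j =
    2 * ((Matrix.of (isom (nbr k i).2.1))ᵀ *ᵥ (gramInt *ᵥ (nbr k i).2.2)) j -
      ((Matrix.of (isom (nbr k i).2.1))ᵀ *ᵥ interp (nbr k i).1) j := by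
  decide +kernel

/-- Comparison of the constant terms in `power_nbr`. -/
theorem nbr_const : ∀ k i, gap k i * (if i = 0 then 1 else 0) = powerInt (nbr k i).1 (nbr k i).2.2 := by
  decide +kernel

theorem grad_sum : ∀ k j, ∑ i, grad k i j = 0 := by
  decide +kernel

theorem vert_zero : ∀ k, vert k 0 = 0 := by
  decide +kernel

theorem vert_grad : ∀ k j l, ∑ i, grad k i l * vert k i j = if j = l then 1 else 0 := by
  decide +kernel

/-- The squared circumradii are at most `3.6399223`, in the units `10¹⁴` of the form and `10⁻⁹` of
`center`. -/
theorem circumradius_le : ∀ k i, formInt (fun j => 10 ^ 9 * vert k i j - center k j) ≤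
    363992230000000 * 10 ^ 18 := by
  decide +kernel

theorem gramInt_det : gramInt.det = 10223174392767762252657403886371843805966226733986228099217705904682732250636265121568750 := by
  simp [gramInt, Matrix.det_succ_row_zero, Fin.sum_univ_succ, Fin.succAbove]

theorem gramInt_det_ne : gramInt.det ≠ 0 := by
  rw [gramInt_det]; norm_num

theorem gram_symm : gramIntᵀ = gramInt := by
  decide +kernel

/-! ### Casting to the reals -/

theorem toMat_mulVec (h : Matrix (Fin 6) (Fin 6) ℤ) (v : Fin 6 → ℤ) :
    toMat h *ᵥ toVec v = toVec (h *ᵥ v) := by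
  ext i
  exact (RingHom.map_mulVec (Int.castRingHom ℝ) h v i).symm

theorem toVec_dot (u v : Fin 6 → ℤ) : toVec u ⬝ᵥ toVec v = ((u ⬝ᵥ v : ℤ) : ℝ) := by
  simp [toVec, dotProduct]

theorem form_toVec (v : Fin 6 → ℤ) : form (toVec v) = (formInt v : ℝ) := by
  rw [form, formInt, toMat_mulVec, toVec_dot]

theorem toMat_mul (g h : Matrix (Fin 6) (Fin 6) ℤ) : toMat (g * h) = toMat g * toMat h :=
  Matrix.map_mul (f := Int.castRingHom ℝ)

theorem toMat_transpose (h : Matrix (Fin 6) (Fin 6) ℤ) : toMat hᵀ = (toMat h)ᵀ := rfl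

theorem toVec_add (u v : Fin 6 → ℤ) : toVec (u + v) = toVec u + toVec v := by
  ext i; simp [toVec]

/-! ### Isometries and the adjacency identity -/

/-- The integral matrices that preserve the form. -/
def IsIsom (h : Matrix (Fin 6) (Fin 6) ℤ) : Prop := hᵀ * gramInt * h = gramInt

theorem IsIsom.mul {g h : Matrix (Fin 6) (Fin 6) ℤ} (hg : IsIsom g) (hh : IsIsom h) :
    IsIsom (g * h) := by
  unfold IsIsom at *
  calc (g * h)ᵀ * gramInt * (g * h) = hᵀ * (gᵀ * gramInt * g) * h := by
        simp only [transpose_mul, Matrix.mul_assoc]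
    _ = gramInt := by rw [hg, hh]

theorem form_add (u v : Fin 6 → ℝ) :
    form (u + v) = form u + 2 * (u ⬝ᵥ (toMat gramInt *ᵥ v)) + form v := by
  have hs : v ⬝ᵥ (toMat gramInt *ᵥ u) = u ⬝ᵥ (toMat gramInt *ᵥ v) := by
    rw [dotProduct_mulVec, ← mulVec_transpose, ← toMat_transpose, gram_symm, dotProduct_comm]
  simp only [form, mulVec_add, add_dotProduct, dotProduct_add, hs]
  ring

theorem form_isom {h : Matrix (Fin 6) (Fin 6) ℤ} (hh : IsIsom h) (y : Fin 6 → ℝ) :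
    form (toMat h *ᵥ y) = form y := by
  have h1 : (toMat h)ᵀ * toMat gramInt * toMat h = toMat gramInt := by
    rw [← toMat_transpose, ← toMat_mul, ← toMat_mul, hh]
  calc form (toMat h *ᵥ y) = y ⬝ᵥ (((toMat h)ᵀ * toMat gramInt * toMat h) *ᵥ y) := by
        rw [form, ← mulVec_mulVec, ← mulVec_mulVec, dotProduct_mulVec y, vecMul_transpose]
    _ = form y := by rw [h1, form]

/-- The power functions of two adjacent simplices differ by a positive multiple of the barycentric
coordinate that vanishes on the common facet. -/
theorem power_nbr (k : Fin 8) (i : Fin 7) (y : Fin 6 → ℝ) :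
    power (nbr k i).1 (toMat (Matrix.of (isom (nbr k i).2.1)) *ᵥ y + toVec (nbr k i).2.2) =
      power k y + gap k i * bary k i y := by
  have hl := nbr_linear k i
  have hc := nbr_const k i
  have hi : IsIsom (Matrix.of (isom (nbr k i).2.1)) := isom_isometry _
  generalize gap k i = c at *
  generalize (nbr k i).1 = k' at *
  generalize (nbr k i).2.2 = s at *
  generalize Matrix.of (isom (nbr k i).2.1) = g at *
  have hlin : ∀ j, (c : ℝ) * toVec (grad k i) j - toVec (interp k) j =
      2 * ((toMat g)ᵀ *ᵥ (toMat gramInt *ᵥ toVec s)) j - ((toMat g)ᵀ *ᵥ toVec (interp k')) j := by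
    intro j
    rw [← toMat_transpose, toMat_mulVec, toMat_mulVec, toMat_mulVec]
    simp only [toVec]
    exact_mod_cast hl j
  have hlin' : (c : ℝ) • toVec (grad k i) - toVec (interp k) =
      (2 : ℝ) • ((toMat g)ᵀ *ᵥ (toMat gramInt *ᵥ toVec s)) - (toMat g)ᵀ *ᵥ toVec (interp k') := by
    ext j
    simpa using hlin j
  have hdot := congrArg (fun u => u ⬝ᵥ y) hlin'
  have hconst : (c : ℝ) * (if i = 0 then 1 else 0) =
      form (toVec s) - toVec (interp k') ⬝ᵥ toVec s := by
    rw [form_toVec, toVec_dot]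
    exact_mod_cast hc
  have e : ∀ u, ((toMat g)ᵀ *ᵥ u) ⬝ᵥ y = u ⬝ᵥ (toMat g *ᵥ y) := by
    intro u
    rw [mulVec_transpose, dotProduct_mulVec]
  simp only [sub_dotProduct, smul_dotProduct, smul_eq_mul, e] at hdot
  simp only [power, bary, form_add, form_isom hi, dotProduct_add, mul_add]
  rw [dotProduct_comm (toMat g *ᵥ y) (toMat gramInt *ᵥ toVec s)]
  linarith

/-! ### Coercivity and the existence of a minimal power -/

/-- The form of `E₆*` dominates half the sum of squares, and the three rays are semidefinite. -/
theorem form_ge (y : Fin 6 → ℝ) : 5 * 10 ^ 13 * ∑ i, y i ^ 2 ≤ form y := by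
  -- Completing squares in `QE6 - 1/2`, `R2`, `R3` and `R4` separately.
  have key : form y = 5 * 10 ^ 13 * ∑ i, y i ^ 2 +
      10 ^ 14 * (7/2 * (y 0 + (2/7) * y 1 + (4/7) * y 2 + (4/7) * y 3 + (-2/7) * y 4 + (2/7) * y 5) ^ 2 +
        45/14 * (y 1 + (4/9) * y 2 + (4/9) * y 3 + (32/45) * y 4 + (2/9) * y 5) ^ 2 +
        31/18 * (y 2 + (-14/31) * y 3 + (10/31) * y 4 + (20/31) * y 5) ^ 2 +
        85/62 * (y 3 + (10/17) * y 4 + (20/17) * y 5) ^ 2 +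
        159/170 * (y 4 + (80/159) * y 5) ^ 2 +
        65/318 * (y 5) ^ 2) +
      15266328480099 * (5 * (y 1 + (2/5) * y 2 + (2/5) * y 3 + (3/5) * y 4 + (1/5) * y 5) ^ 2 +
        16/5 * (y 2 + (-1/4) * y 3 + (1/4) * y 4 + (1/2) * y 5) ^ 2 +
        3 * (y 3 + (1/3) * y 4 + (2/3) * y 5) ^ 2 +
        8/3 * (y 4 + (1/2) * y 5) ^ 2 +
        2 * (y 5) ^ 2) +
      32884740614948 * (6 * (y 0 + (2/3) * y 1 + (2/3) * y 2 + (2/3) * y 3 + (1/3) * y 5) ^ 2 +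
        25/3 * (y 1 + (2/5) * y 2 + (2/5) * y 3 + (3/5) * y 4 + (1/5) * y 5) ^ 2 +
        4 * (y 2 + (-1/4) * y 3 + (1/4) * y 4 + (1/2) * y 5) ^ 2 +
        15/4 * (y 3 + (1/3) * y 4 + (2/3) * y 5) ^ 2 +
        10/3 * (y 4 + (1/2) * y 5) ^ 2 +
        5/2 * (y 5) ^ 2) +
      13827491241153 * (3 * (y 0 + (2/3) * y 1 + (2/3) * y 2 + (2/3) * y 3 + (1/3) * y 5) ^ 2 +
        5/3 * (y 1 + (2/5) * y 2 + (2/5) * y 3 + (3/5) * y 4 + (1/5) * y 5) ^ 2 +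
        12/5 * (y 2 + (-1/4) * y 3 + (1/4) * y 4 + (1/2) * y 5) ^ 2 +
        9/4 * (y 3 + (1/3) * y 4 + (2/3) * y 5) ^ 2 +
        2 * (y 4 + (1/2) * y 5) ^ 2 +
        3/2 * (y 5) ^ 2) := by
    simp [form, toMat, gramInt, dotProduct, mulVec, Fin.sum_univ_succ]
    ring
  rw [key, add_assoc, add_assoc, add_assoc]
  exact le_add_of_nonneg_right (by positivity)

theorem form_nonneg (y : Fin 6 → ℝ) : 0 ≤ form y :=
  le_trans (by positivity) (form_ge y)

theorem form_smul (c : ℝ) (y : Fin 6 → ℝ) : form (c • y) = c ^ 2 * form y := by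
  simp only [form, mulVec_smul, smul_dotProduct, dotProduct_smul, smul_eq_mul]
  ring

/-- Sublevel sets of the power functions are bounded. -/
theorem power_bounded (C : ℝ) : ∃ B : ℝ, ∀ k y, power k y ≤ C → ∀ i, |y i| ≤ B := by
  set S : ℝ := ∑ k, ∑ i, (interp k i : ℝ) ^ 2 with hS
  refine ⟨|C| + S + 1, fun k y hy i => ?_⟩
  have h1 := form_ge y
  have h2 : toVec (interp k) ⬝ᵥ y ≤ ∑ i, ((interp k i : ℝ) ^ 2 + y i ^ 2) :=
    Finset.sum_le_sum fun j _ => by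
      simp only [toVec]
      nlinarith [sq_nonneg ((interp k j : ℝ) - y j), sq_nonneg ((interp k j : ℝ)), sq_nonneg (y j)]
  have h3 : ∑ i, (interp k i : ℝ) ^ 2 ≤ S :=
    Finset.single_le_sum (f := fun k => ∑ i, (interp k i : ℝ) ^ 2)
      (fun _ _ => Finset.sum_nonneg fun _ _ => sq_nonneg _) (Finset.mem_univ k)
  have h4 : y i ^ 2 ≤ ∑ i, y i ^ 2 :=
    Finset.single_le_sum (f := fun i => y i ^ 2) (fun _ _ => sq_nonneg _) (Finset.mem_univ i)
  rw [Finset.sum_add_distrib] at h2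
  unfold power at hy
  have hS0 : 0 ≤ S := by positivity
  have h5 : y i ^ 2 ≤ |C| + S := by
    nlinarith [le_abs_self C, sq_nonneg (y i)]
  apply abs_le_of_sq_le_sq _ (by positivity)
  nlinarith [abs_nonneg C]

/-- There are finitely many isometries: the columns of an isometry have the norms `gramInt j j`. -/
theorem isom_entry_bound {h : Matrix (Fin 6) (Fin 6) ℤ} (hh : IsIsom h) (i j : Fin 6) :
    |h i j| ≤ 4 := by
  have h1 : formInt (h *ᵥ Pi.single j 1) = gramInt j j := by
    have h2 : form (toMat h *ᵥ toVec (Pi.single j 1)) = form (toVec (Pi.single j 1)) :=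
      form_isom hh _
    rw [toMat_mulVec, form_toVec, form_toVec] at h2
    have h3 : formInt (h *ᵥ Pi.single j 1) = formInt (Pi.single j 1) := by exact_mod_cast h2
    rw [h3]
    simp [formInt]
  have h4 := form_ge (toVec (h *ᵥ Pi.single j 1))
  rw [form_toVec, h1] at h4
  have h5 : (toVec (h *ᵥ Pi.single j 1) i) ^ 2 ≤ ∑ i, toVec (h *ᵥ Pi.single j 1) i ^ 2 :=
    Finset.single_le_sum (f := fun i => toVec (h *ᵥ Pi.single j 1) i ^ 2)
      (fun _ _ => sq_nonneg _) (Finset.mem_univ i)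
  have h6 : toVec (h *ᵥ Pi.single j 1) i = (h i j : ℝ) := by simp [toVec]
  have h7 : ∀ j, gramInt j j ≤ 9 * 10 ^ 14 := by decide +kernel
  have h8 : (gramInt j j : ℝ) ≤ 9 * 10 ^ 14 := by exact_mod_cast h7 j
  rw [h6] at h5
  have h9 : (h i j : ℝ) ^ 2 ≤ 18 := by nlinarith
  have h10 : h i j ^ 2 ≤ 18 := by exact_mod_cast h9
  rw [abs_le]
  constructor <;> nlinarith

theorem exists_min_power (x : Fin 6 → ℝ) : ∃ k h t, IsIsom h ∧ ∀ k' h' t', IsIsom h' →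
    power k (toMat h *ᵥ x + toVec t) ≤ power k' (toMat h' *ᵥ x + toVec t') := by
  let Φ : Fin 8 × (Fin 6 → Fin 6 → ℤ) × (Fin 6 → ℤ) → ℝ := fun p =>
    power p.1 (toMat (Matrix.of p.2.1) *ᵥ x + toVec p.2.2)
  have h_one : IsIsom 1 := by simp [IsIsom]
  obtain ⟨B, hB⟩ := power_bounded (Φ (0, Matrix.of.symm 1, 0))
  let D : ℝ := B + 4 * ∑ j, |x j|
  let S : Set (Fin 8 × (Fin 6 → Fin 6 → ℤ) × (Fin 6 → ℤ)) :=
    {p | IsIsom (Matrix.of p.2.1) ∧ Φ p ≤ Φ (0, Matrix.of.symm 1, 0)}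
  have hfin : S.Finite := by
    refine (Set.finite_univ.prod ((Set.finite_Icc (fun _ _ => -4) (fun _ _ => 4)).prod
      (Set.finite_Icc (fun _ => -⌈D⌉) (fun _ => ⌈D⌉)))).subset ?_
    rintro ⟨k, h, t⟩ ⟨hh, hp⟩
    have hE := fun i j => abs_le.1 (isom_entry_bound hh i j)
    refine ⟨Set.mem_univ _, ⟨fun i j => (hE i j).1, fun i j => (hE i j).2⟩, ?_⟩
    have ht : ∀ i, |(t i : ℝ)| ≤ D := by
      intro i
      have h1 := hB _ _ hp i
      have h2 : |(toMat (Matrix.of h) *ᵥ x) i| ≤ 4 * ∑ j, |x j| := by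
        rw [Finset.mul_sum, mulVec, dotProduct]
        refine (Finset.abs_sum_le_sum_abs (fun j => toMat (Matrix.of h) i j * x j) _).trans
          (Finset.sum_le_sum fun j _ => ?_)
        rw [abs_mul]
        refine mul_le_mul_of_nonneg_right ?_ (abs_nonneg _)
        have := isom_entry_bound hh i j
        have h3 : ((|h i j| : ℤ) : ℝ) ≤ 4 := by exact_mod_cast this
        simpa [toMat] using h3
      have h4 : (t i : ℝ) = (toMat (Matrix.of h) *ᵥ x + toVec t) i -
          (toMat (Matrix.of h) *ᵥ x) i := by simp [toVec]
      rw [h4]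
      exact (abs_sub _ _).trans (add_le_add h1 h2)
    have ht' : ∀ i, |t i| ≤ ⌈D⌉ := fun i => by
      have := (ht i).trans (Int.le_ceil D)
      exact_mod_cast this
    exact ⟨fun i => (abs_le.1 (ht' i)).1, fun i => (abs_le.1 (ht' i)).2⟩
  obtain ⟨⟨k, h, t⟩, ⟨hh, hp⟩, hmin⟩ :=
    S.exists_min_image Φ hfin ⟨(0, Matrix.of.symm 1, 0), h_one, le_rfl⟩
  refine ⟨k, Matrix.of h, t, hh, fun k' h' t' hh' => ?_⟩
  -- Triples outside the finite sublevel set `S` have larger power than the base triple.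
  by_cases hc : Φ (k', Matrix.of.symm h', t') ≤ Φ (0, Matrix.of.symm 1, 0)
  · exact hmin (k', Matrix.of.symm h', t') ⟨hh', hc⟩
  · exact hp.trans (not_le.1 hc).le

/-! ### Covering by balls -/

theorem bary_sum (k : Fin 8) (y : Fin 6 → ℝ) : ∑ i, bary k i y = 1 := by
  have h : ∑ i, toVec (grad k i) = 0 := by
    ext j
    have := grad_sum k j
    simp only [Finset.sum_apply, toVec, Pi.zero_apply]
    exact_mod_cast this
  simp [bary, Finset.sum_add_distrib, ← sum_dotProduct, h]

theorem bary_vert (k : Fin 8) (y : Fin 6 → ℝ) (j : Fin 6) :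
    ∑ i, bary k i y * (vert k i j : ℝ) = y j := by
  have h : ∀ l, ∑ i, (grad k i l : ℝ) * (vert k i j : ℝ) = if j = l then 1 else 0 := fun l => by
    have := vert_grad k j l
    exact_mod_cast this
  have h0 : (vert k 0 j : ℝ) = 0 := by simp [vert_zero]
  simp only [bary, add_mul, Finset.sum_add_distrib, dotProduct, Finset.sum_mul, toVec]
  rw [Finset.sum_comm]
  have h1 : ∀ l, ∑ i, (grad k i l : ℝ) * y l * (vert k i j : ℝ) = if j = l then y l else 0 := by
    intro l
    calc ∑ i, (grad k i l : ℝ) * y l * (vert k i j : ℝ)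
        = y l * ∑ i, (grad k i l : ℝ) * (vert k i j : ℝ) := by
          rw [Finset.mul_sum]
          exact Finset.sum_congr rfl fun _ _ => by ring
      _ = if j = l then y l else 0 := by rw [h]; split_ifs <;> simp
  simp [h1, h0]

/-- A point of one of the simplices is no farther from some vertex than the circumradius: the
weighted mean of its squared distances to the vertices is at most that of any other point. -/
theorem exists_vert_near (k : Fin 8) (y : Fin 6 → ℝ) (hy : ∀ i, 0 ≤ bary k i y) :
    ∃ i, form (y - toVec (vert k i)) ≤ 363992230000000 := by
  set a : Fin 6 → ℝ := fun j => (center k j : ℝ) / 10 ^ 9 with ha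
  have hR : ∀ i, form (toVec (vert k i) - a) ≤ 363992230000000 := by
    intro i
    have h1 : form (toVec fun j => 10 ^ 9 * vert k i j - center k j) ≤
        363992230000000 * 10 ^ 18 := by
      rw [form_toVec]
      exact_mod_cast circumradius_le k i
    have h2 : (toVec fun j => 10 ^ 9 * vert k i j - center k j) =
        (10 ^ 9 : ℝ) • (toVec (vert k i) - a) := by
      ext j
      simp [toVec, ha]
      ring
    rw [h2, form_smul] at h1
    linarith
  have hzero : ∑ i, bary k i y • (toVec (vert k i) - y) = 0 := by
    ext j
    have h1 := bary_vert k y j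
    have h2 := bary_sum k y
    simp only [Finset.sum_apply, Pi.smul_apply, Pi.sub_apply, smul_eq_mul, toVec, mul_sub,
      Finset.sum_sub_distrib, ← Finset.sum_mul, h1, h2, Pi.zero_apply]
    ring
  -- The identity of Lagrange and Huygens for the moment of inertia about `a`.
  have hmean : ∑ i, bary k i y * form (toVec (vert k i) - a) =
      ∑ i, bary k i y * form (y - toVec (vert k i)) + form (y - a) := by
    have h1 : ∀ i, bary k i y * form (toVec (vert k i) - a) =
        bary k i y * form (y - toVec (vert k i)) +
          2 * ((bary k i y • (toVec (vert k i) - y)) ⬝ᵥ (toMat gramInt *ᵥ (y - a))) +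
          bary k i y * form (y - a) := by
      intro i
      have h2 : toVec (vert k i) - a = (toVec (vert k i) - y) + (y - a) := by abel
      have h3 : y - toVec (vert k i) = (-1 : ℝ) • (toVec (vert k i) - y) := by
        rw [neg_one_smul, neg_sub]
      rw [h2, form_add, h3, form_smul, smul_dotProduct, smul_eq_mul]
      ring
    rw [Finset.sum_congr rfl fun i _ => h1 i, Finset.sum_add_distrib, Finset.sum_add_distrib,
      ← Finset.mul_sum, ← sum_dotProduct, hzero, zero_dotProduct, ← Finset.sum_mul, bary_sum]
    ring
  have hpos : 0 ≤ form (y - a) := form_nonneg _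
  by_contra! hcon
  have hle : ∑ i, bary k i y * form (toVec (vert k i) - a) ≤
      ∑ i, bary k i y * 363992230000000 :=
    Finset.sum_le_sum fun i _ => mul_le_mul_of_nonneg_left (hR i) (hy i)
  obtain ⟨i, hi⟩ : ∃ i, 0 < bary k i y := by
    by_contra! hall
    have := Finset.sum_nonpos fun i (_ : i ∈ Finset.univ) => hall i
    rw [bary_sum] at this
    linarith
  have hlt : ∑ i, bary k i y * 363992230000000 <
      ∑ i, bary k i y * form (y - toVec (vert k i)) :=
    Finset.sum_lt_sum (fun i _ => mul_le_mul_of_nonneg_left (hcon i).le (hy i))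
      ⟨i, Finset.mem_univ i, mul_lt_mul_of_pos_left (hcon i) hi⟩
  linarith

theorem exists_near (x : Fin 6 → ℝ) : ∃ v : Fin 6 → ℤ, form (x - toVec v) ≤ 363992230000000 := by
  obtain ⟨k, h, t, hh, hmin⟩ := exists_min_power x
  have hb : ∀ i, 0 ≤ bary k i (toMat h *ᵥ x + toVec t) := by
    intro i
    have h1 := power_nbr k i (toMat h *ᵥ x + toVec t)
    have hi : IsIsom (Matrix.of (isom (nbr k i).2.1)) := isom_isometry _
    have h2 := hmin (nbr k i).1 (Matrix.of (isom (nbr k i).2.1) * h)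
      (Matrix.of (isom (nbr k i).2.1) *ᵥ t + (nbr k i).2.2) (hi.mul hh)
    rw [toMat_mul, toVec_add, ← toMat_mulVec, ← mulVec_mulVec, ← add_assoc, ← mulVec_add, h1] at h2
    have h3 : (0 : ℝ) < gap k i := by exact_mod_cast gap_pos k i
    exact nonneg_of_mul_nonneg_right (by linarith) h3
  obtain ⟨i, hi⟩ := exists_vert_near k _ hb
  -- An integral isometry has determinant `±1`, hence an integral inverse.
  have hu : IsUnit h.det := by
    have h1 := congrArg Matrix.det hh
    rw [det_mul, det_mul, det_transpose] at h1
    have h2 : (h.det * h.det - 1) * gramInt.det = 0 := by linear_combination h1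
    rcases mul_eq_zero.1 h2 with h3 | h3
    · exact IsUnit.of_mul_eq_one h.det (by linarith)
    · exact absurd h3 gramInt_det_ne
  refine ⟨h⁻¹ *ᵥ (vert k i - t), ?_⟩
  rw [← form_isom hh, mulVec_sub, toMat_mulVec, mulVec_mulVec, Matrix.mul_nonsing_inv _ hu,
    one_mulVec]
  convert hi using 2
  ext j
  simp [toVec]
  ring

/-! ### The covering density -/

theorem matrix_eq : QE6 + (0.15266328480099 : ℝ) • R2 + (0.32884740614948 : ℝ) • R3 +
    (0.13827491241153 : ℝ) • R4 = (1 / 10 ^ 14 : ℝ) • toMat gramInt := by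
  ext i j
  fin_cases i <;> fin_cases j <;> simp [QE6, R2, R3, R4, toMat, gramInt] <;> norm_num

theorem toMat_gramInt_isSymm : (toMat gramInt).IsSymm := by
  rw [Matrix.IsSymm, ← toMat_transpose, gram_symm]

theorem toMat_gramInt_posDef : (toMat gramInt).PosDef := by
  refine Matrix.PosDef.of_dotProduct_mulVec_pos ?_ fun y hy => ?_
  · rw [Matrix.IsHermitian, conjTranspose_eq_transpose_of_trivial]
    exact toMat_gramInt_isSymm
  · rw [star_trivial]
    obtain ⟨i, hi⟩ := Function.ne_iff.1 hy
    have h1 : y i ^ 2 ≤ ∑ i, y i ^ 2 :=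
      Finset.single_le_sum (f := fun i => y i ^ 2) (fun _ _ => sq_nonneg _) (Finset.mem_univ i)
    have h2 : 0 < y i ^ 2 := by
      have : y i ≠ 0 := hi
      positivity
    have h3 := form_ge y
    change 0 < form y
    linarith

theorem inhomMin_nonneg : 0 ≤ inhomMin ((1 / 10 ^ 14 : ℝ) • toMat gramInt) := by
  refine Real.iSup_nonneg fun x => Real.iInf_nonneg fun v => ?_
  rw [smul_mulVec, dotProduct_smul, smul_eq_mul]
  exact mul_nonneg (by positivity) (form_nonneg _)

theorem inhomMin_le : inhomMin ((1 / 10 ^ 14 : ℝ) • toMat gramInt) ≤ 3.6399223 := by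
  refine ciSup_le fun x => ?_
  obtain ⟨v, hv⟩ := exists_near x
  refine (ciInf_le ⟨0, ?_⟩ v).trans ?_
  · rintro _ ⟨w, rfl⟩
    simp only [smul_mulVec, dotProduct_smul, smul_eq_mul]
    exact mul_nonneg (by positivity) (form_nonneg _)
  · rw [smul_mulVec, dotProduct_smul, smul_eq_mul]
    change 1 / 10 ^ 14 * form (x - toVec v) ≤ _
    norm_num at hv ⊢
    linarith

theorem det_eq : ((1 / 10 ^ 14 : ℝ) • toMat gramInt).det =
    10223174392767762252657403886371843805966226733986228099217705904682732250636265121568750 / 10 ^ 84 := by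
  have h : (toMat gramInt).det = ((gramInt.det : ℤ) : ℝ) :=
    ((Int.castRingHom ℝ).map_det gramInt).symm
  rw [det_smul, h, gramInt_det]
  norm_num

theorem unitBallVol_six : unitBallVol 6 = Real.pi ^ 3 / 6 := by
  rw [unitBallVol, InnerProductSpace.volume_ball_of_dim_even (k := 3) (by simp)]
  have : (0 : ℝ) ≤ Real.pi ^ 3 / 6 := by positivity
  simp [Nat.factorial, this]

theorem covDensity_lt : covDensity ((1 / 10 ^ 14 : ℝ) • toMat gramInt) < 2.464801 := by
  have h1 : Real.sqrt (inhomMin ((1 / 10 ^ 14 : ℝ) • toMat gramInt) ^ 6 /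
      ((1 / 10 ^ 14 : ℝ) • toMat gramInt).det) ≤ 0.47696165 := by
    rw [det_eq]
    refine Real.sqrt_le_iff.2 ⟨by norm_num, ?_⟩
    have h2 := pow_le_pow_left₀ inhomMin_nonneg inhomMin_le 6
    rw [div_le_iff₀ (by norm_num)]
    refine h2.trans ?_
    norm_num
  have h3 : Real.pi ^ 3 ≤ 3.14159265358979323847 ^ 3 :=
    pow_le_pow_left₀ Real.pi_pos.le Real.pi_lt_d20.le 3
  rw [covDensity, unitBallVol_six]
  calc _ ≤ 0.47696165 * (3.14159265358979323847 ^ 3 / 6 : ℝ) :=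
        mul_le_mul h1 (by linarith) (by positivity) (by norm_num)
    _ < _ := by norm_num

end CoveringQ6

/-- The quadratic form `Q₆^{c1} = Q_{E6*} + x·R₂ + y·R₃ + z·R₄`, with the exact rational
values `x = 0.15266328480099`, `y = 0.32884740614948`, `z = 0.13827491241153`, is symmetric
positive definite with covering density `Θ(Q) < 2.464801`. -/
theorem covDensity_Q6c1_lt :
    (QE6 + (0.15266328480099 : ℝ) • R2 + (0.32884740614948 : ℝ) • R3 +
        (0.13827491241153 : ℝ) • R4).IsSymm ∧
    (QE6 + (0.15266328480099 : ℝ) • R2 + (0.32884740614948 : ℝ) • R3 +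
        (0.13827491241153 : ℝ) • R4).PosDef ∧
    covDensity (QE6 + (0.15266328480099 : ℝ) • R2 + (0.32884740614948 : ℝ) • R3 +
        (0.13827491241153 : ℝ) • R4) < 2.464801 := by
  rw [CoveringQ6.matrix_eq]
  exact ⟨CoveringQ6.toMat_gramInt_isSymm.smul _,
    CoveringQ6.toMat_gramInt_posDef.smul (by positivity), CoveringQ6.covDensity_lt⟩
end

section
/- There exists a real symmetric positive definite 6×6 matrix Q with Θ(Q) < Θ(Q_{A6*}), where Q_{A6*} = 7·I_6 − J_6 is Voronoi's principal form of the first type in dimension 6 (I_6 the identity matrix and J_6 the all-ones matrix), the form associated to the lattice A_6^*. In fact, the matrix Q = Q_{E6*} + x·R_2 + y·R_3 + z·R_4 with the exact rational values x = 0.15266328480099, y = 0.32884740614948, z = 0.13827491241153 satisfies Θ(Q) < Θ(Q_{A6*}). Hence the lattice A_6^* does not give the least dense 6-dimensional lattice covering. -/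
/-!
Let `Q` be the explicit form. The determinants are `det Q > 10200` and `det QA6 = 7 ^ 5`, and the
ball volume is a common factor, so `Θ(Q) < Θ(QA6)` follows from `μ(Q) ≤ 3.67` and `4 ≤ μ(QA6)`,
since `3.67 ^ 6 / 10200 < 4 ^ 6 / 7 ^ 5`.

The bound `4 ≤ μ(QA6)` comes from the deep hole `(1, …, 6) / 7` (`QA6_deep_hole`): its squared
distance to a lattice point is `1 / 7` times a sum of seven integer squares which represent all
residues modulo `7`.

For `μ(Q) ≤ 3.67`, note that `R₂`, `R₃`, `R₄` are positive semidefinite, so `μ` only grows when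
their coefficients are rounded up to `0.16`, `0.33`, `0.14`; `100` times the rounded form is the
integral form `intGram`. Up to isometry its Delaunay triangulation consists of eight simplices, and
nothing is needed about them beyond their tables of squared edge lengths (`IsCell`), their
circumradii (`radius_le`) and the simplices across their facets (`edge_keep`, `edge_new`,
`apex_outside`). No list of translates, no symmetry group and no theory of Delaunay decompositions
enters, because a simplex that contains a given point is found by walking: write the point as an
affine combination of the vertices of any cell, and as long as some coefficient is negative, cross
the corresponding facet (`IsCell.pivot`). Each step raises the value at the point of the affine
function that interpolates the form on the vertices of the current cell. This value is bounded
above, as the circumradii are, and for a point with rational coordinates it moves in a discrete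
set, so the walk ends in a cell that contains the point. There a weighted average of the squared
distances to the vertices is at most the squared circumradius, and hence so is one of them
(`IsCell.exists_close`). Real points are approximated by points of `(1 / 10000) ℤ⁶`
(`exists_close_real`).
-/

open Matrix MeasureTheory

/-- Voronoi's principal form of the first type in dimension 6, `Q_{A6*} = 7·I₆ − J₆`,
associated to the lattice `A₆*`. -/
def QA6 : Matrix (Fin 6) (Fin 6) ℝ :=
  (7 : ℝ) • (1 : Matrix (Fin 6) (Fin 6) ℝ) - Matrix.of fun _ _ => (1 : ℝ)

/-! ### The Delaunay simplices of the integral form -/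

/-- `edgeSq k m n` is the squared length, with respect to `intGram`, of the edge joining the
vertices `m` and `n` of a Delaunay simplex of the `k`-th isometry class. -/
def edgeSq : Fin 8 → Fin 7 → Fin 7 → ℤ := ![
  ![![0, 767, 753, 784, 704, 767, 1193],
    ![767, 0, 704, 767, 753, 1142, 784],
    ![753, 704, 0, 1047, 1005, 704, 640],
    ![784, 767, 1047, 0, 1194, 767, 767],
    ![704, 753, 1005, 1194, 0, 753, 885],
    ![767, 1142, 704, 767, 753, 0, 784],
    ![1193, 784, 640, 767, 885, 784, 0]],
  ![![0, 767, 753, 784, 784, 885, 1193],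
    ![767, 0, 704, 767, 767, 1194, 784],
    ![753, 704, 0, 1047, 1047, 784, 640],
    ![784, 767, 1047, 0, 1142, 753, 767],
    ![784, 767, 1047, 1142, 0, 753, 767],
    ![885, 1194, 784, 753, 753, 0, 704],
    ![1193, 784, 640, 767, 767, 704, 0]],
  ![![0, 767, 753, 784, 767, 1193, 784],
    ![767, 0, 704, 767, 1142, 784, 767],
    ![753, 704, 0, 1047, 704, 640, 1047],
    ![784, 767, 1047, 0, 767, 767, 1142],
    ![767, 1142, 704, 767, 0, 784, 767],
    ![1193, 784, 640, 767, 784, 0, 767],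
    ![784, 767, 1047, 1142, 767, 767, 0]],
  ![![0, 767, 753, 704, 1142, 767, 784],
    ![767, 0, 704, 753, 767, 1142, 767],
    ![753, 704, 0, 1005, 753, 704, 1047],
    ![704, 753, 1005, 0, 704, 753, 1194],
    ![1142, 767, 753, 704, 0, 767, 784],
    ![767, 1142, 704, 753, 767, 0, 767],
    ![784, 767, 1047, 1194, 784, 767, 0]],
  ![![0, 767, 753, 704, 1194, 767, 784],
    ![767, 0, 704, 1047, 753, 1142, 767],
    ![753, 704, 0, 767, 767, 704, 1047],
    ![704, 1047, 767, 0, 784, 1047, 640],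
    ![1194, 753, 767, 784, 0, 753, 704],
    ![767, 1142, 704, 1047, 753, 0, 767],
    ![784, 767, 1047, 640, 704, 767, 0]],
  ![![0, 767, 753, 784, 1194, 885, 784],
    ![767, 0, 704, 767, 753, 1194, 767],
    ![753, 704, 0, 1047, 767, 784, 1047],
    ![784, 767, 1047, 0, 704, 753, 1142],
    ![1194, 753, 767, 704, 0, 767, 704],
    ![885, 1194, 784, 753, 767, 0, 753],
    ![784, 767, 1047, 1142, 704, 753, 0]],
  ![![0, 767, 753, 704, 1142, 767, 784],
    ![767, 0, 704, 1047, 767, 1142, 767],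
    ![753, 704, 0, 767, 753, 704, 1047],
    ![704, 1047, 767, 0, 704, 1047, 640],
    ![1142, 767, 753, 704, 0, 767, 784],
    ![767, 1142, 704, 1047, 767, 0, 767],
    ![784, 767, 1047, 640, 784, 767, 0]],
  ![![0, 767, 753, 784, 1194, 767, 784],
    ![767, 0, 704, 767, 753, 1142, 767],
    ![753, 704, 0, 1047, 767, 704, 1047],
    ![784, 767, 1047, 0, 704, 767, 1142],
    ![1194, 753, 767, 704, 0, 753, 704],
    ![767, 1142, 704, 767, 753, 0, 767],
    ![784, 767, 1047, 1142, 704, 767, 0]]]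

/-- The barycentric coordinates of the circumcentre of a simplex of class `k`, scaled to integers.
-/
def centre : Fin 8 → Fin 7 → ℤ := ![
  ![468872, 299280, 1102241, 1486424, 1465968, 299280, 574231],
  ![581472, 488824, 1105549, 1296880, 1296880, 565768, 360923],
  ![548544, 378952, 1167695, 1406752, 378952, 408649, 1406752],
  ![3402903, 2992800, 12849620, 15171877, 3402903, 2992800, 16150057],
  ![488824, 1571320, 54768, 1412131, 543592, 1571320, 54341],
  ![5877697, 4888240, 11372640, 12584403, 3676477, 5979100, 12584403],
  ![13832, 56072, 3024, 48937, 13832, 56072, 4655],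
  ![5071157, 3468100, 12792780, 14481803, 3199217, 3468100, 14481803]]

/-- The class of the simplex that shares with a simplex of class `k` the facet opposite vertex `i`.
-/
def nbrClass : Fin 8 → Fin 7 → Fin 8 := ![
  ![0, 0, 1, 0, 2, 0, 3],
  ![4, 1, 0, 1, 1, 2, 5],
  ![6, 1, 2, 0, 1, 7, 0],
  ![0, 3, 7, 6, 0, 3, 3],
  ![4, 4, 1, 7, 6, 4, 5],
  ![4, 5, 5, 5, 1, 7, 5],
  ![4, 6, 2, 3, 4, 6, 7],
  ![6, 5, 3, 4, 2, 5, 4]]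

/-- How the vertices of the simplex across the facet opposite `i` are numbered: its vertex `m` is
the vertex `nbrPerm k i m` of the original simplex, where `i` itself stands for the new vertex. -/
def nbrPerm : Fin 8 → Fin 7 → Fin 7 → Fin 7 := ![
  ![![0, 5, 2, 3, 4, 1, 6],
    ![0, 5, 2, 3, 4, 1, 6],
    ![6, 3, 2, 5, 1, 4, 0],
    ![0, 5, 2, 3, 4, 1, 6],
    ![0, 5, 2, 3, 1, 6, 4],
    ![0, 5, 2, 3, 4, 1, 6],
    ![6, 5, 2, 4, 0, 1, 3]],
  ![![1, 3, 0, 2, 5, 4, 6],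
    ![0, 1, 2, 3, 4, 5, 6],
    ![6, 3, 2, 1, 5, 4, 0],
    ![0, 1, 2, 3, 4, 5, 6],
    ![0, 1, 2, 4, 3, 5, 6],
    ![0, 5, 2, 4, 1, 6, 3],
    ![0, 1, 2, 4, 6, 5, 3]],
  ![![1, 6, 0, 2, 4, 3, 5],
    ![0, 4, 2, 6, 3, 1, 5],
    ![5, 6, 2, 1, 3, 0, 4],
    ![0, 4, 2, 6, 3, 1, 5],
    ![0, 1, 2, 6, 3, 4, 5],
    ![0, 4, 2, 3, 5, 1, 6],
    ![0, 4, 2, 3, 6, 1, 5]],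
  ![![4, 5, 2, 6, 3, 1, 0],
    ![4, 5, 2, 3, 0, 1, 6],
    ![6, 5, 2, 4, 3, 1, 0],
    ![4, 5, 2, 3, 0, 1, 6],
    ![0, 5, 2, 6, 3, 1, 4],
    ![4, 5, 2, 3, 0, 1, 6],
    ![1, 0, 3, 2, 5, 4, 6]],
  ![![0, 5, 2, 3, 4, 1, 6],
    ![4, 1, 5, 6, 0, 2, 3],
    ![2, 0, 3, 5, 1, 4, 6],
    ![0, 5, 2, 3, 4, 1, 6],
    ![4, 5, 2, 3, 0, 1, 6],
    ![4, 5, 1, 6, 0, 2, 3],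
    ![6, 0, 3, 1, 2, 4, 5]],
  ![![1, 6, 4, 2, 5, 3, 0],
    ![0, 1, 2, 3, 4, 5, 6],
    ![0, 1, 2, 3, 4, 5, 6],
    ![5, 4, 6, 2, 1, 0, 3],
    ![0, 1, 2, 6, 3, 5, 4],
    ![0, 5, 2, 3, 4, 1, 6],
    ![5, 4, 3, 2, 1, 0, 6]],
  ![![4, 5, 2, 3, 0, 1, 6],
    ![4, 5, 2, 3, 0, 1, 6],
    ![2, 0, 3, 1, 4, 6, 5],
    ![4, 5, 2, 3, 0, 1, 6],
    ![0, 5, 2, 3, 4, 1, 6],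
    ![4, 5, 2, 3, 0, 1, 6],
    ![6, 0, 3, 1, 2, 4, 5]],
  ![![1, 6, 4, 2, 5, 3, 0],
    ![0, 5, 2, 3, 4, 1, 6],
    ![3, 5, 2, 4, 6, 1, 0],
    ![0, 5, 2, 3, 4, 1, 6],
    ![0, 5, 2, 3, 1, 4, 6],
    ![0, 1, 2, 3, 4, 5, 6],
    ![0, 5, 2, 6, 4, 1, 3]]]

/-- The barycentric coordinates, relative to a simplex of class `k`, of the new vertex of the
simplex across the facet opposite `i`. -/
def apex : Fin 8 → Fin 7 → Fin 7 → ℤ := ![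
  ![![-1, 0, 1, 1, 1, 0, -1],
    ![0, -1, 1, 1, 1, -1, 0],
    ![1, 0, -1, 0, 0, 0, 1],
    ![1, 1, -1, -1, -1, 1, 1],
    ![1, 1, -1, -1, -1, 1, 1],
    ![0, -1, 1, 1, 1, -1, 0],
    ![-1, 0, 1, 1, 1, 0, -1]],
  ![![-1, 0, 1, 1, 1, 0, -1],
    ![0, -1, 1, 1, 1, -1, 0],
    ![1, 0, -1, 0, 0, 0, 1],
    ![1, 1, -1, -1, -1, 1, 1],
    ![1, 1, -1, -1, -1, 1, 1],
    ![0, -1, 1, 1, 1, -1, 0],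
    ![-1, 0, 1, 1, 1, 0, -1]],
  ![![-1, 0, 1, 1, 0, -1, 1],
    ![0, -1, 1, 1, -1, 0, 1],
    ![1, 0, -1, 0, 0, 1, 0],
    ![1, 1, -1, -1, 1, 1, -1],
    ![0, -1, 1, 1, -1, 0, 1],
    ![-1, 0, 1, 1, 0, -1, 1],
    ![1, 1, -1, -1, 1, 1, -1]],
  ![![-1, 0, 1, 1, -1, 0, 1],
    ![0, -1, 1, 1, 0, -1, 1],
    ![0, 1, -1, 0, 0, 1, 0],
    ![1, 0, 0, -1, 1, 0, 0],
    ![-1, 0, 1, 1, -1, 0, 1],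
    ![0, -1, 1, 1, 0, -1, 1],
    ![1, 1, -1, -1, 1, 1, -1]],
  ![![-1, 1, 0, 1, -1, 1, 0],
    ![1, -1, 0, 0, 1, 0, 0],
    ![0, 1, -1, 1, 0, 1, -1],
    ![1, 0, 0, -1, 1, 0, 0],
    ![-1, 1, 0, 1, -1, 1, 0],
    ![1, 0, 0, 0, 1, -1, 0],
    ![0, 1, -1, 1, 0, 1, -1]],
  ![![-1, 0, 1, 1, -1, 0, 1],
    ![0, -1, 1, 1, 0, -1, 1],
    ![1, 1, -1, -1, 1, 1, -1],
    ![1, 1, -1, -1, 1, 1, -1],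
    ![-1, 0, 1, 1, -1, 0, 1],
    ![0, -1, 1, 1, 0, -1, 1],
    ![1, 1, -1, -1, 1, 1, -1]],
  ![![-1, 1, 0, 1, -1, 1, 0],
    ![1, -1, 1, -1, 1, -1, 1],
    ![0, 1, -1, 1, 0, 1, -1],
    ![1, 0, 0, -1, 1, 0, 0],
    ![-1, 1, 0, 1, -1, 1, 0],
    ![1, -1, 1, -1, 1, -1, 1],
    ![0, 1, -1, 1, 0, 1, -1]],
  ![![-1, 0, 1, 1, -1, 0, 1],
    ![0, -1, 1, 1, 0, -1, 1],
    ![0, 1, -1, 0, 0, 1, 0],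
    ![1, 0, 0, -1, 1, 0, 0],
    ![-1, 0, 1, 1, -1, 0, 1],
    ![0, -1, 1, 1, 0, -1, 1],
    ![1, 0, 0, 0, 1, 0, -1]]]

theorem nbrPerm_injective : ∀ k i, Function.Injective (nbrPerm k i) := by
  decide +kernel

/-- The coefficient `-1` says that the two simplices sharing the facet have the same volume and lie
on different sides of it. -/
theorem apex_sum : ∀ k i, ∑ j, apex k i j = 1 ∧ apex k i i = -1 := by
  decide +kernel

/-- The lengths in the shared facet agree. -/
theorem edge_keep : ∀ k i m n, nbrPerm k i m ≠ i → nbrPerm k i n ≠ i →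
    edgeSq (nbrClass k i) m n = edgeSq k (nbrPerm k i m) (nbrPerm k i n) := by
  decide +kernel

/-- The edges at the new vertex have the tabulated lengths. For a point `w` with barycentric
coordinates `b`, the squared distance to the vertex `n` is
`∑ j, b j * d j n - (1 / 2) * ∑ j, ∑ l, b j * b l * d j l`, where `d` is `edgeSq k`. -/
theorem edge_new : ∀ k i m n, nbrPerm k i m = i → nbrPerm k i n ≠ i →
    2 * edgeSq (nbrClass k i) m n =
    2 * ∑ j, apex k i j * edgeSq k j (nbrPerm k i n) -
      ∑ j, ∑ l, apex k i j * apex k i l * edgeSq k j l := by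
  decide +kernel

theorem edge_symm : ∀ k m n, edgeSq k m n = edgeSq k n m := by
  decide +kernel

theorem edge_self : ∀ k m, edgeSq k m m = 0 := by
  decide +kernel

/-- The new vertex lies outside the circumsphere: minus one half of this double sum is its power
with respect to the sphere. -/
theorem apex_outside : ∀ k i, ∑ j, ∑ l, apex k i j * apex k i l * edgeSq k j l < 0 := by
  decide +kernel

theorem centre_pos : ∀ k, 0 < ∑ j, centre k j := by
  decide +kernel

/-- The point with weights `centre k` is equidistant from the vertices. -/
theorem centre_eq : ∀ k m n,
    ∑ j, centre k j * edgeSq k j m = ∑ j, centre k j * edgeSq k j n := by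
  decide +kernel

/-- The average with weights `centre k` of the squared distances to the vertex `0` is twice the
squared circumradius, which is therefore at most `366.3`. -/
theorem radius_le : ∀ k, 10 * ∑ j, centre k j * edgeSq k j 0 ≤ 7326 * ∑ j, centre k j := by
  decide +kernel

/-! ### Walking through the triangulation -/

/-- The form at differences of the `T j`, summed against weights, in terms of the form at the `T j`
and at the two weighted sums. -/
theorem dist_sum {E : Type*} [AddCommGroup E] (B : LinearMap.BilinForm ℤ E) (hB : B.IsSymm)
    (T : Fin 7 → E) (c d : Fin 7 → ℤ) :
    ∑ j, ∑ l, c j * d l * B (T j - T l) (T j - T l) =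
      (∑ l, d l) * ∑ j, c j * B (T j) (T j) + (∑ j, c j) * ∑ l, d l * B (T l) (T l)
        - 2 * B (∑ j, c j • T j) (∑ l, d l • T l) := by
  have h : ∀ j l, c j * d l * B (T j - T l) (T j - T l) =
      d l * (c j * B (T j) (T j)) + c j * (d l * B (T l) (T l))
        - 2 * (d l * (c j * B (T j) (T l))) := by
    intro j l
    have := hB.eq (T j) (T l)
    simp only [map_sub, LinearMap.sub_apply] at *
    rw [← this]; ring
  simp only [h, Finset.sum_sub_distrib, Finset.sum_add_distrib, ← Finset.mul_sum,
    ← Finset.sum_mul, map_sum, LinearMap.sum_apply, map_smul, LinearMap.smul_apply, smul_eq_mul]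
  simp only [Finset.mul_sum]
  rw [Finset.sum_comm (f := fun x i => 2 * (d i * (c x * (B (T x)) (T i))))]

/-- The points `T 0, …, T 6` have the mutual squared distances of a Delaunay simplex of
class `k`. -/
def IsCell {E : Type*} [AddCommGroup E] (B : LinearMap.BilinForm ℤ E) (k : Fin 8)
    (T : Fin 7 → E) : Prop :=
  ∀ m n, B (T m - T n) (T m - T n) = edgeSq k m n

theorem IsCell.dist_sum {E : Type*} [AddCommGroup E] {B : LinearMap.BilinForm ℤ E}
    (hB : B.IsSymm) {k : Fin 8} {T : Fin 7 → E} (hT : IsCell B k T) (c d : Fin 7 → ℤ) :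
    ∑ j, ∑ l, c j * d l * edgeSq k j l =
      (∑ l, d l) * ∑ j, c j * B (T j) (T j) + (∑ j, c j) * ∑ l, d l * B (T l) (T l)
        - 2 * B (∑ j, c j • T j) (∑ l, d l • T l) := by
  rw [← _root_.dist_sum B hB]
  simp only [hT _ _]

/-- The left side is `10` times `2 p² (R² - |y - c|²)`, where `p = ∑ j, a j`, the point `y` has
barycentric coordinates `a / p`, and `c` and `R` are the circumcentre and the circumradius.
Positivity of the form gives the bound `20 p² R²`, and `radius_le` the constant. -/
theorem IsCell.power_le {E : Type*} [AddCommGroup E] {B : LinearMap.BilinForm ℤ E}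
    (hB : B.IsSymm) (hpos : ∀ u, 0 ≤ B u u) {k : Fin 8} {T : Fin 7 → E} (hT : IsCell B k T)
    (a : Fin 7 → ℤ) :
    10 * ∑ j, ∑ l, a j * a l * edgeSq k j l ≤ 7326 * (∑ j, a j) ^ 2 := by
  set g := ∑ j, centre k j with hg
  set p := ∑ j, a j with hp
  set s := ∑ j, centre k j * edgeSq k j 0 with hs
  have hgpos : 0 < g := centre_pos k
  have hrad : 10 * s ≤ 7326 * g := radius_le k
  have hcol : ∀ m, ∑ j, centre k j * edgeSq k j m = s := fun m => centre_eq k m 0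
  have hcol' : ∀ m, ∑ j, centre k j * edgeSq k m j = s := fun m => by
    simp only [edge_symm k m, hcol]
  have hz : ∑ j, (g * a j - p * centre k j) = 0 := by
    rw [Finset.sum_sub_distrib, ← Finset.mul_sum, ← Finset.mul_sum, ← hg, ← hp]; ring
  have key := hT.dist_sum hB (fun j => g * a j - p * centre k j) (fun j => g * a j - p * centre k j)
  rw [hz] at key
  have hneg := hpos (∑ j, (g * a j - p * centre k j) • T j)
  have hexp : ∑ j, ∑ l, (g * a j - p * centre k j) * (g * a l - p * centre k l) * edgeSq k j l =
      g ^ 2 * (∑ j, ∑ l, a j * a l * edgeSq k j l) - g * p ^ 2 * s := by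
    have e : ∀ j l, (g * a j - p * centre k j) * (g * a l - p * centre k l) * edgeSq k j l =
        g ^ 2 * (a j * a l * edgeSq k j l) - g * p * (a j * (centre k l * edgeSq k j l))
          - g * p * (a l * (centre k j * edgeSq k j l))
          + p ^ 2 * (centre k l * (centre k j * edgeSq k j l)) := fun j l => by ring
    simp only [e, Finset.sum_sub_distrib, Finset.sum_add_distrib, ← Finset.mul_sum, hcol']
    rw [Finset.sum_comm (f := fun j l => a l * (centre k j * edgeSq k j l)),
      Finset.sum_comm (f := fun j l => centre k l * (centre k j * edgeSq k j l))]
    simp only [← Finset.mul_sum, hcol, ← Finset.sum_mul, ← hg, ← hp]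
    ring
  have h1 : g * (∑ j, ∑ l, a j * a l * edgeSq k j l) ≤ p ^ 2 * s := by
    refine le_of_mul_le_mul_left ?_ hgpos
    nlinarith
  refine le_of_mul_le_mul_left ?_ hgpos
  nlinarith [sq_nonneg p]

/-- Replacing vertex `i` by a point `w` with coordinates `b`, where `b i = -1`, and expressing the
same point in the new vertices changes a weighted sum of values of `f` by `a i` times the error of
the interpolation of `f` at `w`. -/
theorem sum_pivot {E M : Type*} [AddCommGroup M] (T : Fin 7 → E) (f : E → M)
    (a b : Fin 7 → ℤ) (i : Fin 7) (w : E) (hb : b i = -1) :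
    ∑ j, (a j + a i * (b j - if j = i then 1 else 0)) • f (Function.update T i w j) =
      ∑ j, a j • f (T j) + a i • (∑ j, b j • f (T j) - f w) := by
  have h : ∀ j, (a j + a i * (b j - if j = i then 1 else 0)) • f (Function.update T i w j) =
      a j • f (T j) + a i • (b j • f (T j)) + if j = i then -(a i • f w) else 0 := by
    intro j
    by_cases hj : j = i
    · subst hj
      simp only [if_true, Function.update_self, hb]
      module
    · simp only [if_neg hj, Function.update_of_ne hj]
      module
  simp only [h, Finset.sum_add_distrib, ← Finset.smul_sum, Finset.sum_ite_eq', Finset.mem_univ,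
    if_true]
  module

/-- If the coordinate `a i` of a point is negative, then the point can be rewritten in terms of the
cell across the facet opposite `i`, and the interpolated value of the form there increases strictly,
since the new vertex is outside the circumsphere. -/
theorem IsCell.pivot {E : Type*} [AddCommGroup E] {B : LinearMap.BilinForm ℤ E}
    (hB : B.IsSymm) {k : Fin 8} {T : Fin 7 → E} (hT : IsCell B k T)
    (a : Fin 7 → ℤ) {i : Fin 7} (hi : a i < 0) :
    ∃ (k' : Fin 8) (T' : Fin 7 → E) (a' : Fin 7 → ℤ), IsCell B k' T' ∧
      ∑ j, a' j = ∑ j, a j ∧ ∑ j, a' j • T' j = ∑ j, a j • T j ∧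
      ∑ j, a j * B (T j) (T j) < ∑ j, a' j * B (T' j) (T' j) := by
  set b := apex k i with hbdef
  obtain ⟨hb1, hbi⟩ := apex_sum k i
  rw [← hbdef] at hb1 hbi
  set w := ∑ j, b j • T j with hw
  set σ : Fin 7 ≃ Fin 7 := Equiv.ofBijective (nbrPerm k i)
    (Finite.injective_iff_bijective.1 (nbrPerm_injective k i)) with hσ
  have hσa : ∀ m, σ m = nbrPerm k i m := fun m => rfl
  set T₀ := Function.update T i w with hT₀
  set a₀ : Fin 7 → ℤ := fun j => a j + a i * (b j - if j = i then 1 else 0) with ha₀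
  have hnew : ∀ n, 2 * B (w - T n) (w - T n) =
      2 * ∑ j, b j * edgeSq k j n - ∑ j, ∑ l, b j * b l * edgeSq k j l := by
    intro n
    have h1 := hT.dist_sum hB b b
    have h2 := hT.dist_sum hB b (Pi.single n 1)
    simp only [Pi.single_apply, mul_ite, mul_one, mul_zero, ite_mul, zero_mul, one_mul, ite_smul,
      zero_smul, one_smul, Finset.sum_ite_eq', Finset.mem_univ, if_true, hb1, ← hw] at h1 h2
    rw [h1, h2]
    have := hB.eq w (T n)
    simp only [map_sub, LinearMap.sub_apply] at *
    rw [← this]; ring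
  refine ⟨nbrClass k i, fun m => T₀ (σ m), fun m => a₀ (σ m), ?_, ?_, ?_, ?_⟩
  · -- The vertices of the new cell have the tabulated distances.
    intro m n
    simp only [hσa, hT₀]
    by_cases hm : nbrPerm k i m = i <;> by_cases hn : nbrPerm k i n = i
    · have : m = n := nbrPerm_injective k i (hm.trans hn.symm)
      simp [this, edge_self]
    · rw [hm, Function.update_self, Function.update_of_ne hn]
      have := edge_new k i m n hm hn
      have := hnew (nbrPerm k i n)
      lia
    · rw [hn, Function.update_self, Function.update_of_ne hm, edge_symm]
      have h1 := edge_new k i n m hn hm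
      have h2 := hnew (nbrPerm k i m)
      have h3 : B (T (nbrPerm k i m) - w) (T (nbrPerm k i m) - w) =
          B (w - T (nbrPerm k i m)) (w - T (nbrPerm k i m)) := by
        rw [← neg_sub w]; simp only [map_neg, LinearMap.neg_apply, neg_neg]
      lia
    · rw [Function.update_of_ne hn, Function.update_of_ne hm, hT, edge_keep k i m n hm hn]
  · rw [Equiv.sum_comp σ a₀]
    simp only [ha₀, Finset.sum_add_distrib, ← Finset.mul_sum, Finset.sum_sub_distrib, hb1]
    simp
  · rw [Equiv.sum_comp σ (fun j => a₀ j • T₀ j)]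
    have := sum_pivot T id a b i w hbi
    simp only [id] at this
    rw [ha₀, hT₀, this, ← hw]; simp
  · rw [Equiv.sum_comp σ (fun j => a₀ j * B (T₀ j) (T₀ j))]
    have h := sum_pivot T (fun u => B u u) a b i w hbi
    simp only [smul_eq_mul] at h
    rw [ha₀, hT₀, h]
    have h1 := hT.dist_sum hB b b
    rw [hb1, ← hw] at h1
    have h2 := apex_outside k i
    rw [← hbdef, h1] at h2
    nlinarith

/-- A point `X / p` with integral affine coordinates `a / p` in some cell is at squared distance at
most `366.3` from the lattice. -/
theorem IsCell.exists_close {E : Type*} [AddCommGroup E] {B : LinearMap.BilinForm ℤ E}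
    (hB : B.IsSymm) (hpos : ∀ u, 0 ≤ B u u) {p : ℤ} (hp : 0 < p) (X : E) {k : Fin 8}
    {T : Fin 7 → E} (hT : IsCell B k T) {a : Fin 7 → ℤ} (ha : ∑ j, a j = p)
    (haX : ∑ j, a j • T j = X) :
    ∃ v : E, 10 * B (X - p • v) (X - p • v) ≤ 3663 * p ^ 2 := by
  have hquad : ∀ {k : Fin 8} {T : Fin 7 → E}, IsCell B k T → ∀ {a : Fin 7 → ℤ},
      ∑ j, a j = p → ∑ j, a j • T j = X →
      10 * (2 * p * ∑ j, a j * B (T j) (T j) - 2 * B X X) ≤ 7326 * p ^ 2 := by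
    intro k T hT a ha haX
    have h1 := hT.dist_sum hB a a
    have h2 := hT.power_le hB hpos a
    rw [ha, haX] at h1
    rw [h1, ha] at h2
    linarith
  -- The interpolated value times `p` is an integer that grows along the walk and, by `hquad`, stays
  -- below `367 * p + B X X`; `n` bounds the number of remaining steps.
  obtain ⟨n, hn⟩ : ∃ n : ℕ, 367 * p + B X X - ∑ j, a j * B (T j) (T j) ≤ n :=
    ⟨_, Int.self_le_toNat _⟩
  induction n generalizing k T a with
  | zero =>
    exfalso
    push_cast at hn
    nlinarith [hquad hT ha haX, mul_nonneg (sub_nonneg.2 hp) (hpos X), sq_nonneg p,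
      mul_nonneg hp.le (sub_nonneg.2 (sub_nonneg.1 (sub_nonneg.2 hn)))]
  | succ n ih =>
    by_cases hneg : ∃ i, a i < 0
    · obtain ⟨i, hi⟩ := hneg
      obtain ⟨k', T', a', hT', ha', hX', hlt⟩ := hT.pivot hB a hi
      refine ih hT' (ha'.trans ha) (hX'.trans haX) ?_
      push_cast at hn
      lia
    · push Not at hneg
      -- All coordinates are nonnegative, so the weighted average of the squared
      -- distances bounds at least one of them.
      by_contra! hfar
      have h1 : ∑ j, a j * (3663 * p ^ 2 + 1) ≤
          ∑ j, a j * (10 * B (X - p • T j) (X - p • T j)) :=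
        Finset.sum_le_sum fun j _ => mul_le_mul_of_nonneg_left (hfar (T j)) (hneg j)
      rw [← Finset.sum_mul, ha] at h1
      have h2 : ∑ j, a j * (10 * B (X - p • T j) (X - p • T j)) =
          10 * (p ^ 2 * ∑ j, a j * B (T j) (T j) - p * B X X) := by
        have e : ∀ j, a j * (10 * B (X - p • T j) (X - p • T j)) =
            10 * (B X X * a j) - 20 * p * (a j * B X (T j)) +
              10 * p ^ 2 * (a j * B (T j) (T j)) := by
          intro j
          have := hB.eq X (T j)
          simp only [map_sub, LinearMap.sub_apply, map_smul,
            LinearMap.smul_apply, smul_eq_mul] at *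
          rw [← this]; ring
        have hXX : ∑ j, a j * B X (T j) = B X X := by
          conv_rhs => rw [← haX, map_sum]
          simp [haX]
        simp only [e, Finset.sum_sub_distrib, Finset.sum_add_distrib, ← Finset.mul_sum, ha, hXX]
        ring
      rw [h2] at h1
      nlinarith [hquad hT ha haX]

/-! ### The integral form and its covering radius -/

/-- The integral form `100 • (QE6 + 0.16 • R2 + 0.33 • R3 + 0.14 • R4)`. -/
def intGram : Matrix (Fin 6) (Fin 6) ℤ :=
  !![640, 260, 360, 360, -100, 180;
     260, 885, 458, 458, 427, 229;
     360, 458, 784, 213, 245, 392;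
     360, 458, 213, 784, 245, 392;
     -100, 427, 245, 245, 753, 408;
     180, 229, 392, 392, 408, 767]

/-- The four forms have expansions into squares of nearly the same linear forms. -/
theorem QE6_form (u : Fin 6 → ℝ) : u ⬝ᵥ (QE6 *ᵥ u) =
    4 * (u 0 + u 1 / 4 + u 2 / 2 + u 3 / 2 - u 4 / 4 + u 5 / 4) ^ 2
      + 15 / 4 * (u 1 + 2 / 5 * u 2 + 2 / 5 * u 3 + 3 / 5 * u 4 + u 5 / 5) ^ 2
      + 12 / 5 * (u 2 - u 3 / 4 + u 4 / 4 + u 5 / 2) ^ 2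
      + 9 / 4 * (u 3 + u 4 / 3 + 2 / 3 * u 5) ^ 2 + 2 * (u 4 + u 5 / 2) ^ 2
      + 3 / 2 * u 5 ^ 2 := by
  simp [QE6, dotProduct, Matrix.mulVec, Fin.sum_univ_succ]
  ring

theorem R2_form (u : Fin 6 → ℝ) : u ⬝ᵥ (R2 *ᵥ u) =
    5 * (u 1 + 2 / 5 * u 2 + 2 / 5 * u 3 + 3 / 5 * u 4 + u 5 / 5) ^ 2
      + 16 / 5 * (u 2 - u 3 / 4 + u 4 / 4 + u 5 / 2) ^ 2
      + 3 * (u 3 + u 4 / 3 + 2 / 3 * u 5) ^ 2 + 8 / 3 * (u 4 + u 5 / 2) ^ 2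
      + 2 * u 5 ^ 2 := by
  simp [R2, dotProduct, Matrix.mulVec, Fin.sum_univ_succ]
  ring

theorem R3_form (u : Fin 6 → ℝ) : u ⬝ᵥ (R3 *ᵥ u) =
    6 * (u 0 + 2 / 3 * u 1 + 2 / 3 * u 2 + 2 / 3 * u 3 + u 5 / 3) ^ 2
      + 25 / 3 * (u 1 + 2 / 5 * u 2 + 2 / 5 * u 3 + 3 / 5 * u 4 + u 5 / 5) ^ 2
      + 4 * (u 2 - u 3 / 4 + u 4 / 4 + u 5 / 2) ^ 2
      + 15 / 4 * (u 3 + u 4 / 3 + 2 / 3 * u 5) ^ 2 + 10 / 3 * (u 4 + u 5 / 2) ^ 2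
      + 5 / 2 * u 5 ^ 2 := by
  simp [R3, dotProduct, Matrix.mulVec, Fin.sum_univ_succ]
  ring

theorem R4_form (u : Fin 6 → ℝ) : u ⬝ᵥ (R4 *ᵥ u) =
    3 * (u 0 + 2 / 3 * u 1 + 2 / 3 * u 2 + 2 / 3 * u 3 + u 5 / 3) ^ 2
      + 5 / 3 * (u 1 + 2 / 5 * u 2 + 2 / 5 * u 3 + 3 / 5 * u 4 + u 5 / 5) ^ 2
      + 12 / 5 * (u 2 - u 3 / 4 + u 4 / 4 + u 5 / 2) ^ 2
      + 9 / 4 * (u 3 + u 4 / 3 + 2 / 3 * u 5) ^ 2 + 2 * (u 4 + u 5 / 2) ^ 2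
      + 3 / 2 * u 5 ^ 2 := by
  simp [R4, dotProduct, Matrix.mulVec, Fin.sum_univ_succ]
  ring

theorem QE6_pos {u : Fin 6 → ℝ} (hu : u ≠ 0) : 0 < u ⬝ᵥ (QE6 *ᵥ u) := by
  rw [QE6_form]
  by_contra! h
  refine hu (funext fun i => ?_)
  have sq0 : ∀ t : ℝ, t ^ 2 ≤ 0 → t = 0 := fun t ht => pow_eq_zero_iff two_ne_zero |>.1
    (le_antisymm ht (sq_nonneg t))
  -- The squares involve fewer and fewer variables, so the coordinates vanish from the last on.
  have h5 : u 5 = 0 := sq0 _ (by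
    nlinarith only [h, sq_nonneg (u 0 + u 1 / 4 + u 2 / 2 + u 3 / 2 - u 4 / 4 + u 5 / 4),
      sq_nonneg (u 1 + 2 / 5 * u 2 + 2 / 5 * u 3 + 3 / 5 * u 4 + u 5 / 5),
      sq_nonneg (u 2 - u 3 / 4 + u 4 / 4 + u 5 / 2), sq_nonneg (u 3 + u 4 / 3 + 2 / 3 * u 5),
      sq_nonneg (u 4 + u 5 / 2)])
  simp only [h5, mul_zero, add_zero, zero_div, zero_pow, ne_eq, two_ne_zero, not_false_eq_true] at h
  have h4 : u 4 = 0 := sq0 _ (by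
    nlinarith only [h, sq_nonneg (u 0 + u 1 / 4 + u 2 / 2 + u 3 / 2 - u 4 / 4),
      sq_nonneg (u 1 + 2 / 5 * u 2 + 2 / 5 * u 3 + 3 / 5 * u 4),
      sq_nonneg (u 2 - u 3 / 4 + u 4 / 4), sq_nonneg (u 3 + u 4 / 3)])
  simp only [h4, mul_zero, add_zero, sub_zero, zero_div, zero_pow, ne_eq, two_ne_zero,
    not_false_eq_true] at h
  have h3 : u 3 = 0 := sq0 _ (by
    nlinarith only [h, sq_nonneg (u 0 + u 1 / 4 + u 2 / 2 + u 3 / 2),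
      sq_nonneg (u 1 + 2 / 5 * u 2 + 2 / 5 * u 3), sq_nonneg (u 2 - u 3 / 4)])
  simp only [h3, mul_zero, add_zero, sub_zero, zero_div, zero_pow, ne_eq, two_ne_zero,
    not_false_eq_true] at h
  have h2 : u 2 = 0 := sq0 _ (by
    nlinarith only [h, sq_nonneg (u 0 + u 1 / 4 + u 2 / 2), sq_nonneg (u 1 + 2 / 5 * u 2)])
  simp only [h2, mul_zero, add_zero, zero_div, zero_pow, ne_eq, two_ne_zero, not_false_eq_true] at h
  have h1 : u 1 = 0 := sq0 _ (by nlinarith only [h, sq_nonneg (u 0 + u 1 / 4)])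
  simp only [h1, mul_zero, add_zero, zero_div, zero_pow, ne_eq, two_ne_zero, not_false_eq_true] at h
  have h0 : u 0 = 0 := sq0 _ (by nlinarith only [h])
  fin_cases i <;> assumption

theorem QE6_nonneg (u : Fin 6 → ℝ) : 0 ≤ u ⬝ᵥ (QE6 *ᵥ u) := by rw [QE6_form]; positivity
theorem R2_nonneg (u : Fin 6 → ℝ) : 0 ≤ u ⬝ᵥ (R2 *ᵥ u) := by rw [R2_form]; positivity
theorem R3_nonneg (u : Fin 6 → ℝ) : 0 ≤ u ⬝ᵥ (R3 *ᵥ u) := by rw [R3_form]; positivity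
theorem R4_nonneg (u : Fin 6 → ℝ) : 0 ≤ u ⬝ᵥ (R4 *ᵥ u) := by rw [R4_form]; positivity

theorem comb_form (x y z : ℝ) (u : Fin 6 → ℝ) :
    u ⬝ᵥ ((QE6 + x • R2 + y • R3 + z • R4) *ᵥ u) =
      u ⬝ᵥ (QE6 *ᵥ u) + x * (u ⬝ᵥ (R2 *ᵥ u)) + y * (u ⬝ᵥ (R3 *ᵥ u)) + z * (u ⬝ᵥ (R4 *ᵥ u)) := by
  simp only [Matrix.add_mulVec, Matrix.smul_mulVec, dotProduct_add, dotProduct_smul, smul_eq_mul]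

theorem comb_isSymm (x y z : ℝ) : (QE6 + x • R2 + y • R3 + z • R4).IsSymm := by
  have h1 : QE6.IsSymm := by ext i j; fin_cases i <;> fin_cases j <;> rfl
  have h2 : R2.IsSymm := by ext i j; fin_cases i <;> fin_cases j <;> rfl
  have h3 : R3.IsSymm := by ext i j; fin_cases i <;> fin_cases j <;> rfl
  have h4 : R4.IsSymm := by ext i j; fin_cases i <;> fin_cases j <;> rfl
  exact ((h1.add (h2.smul x)).add (h3.smul y)).add (h4.smul z)

/-- Only nonnegativity of the coefficients matters, as `QE6` is positive definite and the `R`s are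
positive semidefinite. -/
theorem comb_posDef {x y z : ℝ} (hx : 0 ≤ x) (hy : 0 ≤ y) (hz : 0 ≤ z) :
    (QE6 + x • R2 + y • R3 + z • R4).PosDef := by
  refine .of_dotProduct_mulVec_pos ?_ fun u hu => ?_
  · rw [Matrix.IsHermitian, Matrix.conjTranspose_eq_transpose_of_trivial]
    exact comb_isSymm x y z
  · rw [star_trivial, comb_form]
    have := mul_nonneg hx (R2_nonneg u)
    have := mul_nonneg hy (R3_nonneg u)
    have := mul_nonneg hz (R4_nonneg u)
    have := QE6_pos hu
    linarith

set_option maxHeartbeats 1000000 in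
theorem intGram_cast : intGram.map (Int.cast : ℤ → ℝ) =
    (100 : ℝ) • (QE6 + (0.16 : ℝ) • R2 + (0.33 : ℝ) • R3 + (0.14 : ℝ) • R4) := by
  simp only [intGram, QE6, R2, R3, R4, Matrix.map, Matrix.smul_of, Matrix.smul_cons,
    Matrix.smul_empty, Matrix.of_add_of, Matrix.add_cons, Matrix.empty_add_empty,
    Matrix.head_cons, Matrix.tail_cons]
  ext i j
  fin_cases i <;> fin_cases j <;> simp <;> norm_num

theorem intGram_isSymm : (Matrix.toBilin' intGram).IsSymm := by
  refine ⟨fun u v => ?_⟩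
  have h : intGramᵀ = intGram := by decide +kernel
  rw [Matrix.toBilin'_apply', Matrix.toBilin'_apply', Matrix.dotProduct_mulVec,
    ← Matrix.mulVec_transpose, h, dotProduct_comm]

theorem intGram_form (u : Fin 6 → ℤ) : ((Matrix.toBilin' intGram u u : ℤ) : ℝ) =
    100 * ((fun i => (u i : ℝ)) ⬝ᵥ
      ((QE6 + (0.16 : ℝ) • R2 + (0.33 : ℝ) • R3 + (0.14 : ℝ) • R4) *ᵥ fun i => (u i : ℝ))) := by
  rw [← smul_eq_mul, ← dotProduct_smul, ← Matrix.smul_mulVec, ← intGram_cast,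
    Matrix.toBilin'_apply']
  simp [dotProduct, Matrix.mulVec]

/-- The walk can be started from one explicit unimodular cell, in which every `X / p` has integral
coordinates over `p`. -/
theorem exists_close_lattice (p : ℤ) (hp : 0 < p) (X : Fin 6 → ℤ) : ∃ v : Fin 6 → ℤ,
    10 * Matrix.toBilin' intGram (X - p • v) (X - p • v) ≤ 3663 * p ^ 2 := by
  have hpos : ∀ u, 0 ≤ Matrix.toBilin' intGram u u := fun u => by
    have : (0 : ℝ) ≤ ((Matrix.toBilin' intGram u u : ℤ) : ℝ) := by
      rw [intGram_form, comb_form]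
      have := QE6_nonneg (fun i => (u i : ℝ))
      have := R2_nonneg (fun i => (u i : ℝ))
      have := R3_nonneg (fun i => (u i : ℝ))
      have := R4_nonneg (fun i => (u i : ℝ))
      linarith
    exact_mod_cast this
  have hT : IsCell (Matrix.toBilin' intGram) 1
      ![![0, 0, 0, 0, 0, 0], ![0, 0, 0, 0, 0, 1], ![0, 0, 0, 0, 1, 0], ![0, 0, 0, 1, 0, 0],
        ![0, 0, 1, 0, 0, 0], ![0, 1, 0, 0, 0, 0], ![1, 0, 0, 0, 1, 0]] := by
    intro m n
    rw [Matrix.toBilin'_apply']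
    revert m n
    decide +kernel
  refine hT.exists_close intGram_isSymm hpos hp X
    (a := ![p - X 1 - X 2 - X 3 - X 4 - X 5, X 5, X 4 - X 0, X 3, X 2, X 1, X 0]) ?_ ?_
  · simp [Fin.sum_univ_succ]; ring
  · ext i
    fin_cases i <;> simp [Fin.sum_univ_succ]

/-- Rearranged from positivity of the form at `u - 1000 • e`. -/
theorem form_add_le {M : Matrix (Fin 6) (Fin 6) ℝ} (hM : M.IsSymm)
    (hpos : ∀ u, 0 ≤ u ⬝ᵥ (M *ᵥ u)) (u e : Fin 6 → ℝ) :
    (u + e) ⬝ᵥ (M *ᵥ (u + e)) ≤ 1.001 * (u ⬝ᵥ (M *ᵥ u)) + 1001 * (e ⬝ᵥ (M *ᵥ e)) := by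
  have h := hpos (u - (1000 : ℝ) • e)
  have hs : e ⬝ᵥ (M *ᵥ u) = u ⬝ᵥ (M *ᵥ e) := by
    rw [Matrix.dotProduct_mulVec, ← Matrix.mulVec_transpose, hM.eq, dotProduct_comm]
  simp only [Matrix.mulVec_add, Matrix.mulVec_sub, Matrix.mulVec_smul, dotProduct_add,
    add_dotProduct, dotProduct_sub, sub_dotProduct, smul_dotProduct, dotProduct_smul,
    smul_eq_mul, hs] at *
  linarith

theorem form_le_of_abs_le {M : Matrix (Fin 6) (Fin 6) ℝ} {C δ : ℝ} (hM : ∀ i j, |M i j| ≤ C)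
    {e : Fin 6 → ℝ} (he : ∀ i, |e i| ≤ δ) : e ⬝ᵥ (M *ᵥ e) ≤ 36 * (C * δ ^ 2) := by
  have hC : 0 ≤ C := (abs_nonneg _).trans (hM 0 0)
  have hδ : 0 ≤ δ := (abs_nonneg _).trans (he 0)
  have h : ∀ i j, e i * (M i j * e j) ≤ C * δ ^ 2 := fun i j => by
    calc e i * (M i j * e j) ≤ |e i| * (|M i j| * |e j|) := by
          rw [← abs_mul, ← abs_mul]; exact le_abs_self _
      _ ≤ δ * (C * δ) := by gcongr <;> solve_by_elim
      _ = C * δ ^ 2 := by ring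
  calc e ⬝ᵥ (M *ᵥ e) = ∑ i, ∑ j, e i * (M i j * e j) := by
        simp only [dotProduct, Matrix.mulVec, Finset.mul_sum]
    _ ≤ ∑ i : Fin 6, ∑ j : Fin 6, C * δ ^ 2 :=
        Finset.sum_le_sum fun i _ => Finset.sum_le_sum fun j _ => h i j
    _ = 36 * (C * δ ^ 2) := by simp; ring

/-- Rounding to `(1 / 10000) ℤ⁶` raises the bound `3.663` of the lattice case to at most `3.67`. -/
theorem exists_close_real (x : Fin 6 → ℝ) : ∃ v : Fin 6 → ℤ,
    (x - fun i => (v i : ℝ)) ⬝ᵥ ((QE6 + (0.16 : ℝ) • R2 + (0.33 : ℝ) • R3 + (0.14 : ℝ) • R4) *ᵥ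
      (x - fun i => (v i : ℝ))) ≤ 3.67 := by
  set M := QE6 + (0.16 : ℝ) • R2 + (0.33 : ℝ) • R3 + (0.14 : ℝ) • R4 with hM
  have hMpos : ∀ u, 0 ≤ u ⬝ᵥ (M *ᵥ u) := fun u => by
    simpa using (comb_posDef (x := 0.16) (y := 0.33) (z := 0.14) (by norm_num) (by norm_num)
      (by norm_num)).posSemidef.dotProduct_mulVec_nonneg u
  have hMabs : ∀ i j, |M i j| ≤ 9 := fun i j => by
    have hG : ∀ i j, |intGram i j| ≤ 900 := by decide +kernel
    have h := congrFun (congrFun intGram_cast i) j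
    rw [← hM, Matrix.map_apply, Matrix.smul_apply, smul_eq_mul] at h
    have h' : |((intGram i j : ℤ) : ℝ)| ≤ 900 := by exact_mod_cast hG i j
    rw [h, abs_mul, abs_of_pos (by norm_num : (0 : ℝ) < 100)] at h'
    linarith
  set X : Fin 6 → ℤ := fun i => round (10000 * x i) with hX
  obtain ⟨v, hv⟩ := exists_close_lattice 10000 (by norm_num) X
  refine ⟨v, ?_⟩
  set u : Fin 6 → ℝ := fun i => (X i : ℝ) / 10000 - v i with hu
  set e : Fin 6 → ℝ := fun i => x i - (X i : ℝ) / 10000 with he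
  have hsplit : (x - fun i => (v i : ℝ)) = u + e := by
    ext i; simp [hu, he]
  -- The entries of the form are at most `9`, so the rounding error has form value below `10⁻⁶`.
  have he' : ∀ i, |e i| ≤ 1 / 20000 := fun i => by
    have := abs_sub_round (10000 * x i)
    rw [abs_le] at this ⊢
    simp only [he, hX]
    constructor <;> linarith [this.1, this.2]
  have h1 := form_le_of_abs_le hMabs he'
  have h2 : (u + e) ⬝ᵥ (M *ᵥ (u + e)) ≤ 1.001 * (u ⬝ᵥ (M *ᵥ u)) + 1001 * (e ⬝ᵥ (M *ᵥ e)) :=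
    form_add_le (comb_isSymm _ _ _) hMpos u e
  have h3 : u ⬝ᵥ (M *ᵥ u) ≤ 3.663 := by
    have hcast : (fun i => (((X - (10000 : ℤ) • v) i : ℤ) : ℝ)) = (10000 : ℝ) • u := by
      ext i; simp [hu]; ring
    have h := intGram_form (X - (10000 : ℤ) • v)
    rw [hcast, ← hM, Matrix.mulVec_smul, smul_dotProduct, dotProduct_smul, smul_eq_mul,
      smul_eq_mul] at h
    have hv' : (10 : ℝ) *
        ((Matrix.toBilin' intGram (X - (10000 : ℤ) • v) (X - (10000 : ℤ) • v) : ℤ) : ℝ) ≤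
        3663 * 10000 ^ 2 := by exact_mod_cast hv
    rw [h] at hv'
    linarith
  rw [hsplit]
  linarith

/-! ### Bounds for the inhomogeneous minima and the determinants -/

theorem form_bddBelow {d : ℕ} {Q : Matrix (Fin d) (Fin d) ℝ} (hQ : ∀ u, 0 ≤ u ⬝ᵥ (Q *ᵥ u))
    (x : Fin d → ℝ) : BddBelow (Set.range fun v : Fin d → ℤ =>
      (x - fun i => (v i : ℝ)) ⬝ᵥ (Q *ᵥ (x - fun i => (v i : ℝ)))) :=
  ⟨0, by rintro _ ⟨v, rfl⟩; exact hQ _⟩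

theorem inhomMin_nonneg {d : ℕ} {Q : Matrix (Fin d) (Fin d) ℝ} (hQ : ∀ u, 0 ≤ u ⬝ᵥ (Q *ᵥ u)) :
    0 ≤ inhomMin Q :=
  Real.iSup_nonneg fun _ => Real.iInf_nonneg fun _ => hQ _

theorem inhomMin_le_of_exists {d : ℕ} {Q : Matrix (Fin d) (Fin d) ℝ}
    (hQ : ∀ u, 0 ≤ u ⬝ᵥ (Q *ᵥ u)) {C : ℝ} (h : ∀ x : Fin d → ℝ, ∃ v : Fin d → ℤ,
      (x - fun i => (v i : ℝ)) ⬝ᵥ (Q *ᵥ (x - fun i => (v i : ℝ))) ≤ C) : inhomMin Q ≤ C :=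
  ciSup_le fun x => (h x).elim fun v hv => (ciInf_le (form_bddBelow hQ x) v).trans hv

/-- The form is monotone in the coefficients of the positive semidefinite `R2`, `R3`, `R4`. -/
theorem inhomMin_comb_le {x y z : ℝ} (hx : 0 ≤ x) (hy : 0 ≤ y) (hz : 0 ≤ z) (hx' : x ≤ 0.16)
    (hy' : y ≤ 0.33) (hz' : z ≤ 0.14) : inhomMin (QE6 + x • R2 + y • R3 + z • R4) ≤ 3.67 := by
  refine inhomMin_le_of_exists (fun u => ?_) fun t => ?_
  · simpa using (comb_posDef hx hy hz).posSemidef.dotProduct_mulVec_nonneg u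
  · obtain ⟨v, hv⟩ := exists_close_real t
    refine ⟨v, le_trans ?_ hv⟩
    rw [comb_form, comb_form]
    gcongr
    exacts [R2_nonneg _, R3_nonneg _, R4_nonneg _]

theorem QA6_form (u : Fin 6 → ℝ) :
    u ⬝ᵥ (QA6 *ᵥ u) = 7 * ∑ i, u i ^ 2 - (∑ i, u i) ^ 2 := by
  have h : QA6 *ᵥ u = fun i => 7 * u i - ∑ j, u j := by
    ext i
    rw [QA6, Matrix.sub_mulVec, Matrix.smul_mulVec, Matrix.one_mulVec]
    simp [Matrix.mulVec, dotProduct]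
  rw [h]
  simp only [dotProduct, mul_sub, Finset.sum_sub_distrib, ← Finset.sum_mul]
  congr 1
  · rw [Finset.mul_sum]
    exact Finset.sum_congr rfl fun i _ => by ring
  · rw [sq]

theorem QA6_nonneg (u : Fin 6 → ℝ) : 0 ≤ u ⬝ᵥ (QA6 *ᵥ u) := by
  rw [QA6_form]
  have h := sq_sum_le_card_mul_sum_sq (s := Finset.univ) (f := u)
  have : 0 ≤ ∑ i, u i ^ 2 := Finset.sum_nonneg fun i _ => sq_nonneg _
  simp at h
  linarith

/-- `(r + 3) % 7 - 3` is the representative of `r` modulo `7` of least absolute value. -/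
theorem sq_le_sq_of_emod_seven {r u : ℤ} (h : u % 7 = r % 7) :
    ((r + 3) % 7 - 3) ^ 2 ≤ u ^ 2 := by
  rw [sq_le_sq]
  rcases abs_cases ((r + 3) % 7 - 3) with h1 | h1 <;> rcases abs_cases u with h2 | h2 <;> omega

/-- The squares of integers representing all seven residue classes modulo `7` add up to at least `0
+ 1 + 1 + 4 + 4 + 9 + 9 = 28`. -/
theorem sum_sq_ge (u : Fin 7 → ℤ) (c : ℤ) (hu : ∀ i : Fin 7, u i % 7 = ((i : ℕ) - c) % 7) :
    28 ≤ ∑ i, u i ^ 2 := by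
  have key : ∀ r : Fin 7, ∑ i : Fin 7, ((((i : ℕ) : ℤ) - ((r : ℕ) : ℤ) + 3) % 7 - 3) ^ 2 = 28 := by
    decide
  rw [← key ⟨(c % 7).toNat, by omega⟩]
  refine Finset.sum_le_sum fun i _ => sq_le_sq_of_emod_seven ?_
  have := hu i
  have h0 := Int.emod_nonneg c (by norm_num : (7 : ℤ) ≠ 0)
  simp only [Int.toNat_of_nonneg h0]
  omega

/-- The vector `(1, 2, 3, 4, 5, 6) / 7` is at squared distance at least `4` from the lattice: with
`w = (0, 1 - 7 v₀, …, 6 - 7 v₅)` and `c = 3 - ∑ j, v j`, the mean of the entries of `w`, the form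
takes the value `(1 / 7) * ∑ i, (w i - c) ^ 2` there, and the `w i - c` cover all residues modulo
`7`. -/
theorem QA6_deep_hole (v : Fin 6 → ℤ) :
    4 ≤ ((fun i : Fin 6 => ((i : ℕ) + 1 : ℝ) / 7) - fun i => (v i : ℝ)) ⬝ᵥ
      (QA6 *ᵥ ((fun i : Fin 6 => ((i : ℕ) + 1 : ℝ) / 7) - fun i => (v i : ℝ))) := by
  have h := sum_sq_ge (fun i => (i : ℕ) - 7 * (Fin.cons 0 v : Fin 7 → ℤ) i - (3 - ∑ j, v j))
    (3 - ∑ j, v j) fun i => by lia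
  have h' := (Int.cast_le (R := ℝ)).2 h
  rw [QA6_form]
  simp [Fin.sum_univ_succ] at h' ⊢
  linarith

theorem four_le_inhomMin_QA6 : 4 ≤ inhomMin QA6 := by
  -- The supremum is bounded above, as rounding down leaves a vector in the unit cube, where the
  -- form is at most `7 * 6`; were it unbounded, it would have the junk value `0`.
  refine le_ciSup_of_le ⟨42, ?_⟩ (fun i : Fin 6 => ((i : ℕ) + 1 : ℝ) / 7) (le_ciInf QA6_deep_hole)
  rintro _ ⟨x, rfl⟩
  refine (ciInf_le (form_bddBelow QA6_nonneg x) fun i => ⌊x i⌋).trans ?_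
  rw [QA6_form]
  have h : ∀ i, (x - fun i => ((⌊x i⌋ : ℤ) : ℝ)) i ^ 2 ≤ 1 := fun i => by
    simp only [Pi.sub_apply, Int.self_sub_floor]
    nlinarith [Int.fract_nonneg (x i), Int.fract_lt_one (x i)]
  have h' := Finset.sum_le_sum fun i (_ : i ∈ Finset.univ) => h i
  simp only [Finset.sum_const, Finset.card_univ, Fintype.card_fin, nsmul_eq_mul] at h'
  push_cast at h'
  nlinarith [sq_nonneg (∑ i, (x - fun i => ((⌊x i⌋ : ℤ) : ℝ)) i)]

theorem det_QA6 : QA6.det = 7 ^ 5 := by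
  have h : QA6 = (!![6, -1, -1, -1, -1, -1; -1, 6, -1, -1, -1, -1; -1, -1, 6, -1, -1, -1;
      -1, -1, -1, 6, -1, -1; -1, -1, -1, -1, 6, -1; -1, -1, -1, -1, -1, 6] :
      Matrix (Fin 6) (Fin 6) ℝ) := by
    ext i j
    fin_cases i <;> fin_cases j <;> norm_num [QA6, Matrix.one_apply, Fin.ext_iff]
  rw [h]
  simp [Matrix.det_succ_row_zero, Fin.sum_univ_succ, Fin.succAbove]
  norm_num

theorem lt_det : 10200 < (QE6 + (0.15266328480099 : ℝ) • R2 + (0.32884740614948 : ℝ) • R3 +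
    (0.13827491241153 : ℝ) • R4).det := by
  simp [QE6, R2, R3, R4, Matrix.det_succ_row_zero, Fin.sum_univ_succ, Fin.succAbove]
  norm_num

theorem unitBallVol_pos (d : ℕ) : 0 < unitBallVol d :=
  ENNReal.toReal_pos (Metric.measure_ball_pos volume _ one_pos).ne' measure_ball_lt_top.ne

/-! ### Comparison of the covering densities -/

/-- There is a symmetric positive definite `6×6` matrix whose covering density is smaller
than that of `Q_{A6*}`; in fact `Q = Q_{E6*} + x·R₂ + y·R₃ + z·R₄` with
`x = 0.15266328480099`, `y = 0.32884740614948`, `z = 0.13827491241153` is such a matrix.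
Hence the lattice `A₆*` does not give the least dense 6-dimensional lattice covering. -/
theorem A6star_not_optimal_covering :
    ((QE6 + (0.15266328480099 : ℝ) • R2 + (0.32884740614948 : ℝ) • R3 +
        (0.13827491241153 : ℝ) • R4).IsSymm ∧
     (QE6 + (0.15266328480099 : ℝ) • R2 + (0.32884740614948 : ℝ) • R3 +
        (0.13827491241153 : ℝ) • R4).PosDef ∧
     covDensity (QE6 + (0.15266328480099 : ℝ) • R2 + (0.32884740614948 : ℝ) • R3 +
        (0.13827491241153 : ℝ) • R4) < covDensity QA6) ∧
    ∃ Q : Matrix (Fin 6) (Fin 6) ℝ, Q.IsSymm ∧ Q.PosDef ∧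
      covDensity Q < covDensity QA6 := by
  set Q := QE6 + (0.15266328480099 : ℝ) • R2 + (0.32884740614948 : ℝ) • R3 +
    (0.13827491241153 : ℝ) • R4 with hQ
  have hsymm : Q.IsSymm := comb_isSymm _ _ _
  have hpos : Q.PosDef := comb_posDef (by norm_num) (by norm_num) (by norm_num)
  have hlt : covDensity Q < covDensity QA6 := by
    have hμ : inhomMin Q ≤ 3.67 := inhomMin_comb_le (by norm_num) (by norm_num) (by norm_num)
      (by norm_num) (by norm_num) (by norm_num)
    have hμ0 : 0 ≤ inhomMin Q :=
      inhomMin_nonneg fun u => by simpa using hpos.posSemidef.dotProduct_mulVec_nonneg u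
    have hdet : 10200 < Q.det := lt_det
    refine mul_lt_mul_of_pos_right (Real.sqrt_lt_sqrt
      (div_nonneg (pow_nonneg hμ0 6) hpos.det_pos.le) ?_) (unitBallVol_pos 6)
    calc inhomMin Q ^ 6 / Q.det ≤ 3.67 ^ 6 / 10200 := by gcongr
      _ < 4 ^ 6 / 7 ^ 5 := by norm_num
      _ ≤ inhomMin QA6 ^ 6 / QA6.det := by
        rw [det_QA6]
        gcongr
        exact four_le_inhomMin_QA6
  exact ⟨⟨hsymm, hpos, hlt⟩, Q, hsymm, hpos, hlt⟩
end

section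
/- Let Q = Q_{E6*} + ((√798 − 18)/79)·R_1. Then Q is a real symmetric positive definite 6×6 matrix whose packing-covering constant equals γ(Q) = 2·√(2·√798 − 56); equivalently, μ(Q)/λ(Q) = 2·√798 − 56. -/
open Matrix MeasureTheory

/-!
The pencil `QE6 + t • R1` is invariant under a group isomorphic to the Weyl group of type `B₅`,
which becomes visible after a change of coordinates: up to the scale `α = 3 + 5t`, the form on `ℤ⁶`
is the norm `|x|² + b y²`, `b = (1 + 3t) / (4α)`, on a lattice `L ⊂ ℝ⁵ × ℝ` whose layers
`y = k ∈ ℤ` are the four cosets of `D₅` in `D₅*`, in cyclic order (`quad_eq`, `exists_int_coord`,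
`exists_of_int_coord`). All estimates hold for `1/12 ≤ b ≤ 3/20`; the left end is `E₆*`, the right
end is the ray of `R₁`.

*Upper bound for `μ`* (`good_all`). If a point has barycentric coordinates `wⱼ ≥ 0` with respect to
lattice points `vⱼ` on a sphere with centre `c` and squared radius `ρ`, then the `w`-average of the
squared distances to the `vⱼ` is `ρ` minus the squared distance to `c`; so some `vⱼ` is within
squared distance `ρ` (`good_of_simplex`). Hence it suffices to cover space by lattice simplices
with `ρ ≤ 21b² - 7b/2 + 13/16`, and no property of Delaunay triangulations is needed. By the
symmetries of `L`, `x` may be taken in the alcove `1/2 ≥ x₁ ≥ ⋯ ≥ x₅ ≥ 0`. Three types of simplices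
(`good_T1`, `good_T2`, `good_T3`) around one layer cover an explicit interval of the fibre over `x`
(`good_centre`), and the intervals belonging to four consecutive layers fit together to a full
period (`good_alcove`).

*Lower bounds.* The circumcentre of the simplices of type `T1` has no lattice point closer than
their vertices (`deep_hole`), and the nonzero vectors of `L` have norm at least `5/4 + b`
(`min_norm`); both follow from elementary inequalities for integers, layer by layer.

Therefore `μ/λ = (21b² - 7b/2 + 13/16) / (5/4 + b)`, which at `t = (√798 - 18)/79` equals
`2√798 - 56`.
-/

/-- `Good b m x y`: some point `(p / 2, k)` of the lattice `L` is at squared distance at most `m`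
from `(x, y)`, for the norm `|x|² + b y²` on `ℝ⁵ × ℝ`. Here `L` consists of the pairs with
`p i ≡ k (mod 2)` for all `i` and `∑ p i ≡ k (mod 4)`: its layers `k = 0, 1, 2, 3 (mod 4)` are the
four cosets of `D₅` in `D₅*`. -/
def Good (b m : ℝ) (x : Fin 5 → ℝ) (y : ℝ) : Prop :=
  ∃ (p : Fin 5 → ℤ) (k : ℤ), (∀ i, 2 ∣ p i - k) ∧ 4 ∣ (∑ i, p i) - k ∧
    ∑ i, (x i - p i / 2) ^ 2 + b * (y - k) ^ 2 ≤ m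

/-! ### Symmetries of the lattice -/

lemma good_shift {b m : ℝ} {x : Fin 5 → ℝ} {y : ℝ} (n : Fin 5 → ℤ)
    (h : Good b m (fun i => x i - n i) (y - 2 * ∑ i, (n i : ℝ))) : Good b m x y := by
  obtain ⟨p, k, h1, h2, h3⟩ := h
  refine ⟨fun i => p i + 2 * n i, k + 2 * ∑ i, n i, fun i => ?_, ?_, ?_⟩
  · have := h1 i
    dsimp only
    omega
  · rw [Finset.sum_add_distrib, ← Finset.mul_sum]
    simpa using h2
  · convert h3 using 3
    · push_cast
      ring
    · push_cast
      ring

lemma good_layer {b m : ℝ} {x : Fin 5 → ℝ} {y : ℝ} (n : ℤ)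
    (h : Good b m x (y - 4 * n)) : Good b m x y := by
  obtain ⟨p, k, h1, h2, h3⟩ := h
  refine ⟨p, k + 4 * n, fun i => ?_, by omega, ?_⟩
  · have := h1 i
    omega
  · convert h3 using 3
    push_cast
    ring

lemma good_perm {b m : ℝ} {x : Fin 5 → ℝ} {y : ℝ} (e : Equiv.Perm (Fin 5))
    (h : Good b m (x ∘ e) y) : Good b m x y := by
  obtain ⟨p, k, h1, h2, h3⟩ := h
  refine ⟨p ∘ e.symm, k, fun i => h1 _, ?_, ?_⟩
  · rw [show ∑ i, (p ∘ e.symm) i = ∑ i, p i from Equiv.sum_comp e.symm p]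
    exact h2
  · rw [← Equiv.sum_comp e]
    simpa using h3

/-- Changing the sign of one coordinate of `x` exchanges the two spinor classes of `D₅`, so it has
to be accompanied by `y ↦ -y`. -/
lemma good_neg {b m : ℝ} {x : Fin 5 → ℝ} {y : ℝ} (i : Fin 5)
    (h : Good b m (Function.update x i (-x i)) (-y)) : Good b m x y := by
  obtain ⟨p, k, h1, h2, h3⟩ := h
  refine ⟨Function.update p i (-p i), -k, fun j => ?_, ?_, ?_⟩
  · have := h1 j
    rcases eq_or_ne j i with rfl | hj
    · simp only [Function.update_self]
      omega
    · simp only [Function.update_of_ne hj]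
      omega
  · have hi := h1 i
    rw [Finset.sum_update_of_mem (Finset.mem_univ i)]
    rw [← Finset.add_sum_erase _ _ (Finset.mem_univ i)] at h2
    rw [← Finset.erase_eq]
    omega
  · convert h3 using 2
    · refine Finset.sum_congr rfl fun j _ => ?_
      rcases eq_or_ne j i with rfl | hj
      · simp only [Function.update_self]
        push_cast
        ring
      · simp only [Function.update_of_ne hj]
    · push_cast
      ring

/-- The reflection in the wall `x₁ = 1/2`: it exchanges the layers `0 ↔ 2`. -/
lemma good_wall {b m : ℝ} {x : Fin 5 → ℝ} {y : ℝ}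
    (h : Good b m ![1 - x 0, x 1, x 2, x 3, x 4] (2 - y)) : Good b m x y := by
  refine good_neg 0 (good_shift ![-1, 0, 0, 0, 0] ?_)
  convert h using 1
  · ext i
    fin_cases i <;> simp [Function.update]
    ring
  · simp [Fin.sum_univ_five]
    ring

/-- The symmetry of the affine Dynkin diagram of `D₅` exchanging the layers `0 ↔ 1` and
`2 ↔ 3`. -/
lemma good_flip {b m : ℝ} {x : Fin 5 → ℝ} {y : ℝ}
    (h : Good b m ![1 / 2 - x 4, 1 / 2 - x 3, 1 / 2 - x 2, 1 / 2 - x 1, 1 / 2 - x 0] (1 - y)) :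
    Good b m x y := by
  obtain ⟨p, k, h1, h2, h3⟩ := h
  refine ⟨![1 - p 4, 1 - p 3, 1 - p 2, 1 - p 1, 1 - p 0], 1 - k, fun j => ?_, ?_, ?_⟩
  · have h0 := h1 0
    have h1' := h1 1
    have h2' := h1 2
    have h3' := h1 3
    have h4 := h1 4
    fin_cases j <;> simp <;> omega
  · simp [Fin.sum_univ_five] at h2 ⊢
    omega
  · simp [Fin.sum_univ_five] at h3 ⊢
    linarith

/-! ### Covering by simplices -/

/-- A point in the convex hull of seven lattice points, with barycentric coordinates `w`, is close
to one of them as soon as the `w`-average of the squared distances is small. -/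
lemma good_of_simplex {b m : ℝ} {x : Fin 5 → ℝ} {y : ℝ} (p : Fin 7 → Fin 5 → ℤ) (k : Fin 7 → ℤ)
    (w : Fin 7 → ℝ) (h2 : ∀ j i, 2 ∣ p j i - k j) (h4 : ∀ j, 4 ∣ (∑ i, p j i) - k j)
    (hw : ∀ j, 0 ≤ w j) (hs : ∑ j, w j = 1)
    (hm : ∑ j, w j * (∑ i, (x i - p j i / 2) ^ 2 + b * (y - k j) ^ 2) ≤ m) : Good b m x y := by
  by_contra hc
  have key : ∀ j, m < ∑ i, (x i - p j i / 2) ^ 2 + b * (y - k j) ^ 2 := fun j => by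
    by_contra! hj
    exact hc ⟨p j, k j, h2 j, h4 j, hj⟩
  obtain ⟨j, -, hj⟩ : ∃ j ∈ Finset.univ, 0 < w j :=
    Finset.exists_lt_of_sum_lt (by simp [hs])
  have : ∑ j, w j * m < ∑ j, w j * (∑ i, (x i - p j i / 2) ^ 2 + b * (y - k j) ^ 2) :=
    Finset.sum_lt_sum (fun i _ => mul_le_mul_of_nonneg_left (key i).le (hw i))
      ⟨j, Finset.mem_univ j, mul_lt_mul_of_pos_left (key j) hj⟩
  rw [← Finset.sum_mul, hs] at this
  linarith

/-- The simplices that realise the covering radius; their circumcentre is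
`((1-4b)/2, (1-4b)/2, (1-4b)/2, 3b-1/4, 0; 2)`. -/
lemma good_T1 {b : ℝ} (hb : 1 / 12 ≤ b) {x : Fin 5 → ℝ} {y : ℝ}
    (h01 : x 1 ≤ x 0) (h12 : x 2 ≤ x 1) (h23 : x 3 ≤ x 2) (h34 : x 4 ≤ x 3) (h34' : -x 4 ≤ x 3)
    (hA : x 0 + x 1 + x 2 - 1 + (2 - y) / 2 ≤ x 3 + x 4)
    (hB : x 0 + x 1 + x 2 - 1 - (2 - y) / 2 ≤ x 3 - x 4) :
    Good b (21 * b ^ 2 - 7 / 2 * b + 13 / 16) x y := by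
  refine good_of_simplex
    ![![0, 0, 0, 0, 0], ![1, 1, 1, 1, 1], ![2, 0, 0, 0, 0], ![0, 2, 0, 0, 0], ![0, 0, 2, 0, 0],
      ![1, 1, 1, 1, -1], ![0, 0, 0, 0, 0]] ![0, 1, 2, 2, 2, 3, 4]
    ![(x 3 - (x 0 + x 1 + x 2 - 1) + (2 - y) / 2 - x 4) / 2, x 3 + x 4, x 0 - x 3, x 1 - x 3,
      x 2 - x 3, x 3 - x 4, (x 3 - (x 0 + x 1 + x 2 - 1) - (2 - y) / 2 + x 4) / 2]
    (by decide) (by decide) ?_ ?_ ?_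
  · intro j
    fin_cases j <;> simp <;> linarith
  · simp [Fin.sum_univ_seven]
    ring
  · simp [Fin.sum_univ_seven, Fin.sum_univ_five]
    linarith [sq_nonneg (x 0 - (1 - 4 * b) / 2), sq_nonneg (x 1 - (1 - 4 * b) / 2),
      sq_nonneg (x 2 - (1 - 4 * b) / 2), sq_nonneg (x 3 - (3 * b - 1 / 4)), sq_nonneg (x 4),
      mul_nonneg (by linarith : (0 : ℝ) ≤ b) (sq_nonneg (y - 2))]

/-- Simplices with circumcentre `(1/4+b, 1/4+b, 1/4+b, 0, 0; 2)`. -/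
lemma good_T3 {b : ℝ} (hb : 1 / 12 ≤ b) {x : Fin 5 → ℝ} {y : ℝ}
    (h01 : x 1 ≤ x 0) (h12 : x 2 ≤ x 1) (h34 : x 4 ≤ x 3) (h34' : -x 4 ≤ x 3)
    (hx : x 0 + x 1 ≤ 1)
    (hA : x 3 + x 4 ≤ x 0 + x 1 + x 2 - 1 + (2 - y) / 2)
    (hB : x 3 - x 4 ≤ x 0 + x 1 + x 2 - 1 - (2 - y) / 2) :
    Good b (21 * b ^ 2 - 7 / 2 * b + 13 / 16) x y := by
  refine good_of_simplex
    ![![1, 1, 1, 1, 1], ![1, 1, 1, -1, -1], ![2, 0, 0, 0, 0], ![0, 2, 0, 0, 0], ![0, 0, 2, 0, 0],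
      ![1, 1, 1, 1, -1], ![1, 1, 1, -1, 1]] ![1, 1, 2, 2, 2, 3, 3]
    ![(x 0 + x 1 + x 2 - 1 + (2 - y) / 2 + (x 3 + x 4)) / 2,
      (x 0 + x 1 + x 2 - 1 + (2 - y) / 2 - (x 3 + x 4)) / 2,
      1 - x 1 - x 2, 1 - x 0 - x 2, 1 - x 0 - x 1,
      (x 0 + x 1 + x 2 - 1 - (2 - y) / 2 + (x 3 - x 4)) / 2,
      (x 0 + x 1 + x 2 - 1 - (2 - y) / 2 - (x 3 - x 4)) / 2]
    (by decide) (by decide) ?_ ?_ ?_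
  · intro j
    fin_cases j <;> simp <;> linarith
  · simp [Fin.sum_univ_seven]
    ring
  · simp [Fin.sum_univ_seven, Fin.sum_univ_five]
    -- the circumradii differ by `18 (b - 1/12)²`
    linarith [sq_nonneg (x 0 - (1 / 4 + b)), sq_nonneg (x 1 - (1 / 4 + b)),
      sq_nonneg (x 2 - (1 / 4 + b)), sq_nonneg (x 3), sq_nonneg (x 4), sq_nonneg (b - 1 / 12),
      mul_nonneg (by linarith : (0 : ℝ) ≤ b) (sq_nonneg (y - 2))]

/-- Simplices with circumcentre `(c, c, c, u, u; 2 + η)`, where `c = 3/8 - b/2`,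
`u = (3b - 1/4)/2` and `η = (12b - 1)/(16b)`. -/
lemma good_T2 {b : ℝ} (hb : 1 / 12 ≤ b) {x : Fin 5 → ℝ} {y : ℝ}
    (h01 : x 1 ≤ x 0) (h12 : x 2 ≤ x 1) (h34 : x 4 ≤ x 3) (h34' : -x 4 ≤ x 3)
    (hA : x 0 + x 1 + x 2 - 1 + (2 - y) / 2 ≤ x 3 + x 4)
    (hB : x 3 - x 4 ≤ x 0 + x 1 + x 2 - 1 - (2 - y) / 2)
    (hC : x 4 - (1 + x 2 - x 0 - x 1 - x 3) ≤ (2 - y) / 2) :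
    Good b (21 * b ^ 2 - 7 / 2 * b + 13 / 16) x y := by
  refine good_of_simplex
    ![![1, 1, 1, 1, 1], ![2, 0, 0, 0, 0], ![0, 2, 0, 0, 0], ![0, 0, 2, 0, 0],
      ![1, 1, 1, -1, 1], ![1, 1, 1, 1, -1], ![0, 0, 0, 0, 0]] ![1, 2, 2, 2, 3, 3, 4]
    ![x 3 + x 4,
      (2 * x 0 - (x 0 + x 1 + x 2 - 1) - x 3 - x 4 + (2 - y) / 2) / 2,
      (2 * x 1 - (x 0 + x 1 + x 2 - 1) - x 3 - x 4 + (2 - y) / 2) / 2,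
      (2 * x 2 - (x 0 + x 1 + x 2 - 1) - x 3 - x 4 + (2 - y) / 2) / 2,
      (x 0 + x 1 + x 2 - 1 - (2 - y) / 2 - (x 3 - x 4)) / 2,
      (x 0 + x 1 + x 2 - 1 - (2 - y) / 2 + (x 3 - x 4)) / 2,
      (x 3 + x 4 - (x 0 + x 1 + x 2 - 1) - (2 - y) / 2) / 2]
    (by decide) (by decide) ?_ ?_ ?_
  · intro j
    fin_cases j <;> simp <;> linarith
  · simp [Fin.sum_univ_seven]
    ring
  · have hb0 : 0 < b := by linarith
    obtain ⟨η, hη⟩ : ∃ η : ℝ, b * η = (12 * b - 1) / 16 := ⟨(12 * b - 1) / 16 / b, by field_simp⟩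
    -- this inequality is equivalent to the comparison of the circumradii
    have hη2 : b * η ^ 2 ≤ 63 / 4 * (b - 1 / 12) ^ 2 := by
      have h1 : b * (b * η ^ 2) ≤ b * (63 / 4 * (b - 1 / 12) ^ 2) := by
        have : b * (b * η ^ 2) = ((12 * b - 1) / 16) ^ 2 := by rw [← hη]; ring
        rw [this]
        nlinarith [mul_nonneg (sub_nonneg.2 hb) (sq_nonneg (b - 1 / 12))]
      exact le_of_mul_le_mul_left h1 hb0
    have hsq : 0 ≤ b * (y - 2) ^ 2 - 2 * ((12 * b - 1) / 16) * (y - 2) + b * η ^ 2 := by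
      rw [← hη]
      have := mul_nonneg hb0.le (sq_nonneg (y - 2 - η))
      linarith
    simp [Fin.sum_univ_seven, Fin.sum_univ_five]
    linarith [sq_nonneg (x 0 - (3 / 8 - b / 2)), sq_nonneg (x 1 - (3 / 8 - b / 2)),
      sq_nonneg (x 2 - (3 / 8 - b / 2)), sq_nonneg (x 3 - (3 * b - 1 / 4) / 2),
      sq_nonneg (x 4 - (3 * b - 1 / 4) / 2)]

/-- The simplices around the layer `y = 2` cover, over a point `x` of the fundamental alcove of
`D₅`, an interval with centre `2 - 2 x₅`. -/
lemma good_centre {b : ℝ} (hb : 1 / 12 ≤ b) {x : Fin 5 → ℝ} {y : ℝ}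
    (h01 : x 1 ≤ x 0) (h12 : x 2 ≤ x 1) (h23 : x 3 ≤ x 2) (h34 : x 4 ≤ x 3) (h34' : -x 4 ≤ x 3)
    (hx : x 0 + x 1 ≤ 1)
    (hl : 2 - 2 * x 4 - 2 * (1 + x 2 - x 0 - x 1 - x 3) ≤ y)
    (hu : y ≤ 2 - 2 * x 4 + 2 * (1 + x 2 - x 0 - x 1 - x 3)) :
    Good b (21 * b ^ 2 - 7 / 2 * b + 13 / 16) x y := by
  rcases le_total (x 0 + x 1 + x 2 - 1 + (2 - y) / 2) (x 3 + x 4) with hA | hA <;>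
    rcases le_total (x 0 + x 1 + x 2 - 1 - (2 - y) / 2) (x 3 - x 4) with hB | hB
  · exact good_T1 hb h01 h12 h23 h34 h34' hA hB
  · exact good_T2 hb h01 h12 h34 h34' hA hB (by linarith)
  · -- the mirror image of the previous case
    refine good_neg 4 (good_layer (-1) ?_)
    refine good_T2 hb ?_ ?_ ?_ ?_ ?_ ?_ ?_ <;> simp [Function.update] <;> linarith
  · exact good_T3 hb h01 h12 h34 h34' hx hA hB

/-- Over a point of the alcove of the affine Weyl group of type `C₅`, four consecutive intervals
of total length `4`, one for each of the four layers, cover the whole `y`-axis modulo `4`. -/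
lemma good_alcove {b : ℝ} (hb : 1 / 12 ≤ b) {x : Fin 5 → ℝ} (h0 : x 0 ≤ 1 / 2)
    (h01 : x 1 ≤ x 0) (h12 : x 2 ≤ x 1) (h23 : x 3 ≤ x 2) (h34 : x 4 ≤ x 3) (h4 : 0 ≤ x 4)
    (y : ℝ) : Good b (21 * b ^ 2 - 7 / 2 * b + 13 / 16) x y := by
  obtain ⟨n, hn1, hn2⟩ : ∃ n : ℤ, 2 * x 4 - 2 * (x 0 - x 1 + x 2 - x 3) ≤ y - 4 * n ∧
      y - 4 * n ≤ 2 * x 4 - 2 * (x 0 - x 1 + x 2 - x 3) + 4 := by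
    refine ⟨⌊(y - (2 * x 4 - 2 * (x 0 - x 1 + x 2 - x 3))) / 4⌋, ?_, ?_⟩
    · linarith [Int.floor_le ((y - (2 * x 4 - 2 * (x 0 - x 1 + x 2 - x 3))) / 4)]
    · linarith [Int.lt_floor_add_one ((y - (2 * x 4 - 2 * (x 0 - x 1 + x 2 - x 3))) / 4)]
  refine good_layer n ?_
  generalize y - 4 * n = z at hn1 hn2
  rcases le_total z (2 * x 4 + 2 * (x 0 - x 1 + x 2 - x 3)) with hz1 | hz1
  · refine good_wall (good_centre hb ?_ ?_ ?_ ?_ ?_ ?_ ?_ ?_) <;> simp <;> linarith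
  rcases le_total z (2 * x 0 + 2 * (x 1 - x 2 + x 3 - x 4)) with hz2 | hz2
  · refine good_neg 4 (good_flip (good_centre hb ?_ ?_ ?_ ?_ ?_ ?_ ?_ ?_)) <;>
      simp [Function.update] <;> linarith
  rcases le_total z (2 - 2 * x 4 + 2 * (1 + x 2 - x 0 - x 1 - x 3)) with hz3 | hz3
  · exact good_centre hb h01 h12 h23 h34 (by linarith) (by linarith) (by linarith) hz3
  · refine good_layer 1 (good_flip (good_centre hb ?_ ?_ ?_ ?_ ?_ ?_ ?_ ?_)) <;>
      simp <;> linarith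

/-- Every point of `ℝ⁵ × ℝ` is within squared distance `21 b² - 7b/2 + 13/16` of `L`. -/
lemma good_all {b : ℝ} (hb : 1 / 12 ≤ b) (x : Fin 5 → ℝ) (y : ℝ) :
    Good b (21 * b ^ 2 - 7 / 2 * b + 13 / 16) x y := by
  have sorted : ∀ x : Fin 5 → ℝ, (∀ i, 0 ≤ x i) → (∀ i, x i ≤ 1 / 2) → ∀ y,
      Good b (21 * b ^ 2 - 7 / 2 * b + 13 / 16) x y := by
    intro x h0 h1 y
    have hm := Tuple.monotone_sort (fun i => -x i)
    have hle : ∀ i j : Fin 5, i ≤ j → (x ∘ Tuple.sort fun i => -x i) j ≤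
        (x ∘ Tuple.sort fun i => -x i) i := fun i j hij => by simpa using hm hij
    exact good_perm (Tuple.sort fun i => -x i)
      (good_alcove (x := x ∘ Tuple.sort fun i => -x i) hb (h1 _) (hle 0 1 (by decide)) (hle 1 2 (by decide)) (hle 2 3 (by decide)) (hle 3 4 (by decide)) (h0 _) y)
  have folded : ∀ S : Finset (Fin 5), ∀ x : Fin 5 → ℝ, (∀ i ∉ S, 0 ≤ x i) →
      (∀ i, |x i| ≤ 1 / 2) → ∀ y, Good b (21 * b ^ 2 - 7 / 2 * b + 13 / 16) x y := by
    intro S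
    induction S using Finset.induction_on with
    | empty => exact fun x h0 h1 => sorted x (fun i => h0 i (by simp)) fun i => (abs_le.1 (h1 i)).2
    | insert a S _ ih =>
      intro x h0 h1 y
      rcases le_total 0 (x a) with ha | ha
      · refine ih x (fun i hi => ?_) h1 y
        rcases eq_or_ne i a with rfl | hia
        · exact ha
        · exact h0 i (by simp [hia, hi])
      · refine good_neg a (ih _ (fun i hi => ?_) (fun i => ?_) _)
        · rcases eq_or_ne i a with rfl | hia
          · simpa using ha
          · simpa [Function.update_of_ne hia] using h0 i (by simp [hia, hi])
        · rcases eq_or_ne i a with rfl | hia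
          · simpa using h1 i
          · simpa [Function.update_of_ne hia] using h1 i
  exact good_shift (fun i => round (x i))
    (folded Finset.univ _ (by simp) (fun i => abs_sub_round (x i)) _)

/-! ### The deep hole and the shortest vectors -/

lemma sq_ge_one_of_ne_zero {n : ℤ} (hn : n ≠ 0) : (1 : ℝ) ≤ (n : ℝ) ^ 2 := by
  exact_mod_cast Int.one_le_abs hn |>.trans (by rw [← sq_abs]; nlinarith [Int.one_le_abs hn])

/-- No point of `L` is closer to `((1-4b)/2, (1-4b)/2, (1-4b)/2, 3b-1/4, 0; 2)` than the seven
vertices of the simplex of `good_T1`. -/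
lemma deep_hole {b : ℝ} (hb : 1 / 12 ≤ b) (hb' : b ≤ 3 / 20) (p : Fin 5 → ℤ) (k : ℤ)
    (h2 : ∀ i, 2 ∣ p i - k) (h4 : 4 ∣ (∑ i, p i) - k) :
    21 * b ^ 2 - 7 / 2 * b + 13 / 16 ≤
      ((1 - 4 * b) / 2 - p 0 / 2) ^ 2 + ((1 - 4 * b) / 2 - p 1 / 2) ^ 2 +
      ((1 - 4 * b) / 2 - p 2 / 2) ^ 2 + (3 * b - 1 / 4 - p 3 / 2) ^ 2 + (0 - p 4 / 2) ^ 2 +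
      b * (2 - k) ^ 2 := by
  obtain ⟨j, hj | hj⟩ := Int.even_or_odd' k
  · have hn : ∀ i, ∃ n : ℤ, p i = 2 * n := fun i => ⟨p i / 2, by have := h2 i; omega⟩
    choose n hn using hn
    -- an integer `n` satisfies `n ^ 2 - 2 c n ≥ 0`, with a better bound when `n ≠ 0`
    have hI : ∀ (c : ℝ) (n : ℤ), 0 ≤ c → c ≤ 1 / 2 → 0 ≤ (n : ℝ) ^ 2 - 2 * c * n := by
      intro c n hc hc'
      rcases le_or_gt n 0 with h | h
      · have : (n : ℝ) ≤ 0 := by exact_mod_cast h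
        nlinarith [mul_nonneg hc (neg_nonneg.2 this)]
      · have : (1 : ℝ) ≤ n := by exact_mod_cast h
        nlinarith
    have hI' : ∀ (c : ℝ) (n : ℤ), 0 ≤ c → c ≤ (1 - 4 * b) / 2 → n ≠ 0 →
        4 * b ≤ (n : ℝ) ^ 2 - 2 * c * n := by
      intro c n hc hc' hn
      rcases lt_or_gt_of_ne hn with h | h
      · have : (n : ℝ) ≤ -1 := by exact_mod_cast (by omega : n ≤ -1)
        nlinarith [mul_nonneg hc (by linarith : (0 : ℝ) ≤ -n)]
      · have : (1 : ℝ) ≤ n := by exact_mod_cast h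
        nlinarith
    have i0 := hI ((1 - 4 * b) / 2) (n 0) (by linarith) (by linarith)
    have i1 := hI ((1 - 4 * b) / 2) (n 1) (by linarith) (by linarith)
    have i2 := hI ((1 - 4 * b) / 2) (n 2) (by linarith) (by linarith)
    have i3 := hI (3 * b - 1 / 4) (n 3) (by linarith) (by linarith)
    have i4 := hI 0 (n 4) (by linarith) (by linarith)
    have main : 0 ≤ (n 0 : ℝ) ^ 2 - 2 * ((1 - 4 * b) / 2) * n 0 +
        ((n 1 : ℝ) ^ 2 - 2 * ((1 - 4 * b) / 2) * n 1) +
        ((n 2 : ℝ) ^ 2 - 2 * ((1 - 4 * b) / 2) * n 2) +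
        ((n 3 : ℝ) ^ 2 - 2 * (3 * b - 1 / 4) * n 3) +
        ((n 4 : ℝ) ^ 2 - 2 * 0 * n 4) + b * ((2 - k) ^ 2 - 4) := by
      rcases eq_or_ne j 1 with h1 | h1
      · subst h1
        have hne : n 0 ≠ 0 ∨ n 1 ≠ 0 ∨ n 2 ≠ 0 ∨ n 3 ≠ 0 ∨ n 4 ≠ 0 := by
          by_contra! hc
          simp [Fin.sum_univ_five, hn, hc, hj] at h4
        have hk : (k : ℝ) = 2 := by rw [hj]; norm_num
        rw [hk]
        rcases hne with h | h | h | h | h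
        · linarith [hI' ((1 - 4 * b) / 2) _ (by linarith) le_rfl h]
        · linarith [hI' ((1 - 4 * b) / 2) _ (by linarith) le_rfl h]
        · linarith [hI' ((1 - 4 * b) / 2) _ (by linarith) le_rfl h]
        · linarith [hI' (3 * b - 1 / 4) _ (by linarith) (by linarith) h]
        · linarith [hI' 0 _ le_rfl (by linarith) h]
      · have : (0 : ℝ) ≤ (2 - k) ^ 2 - 4 := by
          have := sq_ge_one_of_ne_zero (sub_ne_zero.2 h1)
          rw [hj]
          push_cast at this ⊢
          nlinarith
        have := mul_nonneg (by linarith : (0 : ℝ) ≤ b) this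
        linarith
    simp only [hn]
    push_cast
    linarith
  · have hI : ∀ (c : ℝ) (i : Fin 5), 0 ≤ c → c ≤ 1 / 2 →
        1 / 4 - c ≤ (p i / 2 : ℝ) ^ 2 - 2 * c * (p i / 2) := by
      intro c i hc hc'
      have hi := h2 i
      rcases le_or_gt (p i) 0 with h | h
      · have : (p i : ℝ) ≤ -1 := by exact_mod_cast (by omega : p i ≤ -1)
        nlinarith [mul_nonneg hc (by linarith : (0 : ℝ) ≤ -p i - 1)]
      · have : (1 : ℝ) ≤ p i := by exact_mod_cast h
        nlinarith
    have hk : (1 : ℝ) ≤ (2 - k) ^ 2 := by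
      have := sq_ge_one_of_ne_zero (by omega : 2 - k ≠ 0)
      exact_mod_cast this
    linarith [hI ((1 - 4 * b) / 2) 0 (by linarith) (by linarith),
      hI ((1 - 4 * b) / 2) 1 (by linarith) (by linarith),
      hI ((1 - 4 * b) / 2) 2 (by linarith) (by linarith),
      hI (3 * b - 1 / 4) 3 (by linarith) (by linarith), hI 0 4 le_rfl (by linarith),
      mul_le_mul_of_nonneg_left hk (by linarith : (0 : ℝ) ≤ b)]

/-- The nonzero points of `L` have norm at least `5/4 + b`, the norm of the spinor vectors
`(±1/2, …, ±1/2; ±1)`. The hypothesis `1/12 ≤ b` makes them no longer than the vectors `(±eᵢ; ±2)`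
and `(0; ±4)`. -/
lemma min_norm {b : ℝ} (hb : 1 / 12 ≤ b) (hb' : b ≤ 3 / 20) (p : Fin 5 → ℤ) (k : ℤ)
    (h2 : ∀ i, 2 ∣ p i - k) (h4 : 4 ∣ (∑ i, p i) - k) (hne : k ≠ 0 ∨ ∃ i, p i ≠ 0) :
    5 / 4 + b ≤ ∑ i, (p i / 2 : ℝ) ^ 2 + b * (k : ℝ) ^ 2 := by
  have hS : ∑ i, (p i / 2 : ℝ) ^ 2 = ((∑ i, p i ^ 2 : ℤ) : ℝ) / 4 := by
    push_cast
    rw [Finset.sum_div]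
    exact Finset.sum_congr rfl fun i _ => by ring
  rw [hS]
  obtain ⟨j, hj | hj⟩ := Int.even_or_odd' k
  · have hn : ∀ i, ∃ n : ℤ, p i = 2 * n := fun i => ⟨p i / 2, by have := h2 i; omega⟩
    choose n hn using hn
    have hT : ∑ i, p i ^ 2 = 4 * ∑ i, n i ^ 2 := by
      rw [Finset.mul_sum]
      exact Finset.sum_congr rfl fun i _ => by rw [hn]; ring
    -- `n²` and `n` have the same parity, so `∑ n i ^ 2 ≡ j (mod 2)`
    have hpar : 2 ∣ (∑ i, n i ^ 2) - j := by
      have h1 : 2 ∣ (∑ i, n i ^ 2) - ∑ i, n i := by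
        rw [← Finset.sum_sub_distrib]
        refine Finset.dvd_sum fun i _ => ?_
        rw [show n i ^ 2 - n i = n i * (n i - 1) by ring]
        exact (Int.even_mul_pred_self (n i)).two_dvd
      have h3 : ∑ i, p i = 2 * ∑ i, n i := by
        rw [Finset.mul_sum]
        exact Finset.sum_congr rfl fun i _ => hn i
      omega
    have h0 : 0 ≤ ∑ i, n i ^ 2 := Finset.sum_nonneg fun i _ => sq_nonneg _
    have hN : j = 0 → ∑ i, n i ^ 2 ≠ 0 := by
      intro hj0 hz
      rw [Finset.sum_eq_zero_iff_of_nonneg fun i _ => sq_nonneg _] at hz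
      rcases hne with h | ⟨i, hi⟩
      · omega
      · exact hi (by rw [hn, pow_eq_zero_iff two_ne_zero |>.1 (hz i (Finset.mem_univ i)), mul_zero])
    rw [hT, hj]
    clear hT
    generalize ∑ i, n i ^ 2 = N at *
    have h0' : (0 : ℝ) ≤ N := by exact_mod_cast h0
    push_cast
    rcases eq_or_ne j 0 with hj0 | hj0
    · have hN2 : (2 : ℝ) ≤ N := by
        have := hN hj0
        exact_mod_cast (by omega : 2 ≤ N)
      rw [hj0]
      push_cast
      linarith
    · rcases Int.emod_two_eq_zero_or_one j with he | ho
      · have h2j : (4 : ℝ) ≤ (j : ℝ) ^ 2 := by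
          obtain ⟨i, rfl⟩ : ∃ i, j = 2 * i := ⟨j / 2, by omega⟩
          have := sq_ge_one_of_ne_zero (by omega : i ≠ 0)
          push_cast
          linarith
        linarith [mul_le_mul_of_nonneg_left h2j (by linarith : (0 : ℝ) ≤ b)]
      · have hN1 : (1 : ℝ) ≤ N := by exact_mod_cast (by omega : 1 ≤ N)
        linarith [mul_le_mul_of_nonneg_left (sq_ge_one_of_ne_zero hj0)
          (by linarith : (0 : ℝ) ≤ b)]
  · have h5 : ∑ _i : Fin 5, (1 : ℤ) ≤ ∑ i, p i ^ 2 := by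
      refine Finset.sum_le_sum fun i _ => ?_
      have := h2 i
      exact_mod_cast sq_ge_one_of_ne_zero (by omega : p i ≠ 0)
    have h5' : (5 : ℝ) ≤ ((∑ i, p i ^ 2 : ℤ) : ℝ) := by exact_mod_cast h5
    linarith [mul_le_mul_of_nonneg_left (sq_ge_one_of_ne_zero (by omega : k ≠ 0))
      (by linarith : (0 : ℝ) ≤ b)]

/-! ### The form in the coordinates of `ℝ⁵ × ℝ` -/

/-- The `ℝ⁵`-component of the isomorphism `ℝ⁶ ≃ ℝ⁵ × ℝ` that maps `ℤ⁶` onto `L`. -/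
noncomputable def coordX (z : Fin 6 → ℝ) : Fin 5 → ℝ :=
  ![(-z 1 - z 4 - z 5) / 2, (-z 1 - z 4 + z 5) / 2, (z 1 + 2 * z 3 + z 4 + z 5) / 2,
    (z 1 + 2 * z 2 + z 4 + z 5) / 2, (z 1 - z 4 - z 5) / 2]

/-- The last component of the isomorphism `ℝ⁶ ≃ ℝ⁵ × ℝ` that maps `ℤ⁶` onto `L`. -/
def coordY (z : Fin 6 → ℝ) : ℝ :=
  4 * z 0 + z 1 + 2 * z 2 + 2 * z 3 - z 4 + z 5

/-- The squared length of the image of `z` in `ℝ⁵ × ℝ`. -/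
noncomputable def nrm (b : ℝ) (z : Fin 6 → ℝ) : ℝ :=
  ∑ i, coordX z i ^ 2 + b * coordY z ^ 2

lemma quad_eq (t b : ℝ) (hb : (3 + 5 * t) * b = (1 + 3 * t) / 4) (z : Fin 6 → ℝ) :
    z ⬝ᵥ ((QE6 + t • R1) *ᵥ z) = (3 + 5 * t) * nrm b z := by
  rw [nrm, mul_add, ← mul_assoc, hb]
  simp [QE6, R1, dotProduct, mulVec, Fin.sum_univ_succ, coordX, coordY]
  ring

lemma exists_int_coord (v : Fin 6 → ℤ) : ∃ (p : Fin 5 → ℤ) (k : ℤ), (∀ i, 2 ∣ p i - k) ∧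
    4 ∣ (∑ i, p i) - k ∧ (∀ i, coordX (fun j => (v j : ℝ)) i = p i / 2) ∧
    coordY (fun j => (v j : ℝ)) = k := by
  refine ⟨![-v 1 - v 4 - v 5, -v 1 - v 4 + v 5, v 1 + 2 * v 3 + v 4 + v 5,
    v 1 + 2 * v 2 + v 4 + v 5, v 1 - v 4 - v 5],
    4 * v 0 + v 1 + 2 * v 2 + 2 * v 3 - v 4 + v 5, fun i => ?_, ?_, fun i => ?_, ?_⟩
  · fin_cases i <;> simp <;> omega
  · simp [Fin.sum_univ_five]
    omega
  · fin_cases i <;> simp [coordX]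
  · simp [coordY]

lemma exists_of_int_coord (p : Fin 5 → ℤ) (k : ℤ) (h2 : ∀ i, 2 ∣ p i - k)
    (h4 : 4 ∣ (∑ i, p i) - k) : ∃ v : Fin 6 → ℤ,
    (∀ i, coordX (fun j => (v j : ℝ)) i = p i / 2) ∧ coordY (fun j => (v j : ℝ)) = k := by
  obtain ⟨c0, e0⟩ := h4
  obtain ⟨d0, f0⟩ := h2 0
  obtain ⟨d1, f1⟩ := h2 1
  obtain ⟨d2, f2⟩ := h2 2
  obtain ⟨d3, f3⟩ := h2 3
  obtain ⟨d4, f4⟩ := h2 4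
  rw [Fin.sum_univ_five] at e0
  have g0 : (p 0 : ℝ) = k + 2 * d0 := by exact_mod_cast (by omega : p 0 = k + 2 * d0)
  have g1 : (p 1 : ℝ) = k + 2 * d1 := by exact_mod_cast (by omega : p 1 = k + 2 * d1)
  have g2 : (p 2 : ℝ) = k + 2 * d2 := by exact_mod_cast (by omega : p 2 = k + 2 * d2)
  have g3 : (p 3 : ℝ) = k + 2 * d3 := by exact_mod_cast (by omega : p 3 = k + 2 * d3)
  have g4 : (p 4 : ℝ) = k + 2 * d4 := by exact_mod_cast (by omega : p 4 = k + 2 * d4)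
  have g5 : (p 0 + p 1 + p 2 + p 3 + p 4 - k : ℝ) = 4 * c0 := by exact_mod_cast e0
  refine ⟨![-c0, d4 - d0, k + d0 + d3, k + d0 + d2, -k - d1 - d4, d1 - d0], fun i => ?_, ?_⟩
  · fin_cases i <;> simp [coordX] <;> linarith
  · simp [coordY]
    linarith

lemma nrm_nonneg {b : ℝ} (hb : 0 ≤ b) (z : Fin 6 → ℝ) : 0 ≤ nrm b z :=
  add_nonneg (Finset.sum_nonneg fun _ _ => sq_nonneg _) (mul_nonneg hb (sq_nonneg _))

lemma coordX_sub (z w : Fin 6 → ℝ) (i : Fin 5) : coordX (z - w) i = coordX z i - coordX w i := by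
  fin_cases i <;> simp [coordX] <;> ring

lemma coordY_sub (z w : Fin 6 → ℝ) : coordY (z - w) = coordY z - coordY w := by
  simp [coordY]
  ring

lemma eq_zero_of_coord {z : Fin 6 → ℝ} (hX : ∀ i, coordX z i = 0) (hY : coordY z = 0) :
    z = 0 := by
  have h0 := hX 0
  have h1 := hX 1
  have h2 := hX 2
  have h3 := hX 3
  have h4 := hX 4
  simp [coordX] at h0 h1 h2 h3 h4
  simp only [coordY] at hY
  ext i
  fin_cases i <;> simp <;> linarith

lemma nrm_pos {b : ℝ} (hb : 0 < b) {z : Fin 6 → ℝ} (hz : z ≠ 0) : 0 < nrm b z := by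
  refine (nrm_nonneg hb.le z).lt_of_ne fun h => hz ?_
  have hS : 0 ≤ ∑ i, coordX z i ^ 2 := Finset.sum_nonneg fun _ _ => sq_nonneg _
  have hK : 0 ≤ b * coordY z ^ 2 := mul_nonneg hb.le (sq_nonneg _)
  rw [nrm] at h
  have hS0 : ∑ i, coordX z i ^ 2 = 0 := by linarith
  have hK0 : b * coordY z ^ 2 = 0 := by linarith
  rw [Finset.sum_eq_zero_iff_of_nonneg fun _ _ => sq_nonneg _] at hS0
  refine eq_zero_of_coord (fun i => by simpa using hS0 i (Finset.mem_univ i)) ?_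
  simpa [hb.ne'] using hK0

lemma inhomMin_eq_s15 {t b : ℝ} (ht : 0 < 3 + 5 * t) (h : (3 + 5 * t) * b = (1 + 3 * t) / 4)
    (hb : 1 / 12 ≤ b) (hb' : b ≤ 3 / 20) :
    inhomMin (QE6 + t • R1) = (3 + 5 * t) * (21 * b ^ 2 - 7 / 2 * b + 13 / 16) := by
  have hbdd : ∀ z : Fin 6 → ℝ, BddBelow (Set.range fun v : Fin 6 → ℤ =>
      (z - fun i => (v i : ℝ)) ⬝ᵥ ((QE6 + t • R1) *ᵥ (z - fun i => (v i : ℝ)))) := by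
    refine fun z => ⟨0, ?_⟩
    rintro _ ⟨v, rfl⟩
    simp only [quad_eq t b h]
    exact mul_nonneg ht.le (nrm_nonneg (by linarith) _)
  have hub : ∀ z : Fin 6 → ℝ, ⨅ v : Fin 6 → ℤ,
      (z - fun i => (v i : ℝ)) ⬝ᵥ ((QE6 + t • R1) *ᵥ (z - fun i => (v i : ℝ))) ≤
      (3 + 5 * t) * (21 * b ^ 2 - 7 / 2 * b + 13 / 16) := by
    intro z
    obtain ⟨p, k, h2, h4, hm⟩ := good_all hb (coordX z) (coordY z)
    obtain ⟨v, hX, hY⟩ := exists_of_int_coord p k h2 h4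
    refine (ciInf_le (hbdd z) v).trans ?_
    simp only [quad_eq t b h]
    refine mul_le_mul_of_nonneg_left ?_ ht.le
    simpa only [nrm, coordX_sub, coordY_sub, hX, hY] using hm
  refine le_antisymm (ciSup_le hub) ?_
  -- the preimage of the deep hole
  let z : Fin 6 → ℝ := ![(2 - 2 * (5 / 4 - 3 * b)) / 4, -((1 - 4 * b) / 2),
    (1 - 4 * b) / 2 + (3 * b - 1 / 4), 1 - 4 * b, -((1 - 4 * b) / 2), 0]
  have hzX : coordX z = ![(1 - 4 * b) / 2, (1 - 4 * b) / 2, (1 - 4 * b) / 2, 3 * b - 1 / 4, 0] := by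
    ext i
    fin_cases i <;> simp [coordX, z] <;> ring
  have hzY : coordY z = 2 := by
    simp [coordY, z]
    ring
  refine le_trans (le_ciInf fun v => ?_) (le_ciSup ⟨_, Set.forall_mem_range.2 hub⟩ z)
  rw [quad_eq t b h]
  refine mul_le_mul_of_nonneg_left ?_ ht.le
  obtain ⟨p, k, h2, h4, hX, hY⟩ := exists_int_coord v
  have := deep_hole hb hb' p k h2 h4
  simp only [nrm, coordX_sub, coordY_sub, hX, hY, hzX, hzY]
  simpa [Fin.sum_univ_five] using this

lemma homMin_eq {t b : ℝ} (ht : 0 < 3 + 5 * t) (h : (3 + 5 * t) * b = (1 + 3 * t) / 4)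
    (hb : 1 / 12 ≤ b) (hb' : b ≤ 3 / 20) :
    homMin (QE6 + t • R1) = (3 + 5 * t) * (5 / 4 + b) := by
  have hlb : ∀ v : {w : Fin 6 → ℤ // w ≠ 0}, (3 + 5 * t) * (5 / 4 + b) ≤
      (fun i => (v.1 i : ℝ)) ⬝ᵥ ((QE6 + t • R1) *ᵥ fun i => (v.1 i : ℝ)) := by
    rintro ⟨v, hv⟩
    rw [quad_eq t b h]
    refine mul_le_mul_of_nonneg_left ?_ ht.le
    obtain ⟨p, k, h2, h4, hX, hY⟩ := exists_int_coord v
    simp only [nrm, hX, hY]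
    refine min_norm hb hb' p k h2 h4 ?_
    by_contra! hc
    refine hv ?_
    have hz := eq_zero_of_coord (z := fun j => (v j : ℝ)) (fun i => by rw [hX, hc.2]; simp)
      (by rw [hY, hc.1]; simp)
    ext i
    simpa using congrFun hz i
  have hne : (![0, 1, 0, 0, 0, 0] : Fin 6 → ℤ) ≠ 0 := by decide
  have : Nonempty {w : Fin 6 → ℤ // w ≠ 0} := ⟨⟨_, hne⟩⟩
  refine le_antisymm ?_ (le_ciInf hlb)
  refine (ciInf_le ⟨_, Set.forall_mem_range.2 hlb⟩ ⟨_, hne⟩).trans (le_of_eq ?_)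
  rw [quad_eq t b h]
  simp [nrm, coordX, coordY, Fin.sum_univ_five]
  left
  ring

/-- The quadratic form `Q₆^{pc} = Q_{E6*} + ((√798 − 18)/79)·R₁` is symmetric positive
definite with packing-covering constant `γ(Q) = 2·√(2·√798 − 56)`; equivalently,
`μ(Q)/λ(Q) = 2·√798 − 56`. -/
theorem packCovConst_Q6pc :
    (QE6 + ((Real.sqrt 798 - 18) / 79) • R1).IsSymm ∧
    (QE6 + ((Real.sqrt 798 - 18) / 79) • R1).PosDef ∧
    packCovConst (QE6 + ((Real.sqrt 798 - 18) / 79) • R1) =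
      2 * Real.sqrt (2 * Real.sqrt 798 - 56) ∧
    inhomMin (QE6 + ((Real.sqrt 798 - 18) / 79) • R1) /
        homMin (QE6 + ((Real.sqrt 798 - 18) / 79) • R1) =
      2 * Real.sqrt 798 - 56 := by
  set t : ℝ := (Real.sqrt 798 - 18) / 79 with ht
  have hs : Real.sqrt 798 ^ 2 = 798 := Real.sq_sqrt (by norm_num)
  have hs0 : 0 ≤ Real.sqrt 798 := Real.sqrt_nonneg _
  have hs1 : 28 < Real.sqrt 798 := by nlinarith
  have ht0 : 0 < t := by rw [ht]; linarith
  have hα : 0 < 3 + 5 * t := by linarith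
  set b : ℝ := (1 + 3 * t) / 4 / (3 + 5 * t) with hbdef
  have h : (3 + 5 * t) * b = (1 + 3 * t) / 4 := mul_div_cancel₀ _ hα.ne'
  have hb : 1 / 12 ≤ b := by
    rw [hbdef, le_div_iff₀ hα]
    linarith
  have hb' : b ≤ 3 / 20 := by
    rw [hbdef, div_le_iff₀ hα]
    linarith
  have hratio : inhomMin (QE6 + t • R1) / homMin (QE6 + t • R1) = 2 * Real.sqrt 798 - 56 := by
    rw [inhomMin_eq_s15 hα h hb hb', homMin_eq hα h hb hb', mul_div_mul_left _ _ hα.ne',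
      div_eq_iff (by linarith)]
    -- `√798` enters only through its minimal polynomial
    have hbs : b = (25 + 3 * Real.sqrt 798) / (4 * (147 + 5 * Real.sqrt 798)) := by
      rw [ht] at h
      rw [eq_div_iff (by positivity)]
      linarith
    have hd : (147 + 5 * Real.sqrt 798) ≠ 0 := by positivity
    rw [hbs]
    field_simp
    generalize Real.sqrt 798 = s at hs
    have hs3 : s ^ 3 = 798 * s := by rw [pow_succ, hs]
    ring_nf
    simp only [hs, hs3]
    ring
  have hsymm : (QE6 + t • R1).IsSymm := by
    ext i j
    fin_cases i <;> fin_cases j <;> simp [QE6, R1]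
  refine ⟨hsymm, ?_, ?_, hratio⟩
  · refine Matrix.PosDef.of_dotProduct_mulVec_pos ?_ fun z hz => ?_
    · rw [Matrix.IsHermitian, Matrix.conjTranspose_eq_transpose_of_trivial]
      exact hsymm
    · rw [star_trivial, quad_eq t b h]
      exact mul_pos hα (nrm_pos (by linarith) hz)
  · rw [packCovConst, hratio]
end
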